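/- arXiv:2302.07085 — 2 statements merged into one kernel-verified Lean document; each statement's English description precedes it below -/
import Mathlib

section
/- Let Ω ⊂ ℂⁿ (n ≥ 1) be a bounded domain admitting a C^∞ defining function ρ such that every boundary point of Ω is strongly pseudoconvex (with respect to ρ). Let p ∈ ∂Ω and let F : Ω → Ω be a holomorphic map with F(z) = z + o(‖z−p‖³) as z → p within Ω. Then F(z) = z for all z ∈ Ω. -/
open Complex Topology Filter Metric Set Function

noncomputable section

/-- `ℂⁿ` as a normed space. -/
abbrev En (n : ℕ) : Type := EuclideanSpace ℂ (Fin n)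

/-- A domain: a nonempty open connected set. -/
def IsDomain' {n : ℕ} (Ω : Set (En n)) : Prop :=
  IsOpen Ω ∧ IsConnected Ω

/-- The Levi form of `ρ` at `q` in direction `ξ`:
`(1/4)(H_q(ξ,ξ) + H_q(iξ,iξ))` with `H_q` the second real Fréchet derivative. -/
def LeviForm {n : ℕ} (ρ : En n → ℝ) (q ξ : En n) : ℝ :=
  (1 / 4) * (iteratedFDeriv ℝ 2 ρ q ![ξ, ξ] + iteratedFDeriv ℝ 2 ρ q ![I • ξ, I • ξ])

/-- `ξ` lies in the complex tangent space of `{ρ = 0}` at `q`. -/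
def InCplxTangent {n : ℕ} (ρ : En n → ℝ) (q ξ : En n) : Prop :=
  fderiv ℝ ρ q ξ = 0 ∧ fderiv ℝ ρ q (I • ξ) = 0

/-- `ρ` is a `C^m` defining function for `Ω`. -/
def IsDefiningFunction {n : ℕ} (Ω : Set (En n)) (m : ℕ∞) (ρ : En n → ℝ) : Prop :=
  ContDiff ℝ m ρ ∧ Ω = {z | ρ z < 0} ∧ frontier Ω = {z | ρ z = 0} ∧
    ∀ q ∈ frontier Ω, fderiv ℝ ρ q ≠ 0

/-- `q` is a strongly pseudoconvex point with respect to `ρ`. -/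
def StronglyPcxAt {n : ℕ} (ρ : En n → ℝ) (q : En n) : Prop :=
  ∀ ξ : En n, ξ ≠ 0 → InCplxTangent ρ q ξ → 0 < LeviForm ρ q ξ

/-- `Ω` is pseudoconvex with `C^∞` boundary, witnessed by the defining function `ρ`. -/
def IsPcxCinfBoundary {n : ℕ} (Ω : Set (En n)) (ρ : En n → ℝ) : Prop :=
  IsDefiningFunction Ω ⊤ ρ ∧
    ∀ q ∈ frontier Ω, ∀ ξ : En n, InCplxTangent ρ q ξ → 0 ≤ LeviForm ρ q ξ

/-- `F z = z + o(‖z - p‖^k)` as `z → p` within `Ω`. -/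
def LittleOh {n : ℕ} (Ω : Set (En n)) (F : En n → En n) (p : En n) (k : ℕ) : Prop :=
  Tendsto (fun z => ‖F z - z‖ / ‖z - p‖ ^ k) (𝓝[Ω] p) (𝓝 0)

/-- `F` is an automorphism of `Ω`: a holomorphic bijection with holomorphic inverse. -/
def IsAutomorphismOf {n : ℕ} (F : En n → En n) (Ω : Set (En n)) : Prop :=
  DifferentiableOn ℂ F Ω ∧ MapsTo F Ω Ω ∧
    ∃ G : En n → En n, DifferentiableOn ℂ G Ω ∧ MapsTo G Ω Ω ∧
      (∀ z ∈ Ω, G (F z) = z) ∧ (∀ z ∈ Ω, F (G z) = z)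

/-- Upper bound for the Laplacian of `u` at `ζ`, measured by four-point second differences. -/
def LaplacianLE (u : ℂ → ℝ) (ζ : ℂ) (l : ℝ) : Prop :=
  ∀ ε > 0, ∀ᶠ t : ℝ in 𝓝[>] 0,
    u (ζ + t) + u (ζ + (-t : ℝ)) + u (ζ + t * I) + u (ζ + (-t : ℝ) * I) - 4 * u ζ
      ≤ (l + ε) * t ^ 2

namespace LaplacianLE

variable {u w : ℂ → ℝ} {ζ : ℂ} {l m : ℝ}

theorem add (hu : LaplacianLE u ζ l) (hw : LaplacianLE w ζ m) :
    LaplacianLE (fun x => u x + w x) ζ (l + m) := by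
  intro ε hε
  filter_upwards [hu (ε / 2) (by positivity), hw (ε / 2) (by positivity)] with t h1 h2
  nlinarith

theorem const_mul (hu : LaplacianLE u ζ l) {c : ℝ} (hc : 0 ≤ c) :
    LaplacianLE (fun x => c * u x) ζ (c * l) := by
  intro ε hε
  filter_upwards [hu (ε / (c + 1)) (by positivity)] with t h1
  have h2 : c * (ε / (c + 1)) ≤ ε := by
    rw [mul_div_assoc', div_le_iff₀ (by positivity)]; nlinarith
  have h3 := mul_le_mul_of_nonneg_left h1 hc
  have h4 := mul_le_mul_of_nonneg_right h2 (sq_nonneg t)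
  nlinarith

theorem const (c : ℝ) (ζ : ℂ) : LaplacianLE (fun _ => c) ζ 0 := by
  intro ε hε
  refine Eventually.of_forall fun t => ?_
  have : 0 ≤ (0 + ε) * t ^ 2 := by positivity
  linarith

theorem mono (hu : LaplacianLE u ζ l) (h : l ≤ m) : LaplacianLE u ζ m := by
  intro ε hε
  filter_upwards [hu ε hε] with t h1
  nlinarith [sq_nonneg t]

/-- The four points of the second difference stay close to the centre. -/
theorem eventually_four {P : ℂ → Prop} (h : ∀ᶠ x in 𝓝 ζ, P x) :
    ∀ᶠ t : ℝ in 𝓝[>] 0, P (ζ + t) ∧ P (ζ + (-t : ℝ)) ∧ P (ζ + t * I) ∧ P (ζ + (-t : ℝ) * I) := by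
  have h' : ∀ {φ : ℝ → ℂ}, Continuous φ → φ 0 = ζ → ∀ᶠ t : ℝ in 𝓝[>] 0, P (φ t) := by
    intro φ hφ h0
    have : Tendsto φ (𝓝[>] 0) (𝓝 ζ) := by
      simpa [h0] using (hφ.tendsto 0).mono_left nhdsWithin_le_nhds
    exact this.eventually h
  refine (h' ?_ ?_).and ((h' ?_ ?_).and ((h' ?_ ?_).and (h' ?_ ?_))) <;>
    first | fun_prop | simp

/-- Touching from above transfers the bound. -/
theorem of_touch (hw : LaplacianLE w ζ l) (h : ∀ᶠ x in 𝓝 ζ, u x ≤ w x) (h0 : u ζ = w ζ) :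
    LaplacianLE u ζ l := by
  intro ε hε
  filter_upwards [hw ε hε, eventually_four h] with t h1 h2
  obtain ⟨a, b, c, d⟩ := h2
  linarith

theorem congr (hw : LaplacianLE w ζ l) (h : u =ᶠ[𝓝 ζ] w) : LaplacianLE u ζ l :=
  hw.of_touch (h.mono fun _ hx => hx.le) h.eq_of_nhds

theorem nonneg_of_isLocalMin (hu : LaplacianLE u ζ l) (h : IsLocalMin u ζ) : 0 ≤ l := by
  by_contra! hl
  have h1 := hu (-l / 2) (by linarith)
  have h2 := eventually_four (P := fun x => u ζ ≤ u x) h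
  obtain ⟨t, h3, ⟨a, b, c, d⟩, ht⟩ :=
    (h1.and (h2.and self_mem_nhdsWithin)).exists
  have : 0 < t ^ 2 := by have : (0 : ℝ) < t := ht
                         positivity
  nlinarith

end LaplacianLE

section Composition

variable {E : Type*} [NormedAddCommGroup E] [NormedSpace ℂ E] [CompleteSpace E]

/-- Second order expansion of a holomorphic curve. -/
theorem exists_quadratic_expansion {G : ℂ → E} {ζ : ℂ} (hG : ∀ᶠ x in 𝓝 ζ, DifferentiableAt ℂ G x) :
    ∃ b : E, ∃ C > 0, ∀ᶠ τ in 𝓝 (0 : ℂ),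
      ‖G (ζ + τ) - (G ζ + τ • deriv G ζ + τ ^ 2 • b)‖ ≤ C * ‖τ‖ ^ 3 := by
  have han : AnalyticAt ℂ G ζ := Complex.analyticAt_iff_eventually_differentiableAt.2 hG
  obtain ⟨P, hP⟩ := han
  obtain ⟨C, hC, h⟩ := (hP.isBigO_sub_partialSum_pow 3).exists_pos
  refine ⟨P.coeff 2, C, hC, ?_⟩
  have hd : deriv G ζ = P.coeff 1 := hP.hasDerivAt.deriv
  rw [hd]
  filter_upwards [h.bound] with τ hτ
  have h0 : P.coeff 0 = G ζ := by
    rw [← hP.coeff_zero (fun _ => 1)]; rfl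
  have : P.partialSum 3 τ = G ζ + τ • P.coeff 1 + τ ^ 2 • P.coeff 2 := by
    simp [FormalMultilinearSeries.partialSum, Finset.sum_range_succ, h0]
  rw [this] at hτ
  simpa using hτ

variable [NormedSpace ℝ E] [IsScalarTower ℝ ℂ E]

/-- The Laplacian of `Ψ ∘ G`, `G` a holomorphic curve, is governed by the second order part of
`Ψ` in a complex direction. -/
theorem LaplacianLE.comp {Ψ : E → ℝ} {G : ℂ → E} {ζ : ℂ}
    (hG : ∀ᶠ x in 𝓝 ζ, DifferentiableAt ℂ G x)
    (L : E →L[ℝ] ℝ) (H : E →L[ℝ] E →L[ℝ] ℝ) {C r : ℝ} (hr : 0 < r)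
    (hΨ : ∀ d, ‖d‖ < r → Ψ (G ζ + d) - Ψ (G ζ) - L d - 1 / 2 * H d d ≤ C * ‖d‖ ^ 3) :
    LaplacianLE (fun x => Ψ (G x)) ζ
      (H (deriv G ζ) (deriv G ζ) + H (I • deriv G ζ) (I • deriv G ζ)) := by
  obtain ⟨b, C₁, hC₁, hexp⟩ := exists_quadratic_expansion hG
  set a := deriv G ζ with ha_def
  set e : ℂ → E := fun τ => G (ζ + τ) - (G ζ + τ • a + τ ^ 2 • b) with he
  have hcont : ContinuousAt G ζ := hG.self_of_nhds.continuousAt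
  have hd0 : ∀ᶠ τ in 𝓝 (0 : ℂ), ‖G (ζ + τ) - G ζ‖ < r := by
    have : Tendsto (fun τ : ℂ => G (ζ + τ) - G ζ) (𝓝 0) (𝓝 0) := by
      have h1 : Tendsto (fun τ : ℂ => ζ + τ) (𝓝 0) (𝓝 ζ) := by
        have : Continuous fun τ : ℂ => ζ + τ := by fun_prop
        simpa using this.tendsto 0
      have := (hcont.tendsto.comp h1).sub_const (G ζ)
      simpa using this
    have := this.norm
    rw [norm_zero] at this
    exact this.eventually_lt_const hr
  set A := ‖a‖ + ‖b‖ + C₁ with hA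
  have hA0 : 0 < A := by positivity
  set B := ‖b‖ + C₁ with hB
  have hB0 : 0 < B := by positivity
  set M := ‖L‖ * C₁ + 1 / 2 * (‖H‖ * (B * (A + ‖a‖))) + |C| * A ^ 3 with hM
  -- pointwise upper bound
  have key : ∀ᶠ τ in 𝓝 (0 : ℂ), Ψ (G (ζ + τ)) - Ψ (G ζ) ≤
      L (τ • a) + L (τ ^ 2 • b) + 1 / 2 * H (τ • a) (τ • a) + M * ‖τ‖ ^ 3 := by
    filter_upwards [hd0, hexp, Metric.ball_mem_nhds (0 : ℂ) one_pos] with τ h1 h2 h3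
    have h3 : ‖τ‖ < 1 := by simpa using h3
    have hτ0 := norm_nonneg τ
    set d := G (ζ + τ) - G ζ with hd
    have hde : d = τ • a + (τ ^ 2 • b + e τ) := by simp only [hd, he]; abel
    have hb : ‖τ ^ 2 • b + e τ‖ ≤ B * ‖τ‖ ^ 2 := by
      have : ‖τ ^ 2 • b‖ = ‖τ‖ ^ 2 * ‖b‖ := by rw [norm_smul, norm_pow]
      have h4 := norm_add_le (τ ^ 2 • b) (e τ)
      have h5 : ‖τ‖ ^ 3 ≤ ‖τ‖ ^ 2 := pow_le_pow_of_le_one hτ0 h3.le (by norm_num)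
      have : ‖e τ‖ ≤ C₁ * ‖τ‖ ^ 2 := h2.trans (by gcongr)
      nlinarith
    have ha : ‖τ • a‖ = ‖τ‖ * ‖a‖ := norm_smul _ _
    have hdn : ‖d‖ ≤ A * ‖τ‖ := by
      rw [hde]
      have h4 := norm_add_le (τ • a) (τ ^ 2 • b + e τ)
      have h5 : ‖τ‖ ^ 2 ≤ ‖τ‖ := by nlinarith
      nlinarith
    have h6 := hΨ d h1
    have h7 : G ζ + d = G (ζ + τ) := by simp [hd]
    rw [h7] at h6
    have hL : L d ≤ L (τ • a) + L (τ ^ 2 • b) + ‖L‖ * C₁ * ‖τ‖ ^ 3 := by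
      have : L d = L (τ • a) + L (τ ^ 2 • b) + L (e τ) := by rw [hde]; simp only [map_add]; ring
      have h8 : L (e τ) ≤ ‖L‖ * (C₁ * ‖τ‖ ^ 3) :=
        (le_abs_self _).trans ((L.le_opNorm _).trans (by gcongr))
      linarith
    have hH : H d d ≤ H (τ • a) (τ • a) + ‖H‖ * (B * (A + ‖a‖)) * ‖τ‖ ^ 3 := by
      have h8 : H d d = H (τ • a) (τ • a) + (H (τ • a) (τ ^ 2 • b + e τ)
          + H (τ ^ 2 • b + e τ) d) := by
        conv_lhs => rw [hde]
        rw [map_add]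
        conv_rhs => rw [hde]
        simp only [map_add, add_apply]
        ring
      have h9 : H (τ • a) (τ ^ 2 • b + e τ) ≤ ‖H‖ * (‖τ‖ * ‖a‖) * (B * ‖τ‖ ^ 2) := by
        refine (le_abs_self _).trans ((H.le_opNorm₂ _ _).trans ?_)
        rw [ha]; gcongr
      have h10 : H (τ ^ 2 • b + e τ) d ≤ ‖H‖ * (B * ‖τ‖ ^ 2) * (A * ‖τ‖) := by
        refine (le_abs_self _).trans ((H.le_opNorm₂ _ _).trans ?_)
        gcongr
      nlinarith
    have hC : C * ‖d‖ ^ 3 ≤ |C| * A ^ 3 * ‖τ‖ ^ 3 := by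
      calc C * ‖d‖ ^ 3 ≤ |C| * ‖d‖ ^ 3 := by gcongr; exact le_abs_self C
        _ ≤ |C| * (A * ‖τ‖) ^ 3 := by gcongr
        _ = _ := by ring
    have : M * ‖τ‖ ^ 3 = ‖L‖ * C₁ * ‖τ‖ ^ 3 + 1 / 2 * (‖H‖ * (B * (A + ‖a‖)) * ‖τ‖ ^ 3)
        + |C| * A ^ 3 * ‖τ‖ ^ 3 := by rw [hM]; ring
    linarith
  intro ε hε
  have hM0 : 0 ≤ M := by positivity
  have key' : ∀ᶠ x in 𝓝 ζ, Ψ (G x) - Ψ (G ζ) ≤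
      L ((x - ζ) • a) + L ((x - ζ) ^ 2 • b) + 1 / 2 * H ((x - ζ) • a) ((x - ζ) • a)
        + M * ‖x - ζ‖ ^ 3 := by
    have h1 : Tendsto (fun x : ℂ => x - ζ) (𝓝 ζ) (𝓝 0) := by
      have : Continuous fun x : ℂ => x - ζ := by fun_prop
      simpa using this.tendsto ζ
    filter_upwards [h1.eventually key] with x hx
    simpa using hx
  have hsmall : ∀ᶠ t : ℝ in 𝓝[>] 0, t < ε / (4 * M + 1) :=
    (eventually_lt_nhds (by positivity)).filter_mono nhdsWithin_le_nhds
  filter_upwards [LaplacianLE.eventually_four key', hsmall, self_mem_nhdsWithin]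
    with t ⟨k1, k2, k3, k4⟩ hts ht
  have ht : (0 : ℝ) < t := ht
  have hn : ‖(t : ℂ)‖ = t := by simp [abs_of_pos ht]
  simp only [add_sub_cancel_left] at k1 k2 k3 k4
  have real_smul : ∀ (s : ℝ) (x : E), (s : ℂ) • x = s • x := fun s x => by
    rw [← algebraMap_smul ℂ s x]; rfl
  have e1 : ((t : ℂ)) ^ 2 = ((t ^ 2 : ℝ) : ℂ) := by push_cast; ring
  have e2 : (((-t : ℝ) : ℂ)) ^ 2 = ((t ^ 2 : ℝ) : ℂ) := by push_cast; ring
  have e3 : ((t : ℂ) * I) ^ 2 = ((-(t ^ 2) : ℝ) : ℂ) := by push_cast; rw [mul_pow, I_sq]; ring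
  have e4 : (((-t : ℝ) : ℂ) * I) ^ 2 = ((-(t ^ 2) : ℝ) : ℂ) := by
    push_cast; rw [mul_pow, I_sq]; ring
  rw [e1, real_smul, real_smul] at k1
  rw [e2, real_smul, real_smul] at k2
  rw [e3, real_smul, mul_smul, real_smul] at k3
  rw [e4, real_smul, mul_smul, real_smul] at k4
  simp only [map_smul, smul_apply, smul_eq_mul, norm_mul, norm_I, mul_one,
    norm_real, Real.norm_eq_abs, abs_neg, abs_of_pos ht] at k1 k2 k3 k4
  have hM3 : 4 * M * t ^ 3 ≤ ε * t ^ 2 := by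
    have : 4 * M * t ≤ ε := by
      rw [lt_div_iff₀ (by positivity)] at hts
      linarith
    calc 4 * M * t ^ 3 = (4 * M * t) * t ^ 2 := by ring
      _ ≤ ε * t ^ 2 := by gcongr
  ring_nf at k1 k2 k3 k4 hM3 ⊢
  linarith

end Composition

/-- Real parts of holomorphic functions are harmonic. -/
theorem LaplacianLE.re {h : ℂ → ℂ} {ζ : ℂ} (hh : ∀ᶠ x in 𝓝 ζ, DifferentiableAt ℂ h x) :
    LaplacianLE (fun x => (h x).re) ζ 0 := by
  have hξ := LaplacianLE.comp (Ψ := Complex.re) hh reCLM 0 (C := 0) one_pos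
    (fun d _ => by simp)
  simpa using hξ

/-- Minus the squared norm of a holomorphic vector is superharmonic. -/
theorem LaplacianLE.neg_norm_sq {E : Type*} [NormedAddCommGroup E] [InnerProductSpace ℂ E]
    {h : ℂ → E} {ζ : ℂ}
    (hh : ∀ᶠ x in 𝓝 ζ, DifferentiableAt ℂ h x) :
    LaplacianLE (fun x => -‖h x‖ ^ 2) ζ 0 := by
  have h1 : ∀ᶠ x in 𝓝 ζ, DifferentiableAt ℂ (fun x => -(2 * inner ℂ (h ζ) (h x)) +
      (‖h ζ‖ ^ 2 : ℝ)) x := by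
    filter_upwards [hh] with x hx
    have : DifferentiableAt ℂ (fun x => inner ℂ (h ζ) (h x)) x :=
      ((innerSL ℂ (h ζ)).differentiableAt).comp x hx
    fun_prop
  refine (LaplacianLE.re h1).of_touch (Eventually.of_forall fun x => ?_) ?_
  · have h2 := norm_sub_sq (𝕜 := ℂ) (h ζ) (h x)
    have h3 : (0 : ℝ) ≤ ‖h ζ - h x‖ ^ 2 := by positivity
    have h4 : RCLike.re (inner ℂ (h ζ) (h x)) = (inner ℂ (h ζ) (h x)).re := rfl
    simp only [add_re, neg_re, mul_re, re_ofNat, im_ofNat, zero_mul, sub_zero, ofReal_re]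
    rw [h2, h4] at h3
    linarith
  · have h4 : (inner ℂ (h ζ) (h ζ)).re = ‖h ζ‖ ^ 2 := by
      have := inner_self_eq_norm_sq (𝕜 := ℂ) (h ζ); exact this
    simp only [add_re, neg_re, mul_re, re_ofNat, im_ofNat, zero_mul, sub_zero, ofReal_re, h4]
    ring

section Taylor

variable {E : Type*} [NormedAddCommGroup E] [NormedSpace ℝ E] [FiniteDimensional ℝ E]

/-- Taylor's formula with a locally uniform bound for the remainder. -/
theorem exists_taylor_bound {f : E → ℝ} {n : ℕ} (hf : ContDiff ℝ (n + 1) f) (q : E) :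
    ∃ C > 0, ∀ d : E, ‖d‖ ≤ 1 →
      |f (q + d) - ∑ k ∈ Finset.range (n + 1),
        (k.factorial : ℝ)⁻¹ • iteratedFDeriv ℝ k f q (fun _ => d)| ≤ C * ‖d‖ ^ (n + 1) := by
  have hcont : Continuous (iteratedFDeriv ℝ (n + 1) f) :=
    hf.continuous_iteratedFDeriv (by norm_cast)
  have : ProperSpace E := FiniteDimensional.proper ℝ E
  obtain ⟨C, hC⟩ := (isCompact_closedBall q 1).exists_bound_of_continuousOn hcont.continuousOn
  refine ⟨|C| + 1, by positivity, fun d hd => ?_⟩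
  rw [map_add_eq_sum_add_integral_iteratedFDeriv (n := n) (fun t _ => hf.contDiffAt),
    add_sub_cancel_left]
  have h1 : ‖∫ t in (0 : ℝ)..1, (1 - t) ^ n • iteratedFDeriv ℝ (n + 1) f (q + t • d) (fun _ => d)‖
      ≤ (|C| * ‖d‖ ^ (n + 1)) * |1 - 0| := by
    refine intervalIntegral.norm_integral_le_of_norm_le_const fun t ht => ?_
    rw [uIoc_of_le zero_le_one] at ht
    rw [norm_smul]
    have h2 : ‖(1 - t) ^ n‖ ≤ 1 := by
      rw [norm_pow]
      exact pow_le_one₀ (norm_nonneg _)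
        (by rw [Real.norm_eq_abs, abs_le]; constructor <;> linarith [ht.1, ht.2])
    have h3 : ‖iteratedFDeriv ℝ (n + 1) f (q + t • d)‖ ≤ |C| := by
      refine (hC _ ?_).trans (le_abs_self C)
      rw [mem_closedBall, dist_eq_norm, add_sub_cancel_left, norm_smul, Real.norm_eq_abs,
        abs_of_pos ht.1]
      nlinarith [ht.1, ht.2, norm_nonneg d]
    have h4 := (iteratedFDeriv ℝ (n + 1) f (q + t • d)).le_opNorm (fun _ => d)
    rw [Finset.prod_const, Finset.card_univ, Fintype.card_fin] at h4
    calc _ ≤ 1 * (‖iteratedFDeriv ℝ (n + 1) f (q + t • d)‖ * ‖d‖ ^ (n + 1)) := by gcongr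
      _ ≤ _ := by rw [one_mul]; gcongr
  rw [← Real.norm_eq_abs, norm_smul]
  have h5 : ‖((n.factorial : ℝ))⁻¹‖ ≤ 1 := by
    rw [norm_inv, Real.norm_natCast]
    exact inv_le_one_of_one_le₀ (by exact_mod_cast Nat.one_le_iff_ne_zero.2 n.factorial_ne_zero)
  have h6 : 0 ≤ ‖d‖ ^ (n + 1) := by positivity
  calc _ ≤ 1 * ((|C| * ‖d‖ ^ (n + 1)) * |1 - 0|) := by gcongr
    _ ≤ _ := by norm_num; nlinarith

theorem exists_taylor_two_bound {f : E → ℝ} (hf : ContDiff ℝ 3 f) (q : E) :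
    ∃ C > 0, ∀ d : E, ‖d‖ ≤ 1 →
      |f (q + d) - f q - fderiv ℝ f q d - 1 / 2 * fderiv ℝ (fderiv ℝ f) q d d| ≤ C * ‖d‖ ^ 3 := by
  obtain ⟨C, hC, h⟩ := exists_taylor_bound (n := 2) (by exact_mod_cast hf) q
  refine ⟨C, hC, fun d hd => ?_⟩
  convert h d hd using 2
  simp [Finset.sum_range_succ, iteratedFDeriv_two_apply, Nat.factorial]
  ring

theorem exists_taylor_three_bound {f : E → ℝ} (hf : ContDiff ℝ 4 f) (q : E) :
    ∃ C > 0, ∀ d : E, ‖d‖ ≤ 1 →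
      |f (q + d) - f q - fderiv ℝ f q d - 1 / 2 * fderiv ℝ (fderiv ℝ f) q d d
        - 1 / 6 * iteratedFDeriv ℝ 3 f q (fun _ => d)| ≤ C * ‖d‖ ^ 4 := by
  obtain ⟨C, hC, h⟩ := exists_taylor_bound (n := 3) (by exact_mod_cast hf) q
  refine ⟨C, hC, fun d hd => ?_⟩
  convert h d hd using 2
  simp [Finset.sum_range_succ, iteratedFDeriv_two_apply, Nat.factorial]
  ring

end Taylor

/-- A strongly pseudoconvex boundary point has a defining function whose complex Hessian is
positive in every direction. -/
theorem exists_strictly_psh_defining {n : ℕ} {Ω : Set (En n)} {ρ : En n → ℝ}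
    (hρ : IsDefiningFunction Ω ⊤ ρ) {p : En n} (hp : p ∈ frontier Ω) (hspc : StronglyPcxAt ρ p) :
    ∃ σ : En n → ℝ, ContDiff ℝ 4 σ ∧ σ p = 0 ∧ fderiv ℝ σ p ≠ 0 ∧ ∃ c > 0, ∃ r > 0,
      ∀ z, ‖z - p‖ < r → (z ∈ Ω ↔ σ z < 0) ∧ ∀ ξ : En n, c * ‖ξ‖ ^ 2 ≤
        fderiv ℝ (fderiv ℝ σ) z ξ ξ + fderiv ℝ (fderiv ℝ σ) z (I • ξ) (I • ξ) := by
  obtain ⟨hsm, hΩ, hfr, hne⟩ := hρ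
  have hρp : ρ p = 0 := by rw [hfr] at hp; exact hp
  set D := fderiv ℝ ρ p with hD
  set H := fderiv ℝ (fderiv ℝ ρ) p with hH
  set a : En n → ℝ := fun ξ => H ξ ξ + H (I • ξ) (I • ξ) with ha
  set b : En n → ℝ := fun ξ => D ξ ^ 2 + D (I • ξ) ^ 2 with hb
  have hac : Continuous a := by fun_prop
  have hbc : Continuous b := by fun_prop
  have hb0 : ∀ ξ, 0 ≤ b ξ := fun ξ => by positivity
  have hab : ∀ ξ, ξ ≠ 0 → b ξ = 0 → 0 < a ξ := by
    intro ξ hξ hbξ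
    have h1 : D ξ = 0 := by
      have : D ξ ^ 2 = 0 := by nlinarith [sq_nonneg (D ξ), sq_nonneg (D (I • ξ))]
      exact pow_eq_zero_iff (two_ne_zero) |>.1 this
    have h2 : D (I • ξ) = 0 := by
      have : D (I • ξ) ^ 2 = 0 := by nlinarith [sq_nonneg (D ξ), sq_nonneg (D (I • ξ))]
      exact pow_eq_zero_iff (two_ne_zero) |>.1 this
    have h3 := hspc ξ hξ ⟨h1, h2⟩
    simp only [LeviForm, iteratedFDeriv_two_apply, Matrix.cons_val_zero, Matrix.cons_val_one] at h3
    simp only [ha, hH]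
    linarith
  obtain ⟨N, hN⟩ : ∃ N : ℕ, sphere (0 : En n) 1 ⊆ {ξ | 1 / ((N : ℝ) + 1) < a ξ + N * b ξ} := by
    refine (isCompact_sphere (0 : En n) 1).elim_directed_cover
      (fun N : ℕ => {ξ | 1 / ((N : ℝ) + 1) < a ξ + N * b ξ})
      (fun N => isOpen_lt continuous_const (by fun_prop)) ?_ ?_
    · intro ξ hξ
      have hξ0 : ξ ≠ 0 := by rintro rfl; simp at hξ
      rw [mem_iUnion]
      by_cases h : b ξ = 0
      · obtain ⟨N, hN⟩ := exists_nat_one_div_lt (hab ξ hξ0 h)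
        exact ⟨N, by simpa [h] using hN⟩
      · have hbpos : 0 < b ξ := lt_of_le_of_ne (hb0 ξ) (Ne.symm h)
        obtain ⟨N, hN⟩ := exists_nat_gt ((1 - a ξ) / b ξ)
        rw [div_lt_iff₀ hbpos] at hN
        refine ⟨N, ?_⟩
        have : 1 / ((N : ℝ) + 1) ≤ 1 := by
          rw [div_le_one (by positivity)]; linarith [Nat.cast_nonneg (α := ℝ) N]
        simp only [mem_ofPred_eq]
        linarith
    · refine (monotone_nat_of_le_succ fun N ξ hξ => ?_).directed_le
      simp only [mem_ofPred_eq] at hξ ⊢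
      have : 1 / (((N + 1 : ℕ) : ℝ) + 1) ≤ 1 / ((N : ℝ) + 1) := by
        push_cast; gcongr; linarith
      push_cast at this ⊢
      have := hb0 ξ
      nlinarith
  set A : ℝ := N / 2 with hA
  set σ : En n → ℝ := fun z => ρ z + A * ρ z ^ 2 with hσ
  have hsm' : ContDiff ℝ 4 ρ := hsm.of_le (by
    change ((4 : ℕ∞) : WithTop ℕ∞) ≤ _
    exact WithTop.coe_le_coe.2 le_top)
  have hσ4 : ContDiff ℝ 4 σ := by fun_prop
  have hρd : Differentiable ℝ ρ := hsm'.differentiable (by norm_num)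
  have hfd : fderiv ℝ σ = fun z => (1 + 2 * A * ρ z) • fderiv ℝ ρ z := by
    funext z
    have h1 := (hρd z).hasFDerivAt
    have h2 : HasFDerivAt σ ((1 + 2 * A * ρ z) • fderiv ℝ ρ z) z := by
      refine (h1.add ((h1.pow 2).const_mul A)).congr_fderiv ?_
      ext ξ
      simp
      ring
    exact h2.fderiv
  have hfdd : ∀ ξ η, fderiv ℝ (fderiv ℝ σ) p ξ η = H ξ η + N * (D ξ * D η) := by
    intro ξ η
    have h1 : HasFDerivAt (fderiv ℝ ρ) H p :=
      ((hsm'.fderiv_right (m := 3) (by norm_num)).differentiable (by norm_num) p).hasFDerivAt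
    have h2 : HasFDerivAt (fun z => 1 + 2 * A * ρ z) ((2 * A) • D) p :=
      ((hρd p).hasFDerivAt.const_mul (2 * A)).const_add 1
    have h3 := (h2.smul h1).fderiv
    rw [hfd]
    have h4 : fderiv ℝ (fun z => (1 + 2 * A * ρ z) • fderiv ℝ ρ z) p
      = (1 + 2 * A * ρ p) • H + ((2 * A) • D).smulRight (fderiv ℝ ρ p) := h3
    rw [h4, hρp]
    simp [hA, ← hD]
    ring
  refine ⟨σ, hσ4, by simp [hσ, hρp], ?_, ?_⟩
  · rw [hfd]
    simpa [hρp] using hne p hp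
  set c : ℝ := 1 / ((N : ℝ) + 1) with hc
  have hc0 : 0 < c := by positivity
  have hpos : ∀ ξ : En n, c * ‖ξ‖ ^ 2 ≤
      fderiv ℝ (fderiv ℝ σ) p ξ ξ + fderiv ℝ (fderiv ℝ σ) p (I • ξ) (I • ξ) := by
    intro ξ
    rcases eq_or_ne ξ 0 with rfl | hξ
    · simp
    have hn : 0 < ‖ξ‖ := norm_pos_iff.2 hξ
    set u : En n := ‖ξ‖⁻¹ • ξ with hu
    have hun : u ∈ sphere (0 : En n) 1 := by
      rw [mem_sphere_zero_iff_norm, hu, norm_smul, norm_inv, norm_norm, inv_mul_cancel₀ hn.ne']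
    have hξu : ξ = ‖ξ‖ • u := by rw [hu, smul_smul, mul_inv_cancel₀ hn.ne', one_smul]
    have h1 : c < a u + N * b u := hN hun
    have h2 : a ξ + N * b ξ = ‖ξ‖ ^ 2 * (a u + N * b u) := by
      simp only [ha, hb]
      conv_lhs => rw [hξu]
      rw [smul_comm I ‖ξ‖ u]
      simp only [map_smul, smul_apply, smul_eq_mul]
      ring
    rw [hfdd, hfdd]
    have h3 : H ξ ξ + N * (D ξ * D ξ) + (H (I • ξ) (I • ξ) + N * (D (I • ξ) * D (I • ξ)))
      = a ξ + N * b ξ := by simp only [ha, hb]; ring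
    rw [h3, h2]
    have : 0 < ‖ξ‖ ^ 2 := by positivity
    nlinarith
  have hcont : Continuous (fderiv ℝ (fderiv ℝ σ)) :=
    (hσ4.fderiv_right (m := 3) (by norm_num)).continuous_fderiv (by norm_num)
  have e1 : ∀ᶠ z in 𝓝 p, ‖fderiv ℝ (fderiv ℝ σ) z - fderiv ℝ (fderiv ℝ σ) p‖ < c / 4 := by
    have : Tendsto (fun z => ‖fderiv ℝ (fderiv ℝ σ) z - fderiv ℝ (fderiv ℝ σ) p‖) (𝓝 p) (𝓝 0) := by
      exact (tendsto_iff_norm_sub_tendsto_zero (E := En n →L[ℝ] En n →L[ℝ] ℝ)).1 (hcont.tendsto p)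
    exact this.eventually_lt_const (by positivity)
  have e2 : ∀ᶠ z in 𝓝 p, 0 < 1 + A * ρ z := by
    have : Tendsto (fun z => 1 + A * ρ z) (𝓝 p) (𝓝 1) := by
      have h : Continuous (fun z => 1 + A * ρ z) := by fun_prop
      simpa [hρp] using h.tendsto p
    exact this.eventually_const_lt one_pos
  obtain ⟨r, hr, hball⟩ := Metric.eventually_nhds_iff.1 (e1.and e2)
  refine ⟨c / 2, by positivity, r, hr, fun z hz => ?_⟩
  obtain ⟨h1, h2⟩ := hball (y := z) (by rwa [dist_eq_norm])
  constructor
  · rw [hΩ]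
    have : σ z = ρ z * (1 + A * ρ z) := by simp only [hσ]; ring
    simp only [mem_ofPred_eq, this]
    constructor
    · intro h; exact mul_neg_of_neg_of_pos h h2
    · intro h
      by_contra! h'
      nlinarith
  · intro ξ
    set Δ := fderiv ℝ (fderiv ℝ σ) z - fderiv ℝ (fderiv ℝ σ) p with hΔ
    have h3 : ∀ η : En n, ‖η‖ = ‖ξ‖ → fderiv ℝ (fderiv ℝ σ) z η η ≥
        fderiv ℝ (fderiv ℝ σ) p η η - c / 4 * ‖ξ‖ ^ 2 := by
      intro η hη
      have h4 : fderiv ℝ (fderiv ℝ σ) z η η = fderiv ℝ (fderiv ℝ σ) p η η + Δ η η := by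
        simp [hΔ]
      have h5 := (neg_abs_le (Δ η η))
      have h6 : |Δ η η| ≤ c / 4 * ‖ξ‖ ^ 2 := by
        have := Δ.le_opNorm₂ η η
        rw [hη, mul_assoc, ← sq] at this
        exact this.trans (by gcongr)
      linarith
    have h7 := h3 ξ rfl
    have h8 := h3 (I • ξ) (by rw [norm_smul, norm_I, one_mul])
    have h9 := hpos ξ
    linarith

/-- The holomorphic quadratic form whose real part is the pluriharmonic part of a real quadratic
form. -/
theorem exists_holomorphic_quadratic {n : ℕ} (H : En n →L[ℝ] En n →L[ℝ] ℝ) :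
    ∃ Q : En n → ℂ, ContDiff ℂ 1 Q ∧
      (∀ g, (Q g).re = 1 / 4 * (H g g - H (I • g) (I • g))) ∧
      ∃ C > 0, ∀ g, ‖Q g‖ ≤ C * ‖g‖ ^ 2 := by
  have real_smul : ∀ (s : ℝ) (x : En n), (s : ℂ) • x = s • x := fun s x => by
    rw [← algebraMap_smul ℂ s x]; rfl
  have smulI : ∀ (c : ℂ) (x : En n), c • x = c.re • x + c.im • (I • x) := by
    intro c x
    rw [← real_smul, ← real_smul, smul_smul, ← add_smul, re_add_im]
  have II : ∀ x : En n, I • I • x = -x := by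
    intro x; rw [smul_smul, I_mul_I, neg_one_smul]
  let B : En n →ₗ[ℂ] En n →ₗ[ℂ] ℂ := LinearMap.mk₂ ℂ
    (fun z w => ((1 / 4 * (H z w - H (I • z) (I • w)) : ℝ) : ℂ)
      - I * ((1 / 4 * (H z (I • w) + H (I • z) w) : ℝ) : ℂ))
    (by
      intro a b w
      simp only [smul_add, map_add, add_apply]
      push_cast; ring)
    (by
      intro c a w
      rw [smul_comm I c a, smulI c a, smulI c (I • a), II]
      simp only [map_add, map_smul, map_neg, add_apply, smul_apply, neg_apply, smul_eq_mul]
      apply Complex.ext <;> simp <;> ring)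
    (by
      intro a b w
      simp only [smul_add, map_add]
      push_cast; ring)
    (by
      intro c a w
      rw [smul_comm I c w, smulI c w, smulI c (I • w), II]
      simp only [map_add, map_smul, map_neg, smul_eq_mul]
      apply Complex.ext <;> simp <;> ring)
  let B' : En n →L[ℂ] En n →L[ℂ] ℂ :=
    LinearMap.toContinuousLinearMap (LinearMap.toContinuousLinearMap.toLinearMap.comp B)
  have hB : ∀ g, B' g g = ((1 / 4 * (H g g - H (I • g) (I • g)) : ℝ) : ℂ)
      - I * ((1 / 4 * (H g (I • g) + H (I • g) g) : ℝ) : ℂ) := fun g => rfl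
  refine ⟨fun g => B' g g, by fun_prop, fun g => ?_, ‖B'‖ + 1, by positivity, fun g => ?_⟩
  · change (B' g g).re = _
    rw [hB]; simp
  · have := B'.le_opNorm₂ g g
    nlinarith [norm_nonneg g, sq_nonneg ‖g‖]

/-- The complex linear functional with a prescribed real part. -/
theorem exists_complex_linear {n : ℕ} (L : En n →L[ℝ] ℝ) :
    ∃ ℓ : En n →L[ℂ] ℂ, ∀ d, ℓ d = (L d : ℂ) - I * (L (I • d) : ℂ) :=
  ⟨StrongDual.extendRCLike (𝕜 := ℂ) L, fun _ => rfl⟩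

theorem cubic_sub_le {n : ℕ} (T : ContinuousMultilinearMap ℝ (fun _ : Fin 3 => En n) ℝ)
    {a b : En n} {R : ℝ} (ha : ‖a‖ ≤ R) (hb : ‖b‖ ≤ R) :
    |T (fun _ => a) - T (fun _ => b)| ≤ 3 * ‖T‖ * R ^ 2 * ‖a - b‖ := by
  have hR : 0 ≤ R := (norm_nonneg a).trans ha
  have h := T.norm_image_sub_le (fun _ => a) (fun _ => b)
  rw [Real.norm_eq_abs] at h
  refine h.trans ?_
  have h1 : ‖(fun _ : Fin 3 => a) - (fun _ => b)‖ ≤ ‖a - b‖ :=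
    (pi_norm_le_iff_of_nonneg (norm_nonneg _)).2 fun _ => le_rfl
  have h2 : max ‖(fun _ : Fin 3 => a)‖ ‖(fun _ : Fin 3 => b)‖ ≤ R :=
    max_le ((pi_norm_le_iff_of_nonneg hR).2 fun _ => ha)
      ((pi_norm_le_iff_of_nonneg hR).2 fun _ => hb)
  have h3 : (0 : ℝ) ≤ max ‖(fun _ : Fin 3 => a)‖ ‖(fun _ : Fin 3 => b)‖ :=
    le_max_of_le_left (norm_nonneg _)
  simp only [Fintype.card_fin, Nat.cast_ofNat, Nat.add_one_sub_one]
  calc _ ≤ ‖T‖ * 3 * R ^ 2 * ‖a - b‖ := by gcongr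
    _ = _ := by ring

/-- Collecting the error terms of the third order normal form. -/
theorem normal_form_error {s N γ x C G : ℝ} (hC : 0 ≤ C) (hG : 0 ≤ G) (hN : 0 ≤ N) (hN1 : N ≤ 1)
    (hγ : 0 ≤ γ) (hx0 : 0 ≤ x) (hs : 0 ≤ s) (hγN : γ ≤ G * N) (hxN : x ≤ G * N)
    (hx : x ≤ s + C * N ^ 2) :
    x * γ + x ^ 2 + N ^ 2 * x + N ^ 2 * γ + N ^ 4 ≤
      (2 * G + C + 1 + (C + 1) + (C ^ 2 + C + 1)) * (s * N + γ * N ^ 2 + N ^ 4) := by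
  have hN2 : N ^ 2 ≤ N := by nlinarith
  have h1 : x * γ ≤ G * (s * N) + C * (γ * N ^ 2) := by
    calc x * γ ≤ (s + C * N ^ 2) * γ := by gcongr
      _ = s * γ + C * (γ * N ^ 2) := by ring
      _ ≤ s * (G * N) + C * (γ * N ^ 2) := by gcongr
      _ = _ := by ring
  have h3 : N ^ 2 * x ≤ s * N + C * N ^ 4 := by
    calc N ^ 2 * x ≤ N ^ 2 * (s + C * N ^ 2) := by gcongr
      _ = s * N ^ 2 + C * N ^ 4 := by ring
      _ ≤ _ := by gcongr
  have h2 : x ^ 2 ≤ (G + C) * (s * N) + C ^ 2 * N ^ 4 := by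
    calc x ^ 2 = x * x := sq x
      _ ≤ x * (s + C * N ^ 2) := by gcongr
      _ = x * s + C * (N ^ 2 * x) := by ring
      _ ≤ (G * N) * s + C * (s * N + C * N ^ 4) := by gcongr
      _ = _ := by ring
  have p1 : 0 ≤ s * N := by positivity
  have p2 : 0 ≤ γ * N ^ 2 := by positivity
  have p3 : 0 ≤ N ^ 4 := by positivity
  have q1 : 0 ≤ (C + 1 + (C ^ 2 + C + 1)) * (s * N) := by positivity
  have q2 : 0 ≤ (2 * G + C + 1 + (C ^ 2 + C + 1)) * (γ * N ^ 2) := by positivity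
  have q3 : 0 ≤ (2 * G + C + 1 + (C + 1)) * N ^ 4 := by positivity
  linear_combination h1 + h2 + h3 + q1 + q2 + q3

set_option maxHeartbeats 1600000 in
/-- Third order holomorphic normal form of a defining function. -/
theorem exists_normal_form {n : ℕ} {σ : En n → ℝ} (hσ : ContDiff ℝ 4 σ) {p v : En n}
    (hσp : σ p = 0) {ℓ : En n →L[ℂ] ℂ} (hℓ : ∀ d, fderiv ℝ σ p d = -(ℓ d).re) :
    ∃ f₀ : En n → ℂ, ContDiff ℂ 1 f₀ ∧ ∃ C > 0, ∀ d, ‖d‖ ≤ 1 →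
      |(f₀ d).re + σ (p + d) - 1 / 4 *
        (fderiv ℝ (fderiv ℝ σ) p (d - ℓ d • v) (d - ℓ d • v) +
          fderiv ℝ (fderiv ℝ σ) p (I • (d - ℓ d • v)) (I • (d - ℓ d • v)))| ≤
        C * (|σ (p + d)| * ‖d‖ + ‖d - ℓ d • v‖ * ‖d‖ ^ 2 + ‖d‖ ^ 4) ∧
      ‖f₀ d - ℓ d‖ ≤ C * ‖d‖ ^ 2 ∧ |(ℓ d).re| ≤ |σ (p + d)| + C * ‖d‖ ^ 2 ∧
      |σ (p + d)| ≤ C * ‖d‖ := by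
  have real_smul : ∀ (s : ℝ) (x : En n), (s : ℂ) • x = s • x := fun s x => by
    rw [← algebraMap_smul ℂ s x]; rfl
  set H := fderiv ℝ (fderiv ℝ σ) p with hHdef
  have hsymm : ∀ a b, H a b = H b a :=
    (hσ.contDiffAt (x := p)).isSymmSndFDerivAt (by simp; norm_num)
  obtain ⟨Q, hQ, hQre, CQ, hCQ, hQb⟩ := exists_holomorphic_quadratic H
  set T := iteratedFDeriv ℝ 3 σ p with hT
  set w : En n := I • v with hw
  obtain ⟨B, hB⟩ := exists_complex_linear (H w)
  obtain ⟨C₄, hC₄, hT4⟩ := exists_taylor_three_bound hσ p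
  obtain ⟨C₃, hC₃, hT3⟩ := exists_taylor_two_bound (hσ.of_le (by norm_num)) p
  set tw : ℝ := 1 / 6 * T (fun _ => w) with htw
  set f₀ : En n → ℂ := fun d => ℓ d - Q (d - ℓ d • v) + I * ℓ d * B (d - ℓ d • v)
    + (((1 / 2 * H w w : ℝ) : ℂ) + I * ((1 / 2 * H v w : ℝ) : ℂ)) * ℓ d ^ 2
    - I * (tw : ℂ) * ℓ d ^ 3 with hf₀
  have hf₀c : ContDiff ℂ 1 f₀ := by
    have h1 : ContDiff ℂ 1 (fun d => Q (d - ℓ d • v)) := hQ.comp (by fun_prop)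
    fun_prop
  set G := 1 + ‖ℓ‖ + ‖ℓ‖ * ‖v‖ with hG
  have hG0 : 0 < G := by positivity
  set C₂ := C₃ + ‖H‖ with hC₂
  have hC₂0 : 0 < C₂ := by positivity
  set A := C₄ + 2 * ‖H‖ * ‖v‖ + ‖H‖ * ‖v‖ ^ 2 + 3 * ‖T‖ * G ^ 2 * (‖v‖ + 1) + 3 * |tw| * G with hA
  have hA0 : 0 < A := by positivity
  set K := (2 * G + C₂ + 1 + (C₂ + 1) + (C₂ ^ 2 + C₂ + 1)) with hK
  have hK0 : 0 < K := by positivity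
  set C₅ := CQ * G ^ 2 + ‖ℓ‖ * ‖B‖ * G + ‖(((1 / 2 * H w w : ℝ) : ℂ) + I * ((1 / 2 * H v w : ℝ) : ℂ))‖ * ‖ℓ‖ ^ 2
    + |tw| * ‖ℓ‖ ^ 3 with hC₅
  have hC₅0 : 0 ≤ C₅ := by positivity
  clear_value G C₂ A K C₅ tw T w
  refine ⟨f₀, hf₀c, A * K + C₅ + C₂ + (‖ℓ‖ + C₂), by positivity, fun d hd => ?_⟩
  have hN0 := norm_nonneg d
  set N := ‖d‖ with hN
  set g := d - ℓ d • v with hg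
  set x := (ℓ d).re with hx
  set y := (ℓ d).im with hy
  set S := σ (p + d) with hS
  have hℓN : ‖ℓ d‖ ≤ ‖ℓ‖ * N := ℓ.le_opNorm d
  have hxN : |x| ≤ ‖ℓ‖ * N := (abs_re_le_norm _).trans hℓN
  have hyN : |y| ≤ ‖ℓ‖ * N := (abs_im_le_norm _).trans hℓN
  have hγN : ‖g‖ ≤ G * N := by
    have h1 := norm_sub_le d (ℓ d • v)
    rw [norm_smul] at h1
    have h2 : ‖ℓ d‖ * ‖v‖ ≤ ‖ℓ‖ * N * ‖v‖ := by gcongr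
    have h3 : 0 ≤ ‖ℓ‖ * N := by positivity
    rw [hG]
    linear_combination h1 + h2 + h3
  have hxG : |x| ≤ G * N := hxN.trans (by
    have : 0 ≤ (1 + ‖ℓ‖ * ‖v‖) * N := by positivity
    rw [hG]; linear_combination this)
  have hyG : |y| ≤ G * N := hyN.trans (by
    have : 0 ≤ (1 + ‖ℓ‖ * ‖v‖) * N := by positivity
    rw [hG]; linear_combination this)
  have hHdd : |H d d| ≤ ‖H‖ * N ^ 2 := by
    have := H.le_opNorm₂ d d
    rw [Real.norm_eq_abs] at this
    calc _ ≤ _ := this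
      _ = _ := by ring
  have h3 := hT3 d hd
  rw [hσp, hℓ d] at h3
  have hζ : ℓ d = ⟨x, y⟩ := (Complex.eta _).symm
  have h4 := hT4 d hd
  rw [hσp, hℓ d] at h4
  have hHd : fderiv ℝ (fderiv ℝ σ) p = H := rfl
  rw [hHd, ← hx, ← hS] at h3 h4
  rw [← hT] at h4
  have hg2 := norm_sub_le d (ℓ d • v)
  rw [← hg, ← hN, norm_smul] at hg2
  rw [← hN] at h3 h4
  clear_value N g x y S
  have hN3 : N ^ 3 ≤ N ^ 2 := pow_le_pow_of_le_one hN0 hd (by norm_num)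
  have hC₃N : C₃ * N ^ 3 ≤ C₃ * N ^ 2 := by gcongr
  have hSx : |S + x| ≤ C₂ * N ^ 2 := by
    have : S + x = (S - 0 - -x - 1 / 2 * H d d) + 1 / 2 * H d d := by ring
    rw [this]
    refine (abs_add_le _ _).trans ?_
    rw [abs_mul, abs_of_pos (by norm_num : (0 : ℝ) < 1 / 2)]
    have : 0 ≤ ‖H‖ * N ^ 2 := by positivity
    rw [hC₂]
    linarith
  have hxS : |x| ≤ |S| + C₂ * N ^ 2 := by
    have : x = (S + x) - S := by ring
    rw [this]
    refine (abs_sub _ _).trans ?_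
    linarith
  have hN2 : N ^ 2 ≤ N := pow_le_of_le_one hN0 hd (by norm_num)
  have hSN : |S| ≤ (‖ℓ‖ + C₂) * N := by
    have : S = (S + x) - x := by ring
    rw [this]
    refine (abs_sub _ _).trans ?_
    have : C₂ * N ^ 2 ≤ C₂ * N := by gcongr
    linarith
  have hwn : ‖w‖ = ‖v‖ := by rw [hw, norm_smul, norm_I, one_mul]
  have hdec : d = x • v + y • w + g := by
    rw [hw, ← real_smul, ← real_smul, smul_smul, ← add_smul, hx, hy, re_add_im, hg]
    abel
  refine ⟨?_, ?_, ?_, ?_⟩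
  · -- the real part identity
    have hBre : (B g).re = H w g := by rw [hB]; simp
    have hBim : (B g).im = -H w (I • g) := by rw [hB]; simp
    have hre : (f₀ d).re = x - 1 / 4 * (H g g - H (I • g) (I • g)) + (x * H w (I • g) - y * H w g)
        + 1 / 2 * H w w * (x ^ 2 - y ^ 2) - x * y * H v w + tw * (3 * x ^ 2 * y - y ^ 3) := by
      have e1 : (I * ℓ d * B g).re = x * H w (I • g) - y * H w g := by
        rw [mul_re, hBre, hBim, hζ]; simp; ring
      have e2 : ((((1 / 2 * H w w : ℝ) : ℂ) + I * ((1 / 2 * H v w : ℝ) : ℂ)) * ℓ d ^ 2).re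
          = 1 / 2 * H w w * (x ^ 2 - y ^ 2) - x * y * H v w := by
        have e3 : (ℓ d ^ 2) = ⟨x ^ 2 - y ^ 2, 2 * x * y⟩ := by
          rw [hζ]; apply Complex.ext <;> simp [pow_succ] <;> ring
        rw [e3]
        simp; ring
      have e4 : (I * (tw : ℂ) * ℓ d ^ 3).re = tw * (y ^ 3 - 3 * x ^ 2 * y) := by
        have e3 : (ℓ d ^ 3) = ⟨x ^ 3 - 3 * x * y ^ 2, 3 * x ^ 2 * y - y ^ 3⟩ := by
          rw [hζ]; apply Complex.ext <;> simp [pow_succ] <;> ring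
        rw [e3]
        simp; ring
      have : (f₀ d).re = (ℓ d).re - (Q g).re + (I * ℓ d * B g).re
        + ((((1 / 2 * H w w : ℝ) : ℂ) + I * ((1 / 2 * H v w : ℝ) : ℂ)) * ℓ d ^ 2).re
        - (I * (tw : ℂ) * ℓ d ^ 3).re := by
        simp only [hf₀, sub_re, add_re, hg]
      rw [this, hQre, e1, e2, e4, ← hx]
      ring
    set R := S - 0 - -x - 1 / 2 * H d d - 1 / 6 * T (fun _ => d) with hR
    clear_value R
    have hHexp : H d d = x ^ 2 * H v v + y ^ 2 * H w w + 2 * x * y * H v w + 2 * x * H v g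
        + 2 * y * H w g + H g g := by
      conv_lhs => rw [hdec]
      simp only [map_add, map_smul, add_apply, smul_apply, smul_eq_mul]
      rw [hsymm w v, hsymm g v, hsymm g w]
      ring
    have hTw : T (fun _ => y • w) = y ^ 3 * T (fun _ => w) := by
      have := T.map_smul_univ (fun _ => y) (fun _ => w)
      simpa using this
    have hident : (f₀ d).re + S - 1 / 4 * (H g g + H (I • g) (I • g))
        = R + x * (H v g + H w (I • g)) + 1 / 2 * x ^ 2 * (H v v + H w w)
          + 1 / 6 * (T (fun _ => d) - T (fun _ => y • w)) + tw * (3 * x ^ 2 * y) := by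
      rw [hre, hTw]
      have : S = R - x + 1 / 2 * H d d + 1 / 6 * T (fun _ => d) := by rw [hR]; ring
      rw [this, hHexp, htw]
      ring
    have hHle : ∀ a b : En n, |H a b| ≤ ‖H‖ * ‖a‖ * ‖b‖ := fun a b => H.le_opNorm₂ a b
    have b1 : |x * (H v g + H w (I • g))| ≤ 2 * ‖H‖ * ‖v‖ * (|x| * ‖g‖) := by
      rw [abs_mul]
      have h1 := hHle v g
      have h2 := hHle w (I • g)
      rw [hwn, norm_smul, norm_I, one_mul] at h2
      calc |x| * |H v g + H w (I • g)| ≤ |x| * (‖H‖ * ‖v‖ * ‖g‖ + ‖H‖ * ‖v‖ * ‖g‖) := by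
            gcongr; exact (abs_add_le _ _).trans (by linarith)
        _ = _ := by ring
    have b2 : |1 / 2 * x ^ 2 * (H v v + H w w)| ≤ ‖H‖ * ‖v‖ ^ 2 * |x| ^ 2 := by
      rw [abs_mul, abs_mul, abs_of_pos (by norm_num : (0 : ℝ) < 1 / 2), abs_pow]
      have h1 := hHle v v
      have h2 := hHle w w
      rw [hwn] at h2
      calc 1 / 2 * |x| ^ 2 * |H v v + H w w|
          ≤ 1 / 2 * |x| ^ 2 * (‖H‖ * ‖v‖ * ‖v‖ + ‖H‖ * ‖v‖ * ‖v‖) := by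
            gcongr; exact (abs_add_le _ _).trans (by linarith)
        _ = _ := by ring
    have b3 : |1 / 6 * (T (fun _ => d) - T (fun _ => y • w))| ≤
        3 * ‖T‖ * G ^ 2 * (‖v‖ + 1) * (N ^ 2 * |x| + N ^ 2 * ‖g‖) := by
      have hd1 : ‖d‖ ≤ G * N := by
        have : 0 ≤ (‖ℓ‖ + ‖ℓ‖ * ‖v‖) * N := by positivity
        rw [← hN, hG]; linear_combination this
      have hd2 : ‖y • w‖ ≤ G * N := by
        rw [norm_smul, hwn, Real.norm_eq_abs]
        calc |y| * ‖v‖ ≤ ‖ℓ‖ * N * ‖v‖ := by gcongr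
          _ ≤ G * N := by
            have : 0 ≤ (1 + ‖ℓ‖) * N := by positivity
            rw [hG]; linear_combination this
      have hd3 : ‖d - y • w‖ ≤ (‖v‖ + 1) * (|x| + ‖g‖) := by
        have : d - y • w = x • v + g := by
          conv_lhs => rw [hdec]
          abel
        rw [this]
        refine (norm_add_le _ _).trans ?_
        rw [norm_smul, Real.norm_eq_abs]
        linear_combination abs_nonneg x + mul_nonneg (norm_nonneg v) (norm_nonneg g)
      have h1 := cubic_sub_le T hd1 hd2
      rw [abs_mul, abs_of_pos (by norm_num : (0 : ℝ) < 1 / 6)]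
      calc _ ≤ 1 * (3 * ‖T‖ * (G * N) ^ 2 * ((‖v‖ + 1) * (|x| + ‖g‖))) := by
            gcongr
            · norm_num
            · exact h1.trans (by gcongr)
        _ = _ := by ring
    have b4 : |tw * (3 * x ^ 2 * y)| ≤ 3 * |tw| * G * |x| ^ 2 := by
      have hyG1 : |y| ≤ G := hyG.trans (mul_le_of_le_one_right hG0.le hd)
      rw [abs_mul, abs_mul, abs_mul, abs_of_pos (by norm_num : (0 : ℝ) < 3), abs_pow]
      calc |tw| * (3 * |x| ^ 2 * |y|) ≤ |tw| * (3 * |x| ^ 2 * G) := by gcongr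
        _ = _ := by ring
    have herr := normal_form_error hC₂0.le hG0.le hN0 hd (norm_nonneg g) (abs_nonneg x)
      (abs_nonneg S) hγN hxG hxS
    set W := |S| * N + ‖g‖ * N ^ 2 + N ^ 4 with hW
    have hW0 : 0 ≤ W := by rw [hW]; positivity
    rw [hident]
    have hsum : |R + x * (H v g + H w (I • g)) + 1 / 2 * x ^ 2 * (H v v + H w w)
          + 1 / 6 * (T (fun _ => d) - T (fun _ => y • w)) + tw * (3 * x ^ 2 * y)| ≤
        C₄ * N ^ 4 + 2 * ‖H‖ * ‖v‖ * (|x| * ‖g‖) + ‖H‖ * ‖v‖ ^ 2 * |x| ^ 2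
        + 3 * ‖T‖ * G ^ 2 * (‖v‖ + 1) * (N ^ 2 * |x| + N ^ 2 * ‖g‖) + 3 * |tw| * G * |x| ^ 2 := by
      refine (abs_add_le _ _).trans (add_le_add ?_ b4)
      refine (abs_add_le _ _).trans (add_le_add ?_ b3)
      refine (abs_add_le _ _).trans (add_le_add ?_ b2)
      exact (abs_add_le _ _).trans (add_le_add h4 b1)
    set Y := |x| * ‖g‖ + |x| ^ 2 + N ^ 2 * |x| + N ^ 2 * ‖g‖ + N ^ 4 with hY
    clear_value Y W
    have y1 : N ^ 4 ≤ Y := by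
      have : 0 ≤ |x| * ‖g‖ + |x| ^ 2 + N ^ 2 * |x| + N ^ 2 * ‖g‖ := by positivity
      linarith
    have y2 : |x| * ‖g‖ ≤ Y := by
      have : 0 ≤ |x| ^ 2 + N ^ 2 * |x| + N ^ 2 * ‖g‖ + N ^ 4 := by positivity
      linarith
    have y3 : |x| ^ 2 ≤ Y := by
      have : 0 ≤ |x| * ‖g‖ + N ^ 2 * |x| + N ^ 2 * ‖g‖ + N ^ 4 := by positivity
      linarith
    have y4 : N ^ 2 * |x| + N ^ 2 * ‖g‖ ≤ Y := by
      have : 0 ≤ |x| * ‖g‖ + |x| ^ 2 + N ^ 4 := by positivity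
      linarith
    have hAY : C₄ * N ^ 4 + 2 * ‖H‖ * ‖v‖ * (|x| * ‖g‖) + ‖H‖ * ‖v‖ ^ 2 * |x| ^ 2
        + 3 * ‖T‖ * G ^ 2 * (‖v‖ + 1) * (N ^ 2 * |x| + N ^ 2 * ‖g‖) + 3 * |tw| * G * |x| ^ 2
        ≤ A * Y := by
      calc _ ≤ C₄ * Y + 2 * ‖H‖ * ‖v‖ * Y + ‖H‖ * ‖v‖ ^ 2 * Y
            + 3 * ‖T‖ * G ^ 2 * (‖v‖ + 1) * Y + 3 * |tw| * G * Y := by gcongr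
        _ = A * Y := by rw [hA]; ring
    calc _ ≤ A * Y := hsum.trans hAY
      _ ≤ A * (K * W) := mul_le_mul_of_nonneg_left (by rw [hK]; exact herr) hA0.le
      _ = A * K * W := by ring
      _ ≤ _ := by
        gcongr
        have : 0 ≤ C₅ + C₂ + (‖ℓ‖ + C₂) := by positivity
        linarith
  · have h1 : f₀ d - ℓ d = - Q g + I * ℓ d * B g
      + (((1 / 2 * H w w : ℝ) : ℂ) + I * ((1 / 2 * H v w : ℝ) : ℂ)) * ℓ d ^ 2
      - I * (tw : ℂ) * ℓ d ^ 3 := by simp only [hf₀, hg]; ring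
    set κ := (((1 / 2 * H w w : ℝ) : ℂ) + I * ((1 / 2 * H v w : ℝ) : ℂ)) with hκ
    clear_value κ
    have c1 : ‖Q g‖ ≤ CQ * G ^ 2 * N ^ 2 := (hQb g).trans (by
      calc CQ * ‖g‖ ^ 2 ≤ CQ * (G * N) ^ 2 := by gcongr
        _ = _ := by ring)
    have c2 : ‖I * ℓ d * B g‖ ≤ ‖ℓ‖ * ‖B‖ * G * N ^ 2 := by
      rw [norm_mul, norm_mul, norm_I, one_mul]
      calc _ ≤ (‖ℓ‖ * N) * (‖B‖ * (G * N)) := by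
            gcongr; exact (B.le_opNorm g).trans (by gcongr)
        _ = _ := by ring
    have c3 : ‖κ * ℓ d ^ 2‖ ≤ ‖κ‖ * ‖ℓ‖ ^ 2 * N ^ 2 := by
      rw [norm_mul, norm_pow]
      calc _ ≤ ‖κ‖ * (‖ℓ‖ * N) ^ 2 := by gcongr
        _ = _ := by ring
    have c4 : ‖I * (tw : ℂ) * ℓ d ^ 3‖ ≤ |tw| * ‖ℓ‖ ^ 3 * N ^ 2 := by
      rw [norm_mul, norm_mul, norm_I, one_mul, norm_pow, norm_real, Real.norm_eq_abs]
      calc _ ≤ |tw| * (‖ℓ‖ * N) ^ 3 := by gcongr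
        _ = |tw| * ‖ℓ‖ ^ 3 * N ^ 3 := by ring
        _ ≤ _ := by gcongr
    have : ‖f₀ d - ℓ d‖ ≤ C₅ * N ^ 2 := by
      rw [h1]
      refine (norm_sub_le _ _).trans ?_
      have h2 := norm_add_le (- Q g + I * ℓ d * B g) (κ * ℓ d ^ 2)
      have h3 := norm_add_le (- Q g) (I * ℓ d * B g)
      rw [norm_neg] at h3
      rw [hC₅]
      linarith
    refine this.trans ?_
    gcongr
    have : 0 ≤ A * K + C₂ + (‖ℓ‖ + C₂) := by positivity
    linarith
  · refine hxS.trans ?_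
    gcongr
    have : 0 ≤ A * K + C₅ + (‖ℓ‖ + C₂) := by positivity
    linarith
  · refine hSN.trans (mul_le_mul_of_nonneg_right ?_ hN0)
    have : 0 ≤ A * K + C₅ + C₂ := by positivity
    linarith

/-- The quartic correction absorbs the error terms of the third order normal form. -/
theorem exists_quartic_correction {c C G : ℝ} (hc : 0 < c) (hC : 0 < C) (hG : 0 < G) :
    ∃ M > 0, ∃ r > 0, ∀ s N γ x y Z φ L : ℝ, 0 < s → 0 ≤ N → N ≤ r → 0 ≤ γ → 0 ≤ Z →
      Z ^ 2 = x ^ 2 + y ^ 2 → |x| ≤ s + C * N ^ 2 → |x| ≤ G * N → |y| ≤ G * N →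
      γ ≤ G * N → N ≤ G * (Z + γ) →
      |φ - s - L| ≤ C * (s * N + γ * N ^ 2 + N ^ 4) →
      (c * γ ^ 2 ≤ L → s / 4 + c / 2 * γ ^ 2 ≤ φ + M * (Z ^ 4 - 8 * x ^ 2 * y ^ 2)) ∧
      (γ = 0 → L = 0 → φ - M * (Z ^ 4 - 8 * x ^ 2 * y ^ 2) ≤ 3 * s) := by
  set A := C + C ^ 2 / c with hA
  have hA0 : 0 < A := by positivity
  set M := 8 * G ^ 4 * (A + 1) with hM
  have hM0 : 0 < M := by positivity
  set r := min 1 (min (1 / (8 * M * C * G ^ 3)) (min (1 / (2 * (C + 8 * M * G ^ 3)))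
    (c / (4 * M * G ^ 2)))) with hr
  have hr0 : 0 < r := by
    rw [hr]; refine lt_min one_pos (lt_min ?_ (lt_min ?_ ?_)) <;> positivity
  have hr1 : r ≤ 1 := min_le_left _ _
  have hr2 : r * (8 * M * C * G ^ 3) ≤ 1 := by
    rw [← le_div_iff₀ (by positivity)]
    exact (min_le_right _ _).trans (min_le_left _ _)
  have hr3 : r * (2 * (C + 8 * M * G ^ 3)) ≤ 1 := by
    rw [← le_div_iff₀ (by positivity)]
    exact (min_le_right _ _).trans ((min_le_right _ _).trans (min_le_left _ _))
  have hr4 : r * (4 * M * G ^ 2) ≤ c := by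
    rw [← le_div_iff₀ (by positivity)]
    exact (min_le_right _ _).trans ((min_le_right _ _).trans (min_le_right _ _))
  clear_value r
  refine ⟨M, hM0, r, hr0, ?_⟩
  intro s N γ x y Z φ L hs hN hNr hγ hZ hZxy hxs hxN hyN hγN hNZ hφ
  have hN1 : N ≤ 1 := hNr.trans hr1
  have hxy : x ^ 2 * y ^ 2 ≤ G ^ 3 * N ^ 3 * s + C * G ^ 3 * N ^ 5 := by
    calc x ^ 2 * y ^ 2 = |x| * |x| * |y| ^ 2 := by rw [← sq, sq_abs, sq_abs]
      _ ≤ (s + C * N ^ 2) * (G * N) * (G * N) ^ 2 := by gcongr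
      _ = _ := by ring
  have hxy0 : 0 ≤ x ^ 2 * y ^ 2 := by positivity
  have hN3 : N ^ 3 ≤ N := pow_le_of_le_one hN hN1 (by norm_num)
  -- the product error in terms of `s` and `N ^ 4`
  have e1 : 8 * M * (x ^ 2 * y ^ 2) ≤ 8 * M * G ^ 3 * N * s + N ^ 4 := by
    have h1 : 8 * M * G ^ 3 * s * N ^ 3 ≤ 8 * M * G ^ 3 * s * N := by gcongr
    have h2 : N * (8 * M * C * G ^ 3) ≤ 1 := le_trans (by gcongr) hr2
    have h3 : N * (8 * M * C * G ^ 3) * N ^ 4 ≤ 1 * N ^ 4 := by gcongr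
    have h4 := mul_le_mul_of_nonneg_left hxy (by positivity : 0 ≤ 8 * M)
    linear_combination h4 + h1 + h3
  have e2 : (C + 8 * M * G ^ 3) * N * s ≤ s / 2 := by
    have : N * (2 * (C + 8 * M * G ^ 3)) ≤ 1 := le_trans (by gcongr) hr3
    have := mul_le_mul_of_nonneg_right this hs.le
    linear_combination this / 2
  have hM1 : N ^ 4 * (A + 1) ≤ M * (Z ^ 4 + γ ^ 4) := by
    have h1 : N ^ 4 ≤ (G * (Z + γ)) ^ 4 := by gcongr
    have h2 : (Z + γ) ^ 4 ≤ 8 * (Z ^ 4 + γ ^ 4) := by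
      have h3 : (Z + γ) ^ 2 ≤ 2 * (Z ^ 2 + γ ^ 2) := by linear_combination sq_nonneg (Z - γ)
      calc (Z + γ) ^ 4 = ((Z + γ) ^ 2) ^ 2 := by ring
        _ ≤ (2 * (Z ^ 2 + γ ^ 2)) ^ 2 := by gcongr
        _ ≤ _ := by linear_combination 4 * sq_nonneg (Z ^ 2 - γ ^ 2)
    calc N ^ 4 * (A + 1) ≤ (G * (Z + γ)) ^ 4 * (A + 1) := by gcongr
      _ = G ^ 4 * (A + 1) * (Z + γ) ^ 4 := by ring
      _ ≤ G ^ 4 * (A + 1) * (8 * (Z ^ 4 + γ ^ 4)) := by gcongr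
      _ = _ := by rw [hM]; ring
  have hφ' := abs_le.1 hφ
  constructor
  · intro hL
    have e4 : M * γ ^ 4 ≤ c / 4 * γ ^ 2 := by
      have h1 : N * (4 * M * G ^ 2) ≤ c := le_trans (by gcongr) hr4
      have h2 : γ ^ 2 ≤ G ^ 2 * N := by
        calc γ ^ 2 ≤ (G * N) ^ 2 := by gcongr
          _ = G ^ 2 * (N * N) := by ring
          _ ≤ G ^ 2 * (N * 1) := by gcongr
          _ = _ := by ring
      calc M * γ ^ 4 = M * γ ^ 2 * γ ^ 2 := by ring
        _ ≤ M * (G ^ 2 * N) * γ ^ 2 := by gcongr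
        _ = (N * (4 * M * G ^ 2)) / 4 * γ ^ 2 := by ring
        _ ≤ _ := by gcongr
    have e5 : C * (γ * N ^ 2) ≤ c / 4 * γ ^ 2 + C ^ 2 / c * N ^ 4 := by
      have h1 : c / 4 * γ ^ 2 + C ^ 2 / c * N ^ 4 - C * (γ * N ^ 2)
          = c / 4 * (γ - 2 * C / c * N ^ 2) ^ 2 := by field_simp; ring
      have h2 : 0 ≤ c / 4 * (γ - 2 * C / c * N ^ 2) ^ 2 := by positivity
      linarith
    have e6 : A * N ^ 4 = C * N ^ 4 + C ^ 2 / c * N ^ 4 := by rw [hA]; ring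
    linear_combination hφ'.1 + hL + e4 + e5 + e6 + hM1 + e1 + e2 + hs.le / 4
  · intro hγ0 hL0
    subst hγ0 hL0
    have e6 : C * N ^ 4 ≤ A * N ^ 4 := by
      rw [hA]; have : 0 ≤ C ^ 2 / c * N ^ 4 := by positivity
      linear_combination this
    linear_combination hφ'.2 + e6 + hM1 + e1 + e2 + 3/2 * hs.le

/-- Local data near a strongly pseudoconvex boundary point `p`: a strictly plurisubharmonic defining
function `σ`, a holomorphic function `f` peaking at `p` and a comparison function `k` on the complex
line through `p` in the direction `v`. -/
structure LocalModel {n : ℕ} (Ω : Set (En n)) (p : En n) (ℓ : En n →L[ℂ] ℂ) (v : En n) where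
  (σ : En n → ℝ) (f : En n → ℂ) (k : ℂ → ℂ) (r δ c C : ℝ)
  r_pos : 0 < r
  δ_pos : 0 < δ
  c_pos : 0 < c
  C_pos : 0 < C
  r_le_one : r ≤ 1
  δ_le_one : δ ≤ 1
  δ_mul_lt : δ * ‖v‖ < r
  ℓ_v : ℓ v = 1
  contDiff : ContDiff ℝ 4 σ
  mem_iff : ∀ z, ‖z - p‖ < r → (z ∈ Ω ↔ σ z < 0)
  levi : ∀ z, ‖z - p‖ < r → ∀ ξ : En n, c * ‖ξ‖ ^ 2 ≤
    fderiv ℝ (fderiv ℝ σ) z ξ ξ + fderiv ℝ (fderiv ℝ σ) z (I • ξ) (I • ξ)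
  abs_σ_le : ∀ z, ‖z - p‖ < r → |σ z| ≤ C * ‖z - p‖
  f_diff : Differentiable ℂ f
  k_diff : Differentiable ℂ k
  f_p : f p = 0
  re_f_pos : ∀ z ∈ Ω, ‖z - p‖ < r → 0 < (f z).re
  le_re_f : ∀ z ∈ Ω, ‖z - p‖ < r → c * ‖z - p - ℓ (z - p) • v‖ ^ 2 ≤ (f z).re
  re_k_le : ∀ ζ : ℂ, ‖ζ‖ < δ → p + ζ • v ∈ Ω → (k ζ).re ≤ 3 * -σ (p + ζ • v)
  f_sub_k : ∀ ζ : ℂ, ‖ζ‖ < δ → ‖f (p + ζ • v) - k ζ‖ ≤ C * ‖ζ‖ ^ 4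
  k_sub : ∀ ζ : ℂ, ‖ζ‖ < δ → ‖k ζ - ζ‖ ≤ C * ‖ζ‖ ^ 2
  lip : ∀ z z', ‖z - p‖ < r → ‖z' - p‖ < r → ‖f z - f z'‖ ≤ C * ‖z - z'‖
  antilip : ∀ z z', ‖z - p‖ < r → ‖z' - p‖ < r →
    ‖z - z'‖ ≤ C * (‖z - z' - ℓ (z - z') • v‖ + ‖f z - f z'‖)
  disc : ∀ a < δ, ∀ ζ : ℂ, ‖ζ - a‖ < a → p + ζ • v ∈ Ω

/-- A `C¹` holomorphic function with derivative `ℓ` at `p` is Lipschitz near `p`, and controls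
distances together with the complementary projection. -/
theorem exists_lip_antilip {n : ℕ} {p v : En n} {ℓ : En n →L[ℂ] ℂ} {f : En n → ℂ}
    (hf : ContDiff ℂ 1 f) {C : ℝ} (hC : ∀ d, ‖d‖ ≤ 1 → ‖f (p + d) - f p - ℓ d‖ ≤ C * ‖d‖ ^ 2) :
    ∃ r > 0, ∀ z z', ‖z - p‖ < r → ‖z' - p‖ < r → ‖f z - f z'‖ ≤ (‖ℓ‖ + 1) * ‖z - z'‖ ∧
      ‖z - z'‖ ≤ 2 * (1 + ‖v‖) * (‖z - z' - ℓ (z - z') • v‖ + ‖f z - f z'‖) := by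
  have hd : HasFDerivAt f ℓ p := by
    rw [hasFDerivAt_iff_isLittleO_nhds_zero]
    refine Asymptotics.IsBigO.trans_isLittleO (g := fun d : En n => ‖d‖ ^ 2) ?_ ?_
    · refine Asymptotics.IsBigO.of_bound C ?_
      filter_upwards [Metric.closedBall_mem_nhds (0 : En n) one_pos] with d hd
      rw [Real.norm_of_nonneg (by positivity)]
      exact hC d (by simpa using hd)
    · exact Asymptotics.isLittleO_norm_pow_id one_lt_two
  have hs : HasStrictFDerivAt f ℓ p := by
    have := hf.contDiffAt (x := p) |>.hasStrictFDerivAt (by norm_num)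
    rwa [hd.fderiv] at this
  set ε : ℝ := 1 / (2 * (1 + ‖v‖)) with hε
  have hε0 : 0 < ε := by positivity
  have hε1 : ε ≤ 1 := by
    rw [hε, div_le_one (by positivity)]; linarith [norm_nonneg v]
  have h := hs.isLittleO.def hε0
  obtain ⟨r, hr, hr'⟩ := Metric.eventually_nhds_iff.1 h
  refine ⟨r, hr, fun z z' hz hz' => ?_⟩
  have h1 : ‖f z - f z' - ℓ (z - z')‖ ≤ ε * ‖z - z'‖ := by
    refine hr' (y := (z, z')) ?_
    rw [Prod.dist_eq]
    exact max_lt (by rwa [dist_eq_norm]) (by rwa [dist_eq_norm])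
  have hN := norm_nonneg (z - z')
  constructor
  · have h2 : ‖f z - f z'‖ ≤ ‖f z - f z' - ℓ (z - z')‖ + ‖ℓ (z - z')‖ := by
      simpa using norm_add_le (f z - f z' - ℓ (z - z')) (ℓ (z - z'))
    have h3 := ℓ.le_opNorm (z - z')
    have h4 : ε * ‖z - z'‖ ≤ 1 * ‖z - z'‖ := by gcongr
    linarith
  · have h2 : ‖ℓ (z - z')‖ ≤ ‖f z - f z'‖ + ‖f z - f z' - ℓ (z - z')‖ := by
      simpa using norm_sub_le (f z - f z') (f z - f z' - ℓ (z - z'))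
    have h3 : ‖z - z'‖ ≤ ‖z - z' - ℓ (z - z') • v‖ + ‖ℓ (z - z')‖ * ‖v‖ := by
      rw [← norm_smul]
      simpa using norm_add_le (z - z' - ℓ (z - z') • v) (ℓ (z - z') • v)
    have h4 : ‖ℓ (z - z')‖ * ‖v‖ ≤ (‖f z - f z'‖ + ε * ‖z - z'‖) * ‖v‖ := by
      gcongr; linarith
    have h5 : ε * ‖v‖ ≤ 1 / 2 := by
      rw [hε, div_mul_eq_mul_div, div_le_iff₀ (by positivity)]; linarith [norm_nonneg v]
    have h6 : ε * ‖v‖ * ‖z - z'‖ ≤ 1 / 2 * ‖z - z'‖ := by gcongr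
    have h7 : 0 ≤ ‖v‖ * ‖z - z' - ℓ (z - z') • v‖ := by positivity
    have h8 := norm_nonneg (f z - f z')
    linear_combination 2 * h3 + 2 * h4 + 2 * h6 + 2 * h7 + 2 * h8

theorem re_pow_four (ζ : ℂ) : (ζ ^ 4).re = ‖ζ‖ ^ 4 - 8 * ζ.re ^ 2 * ζ.im ^ 2 := by
  have h : ‖ζ‖ ^ 2 = ζ.re ^ 2 + ζ.im ^ 2 := by
    rw [← normSq_eq_norm_sq, normSq_apply]; ring
  have h2 : ‖ζ‖ ^ 4 = (ζ.re ^ 2 + ζ.im ^ 2) ^ 2 := by rw [← h]; ring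
  rw [h2]
  obtain ⟨x, y⟩ := ζ
  simp [pow_succ]
  ring

set_option maxHeartbeats 1000000 in
theorem exists_localModel {n : ℕ} {Ω : Set (En n)} {ρ : En n → ℝ} {p : En n}
    (hρ : IsDefiningFunction Ω ⊤ ρ) (hp : p ∈ frontier Ω) (hspc : StronglyPcxAt ρ p) :
    ∃ ℓ : En n →L[ℂ] ℂ, (∃ v, ℓ v = 1) ∧ ∀ v, ℓ v = 1 → Nonempty (LocalModel Ω p ℓ v) := by
  obtain ⟨σ, hσ, hσp, hdσ, c, hc, r₀, hr₀, hr₀'⟩ := exists_strictly_psh_defining hρ hp hspc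
  obtain ⟨ℓ, hℓ'⟩ := exists_complex_linear (-fderiv ℝ σ p)
  have hℓ : ∀ d, fderiv ℝ σ p d = -(ℓ d).re := fun d => by rw [hℓ']; simp
  have hℓ0 : ∃ d, ℓ d ≠ 0 := by
    by_contra! h
    exact hdσ (ContinuousLinearMap.ext fun d => by rw [hℓ, h]; simp)
  refine ⟨ℓ, ?_, fun v hv => ?_⟩
  · obtain ⟨d, hd⟩ := hℓ0
    exact ⟨(ℓ d)⁻¹ • d, by rw [map_smul, smul_eq_mul, inv_mul_cancel₀ hd]⟩
  obtain ⟨f₀, hf₀, C₁, hC₁, hf₀'⟩ := exists_normal_form hσ (v := v) hσp hℓ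
  set G := 1 + ‖ℓ‖ + ‖ℓ‖ * ‖v‖ + ‖v‖ with hG
  have hG0 : 0 < G := by positivity
  obtain ⟨M, hM, r₁, hr₁, hMr⟩ := exists_quartic_correction (c := c / 4) (by positivity) hC₁ hG0
  have hf₀0 : f₀ 0 = 0 := by
    have := (hf₀' 0 (by simp)).2.1
    simpa using this
  set f : En n → ℂ := fun z => f₀ (z - p) + M * ℓ (z - p) ^ 4 with hf
  have hfp : f p = 0 := by simp [hf, hf₀0]
  have hfc : ContDiff ℂ 1 f := by
    have : ContDiff ℂ 1 (fun z => f₀ (z - p)) := hf₀.comp (by fun_prop)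
    fun_prop
  have hfd : ∀ d, ‖d‖ ≤ 1 → ‖f (p + d) - f p - ℓ d‖ ≤ (C₁ + M * ‖ℓ‖ ^ 4) * ‖d‖ ^ 2 := by
    intro d hd
    have h1 := (hf₀' d hd).2.1
    have h2 : f (p + d) - f p - ℓ d = (f₀ d - ℓ d) + M * ℓ d ^ 4 := by
      rw [hfp]; simp only [hf, add_sub_cancel_left]; ring
    have h3 : ‖(M : ℂ) * ℓ d ^ 4‖ ≤ M * ‖ℓ‖ ^ 4 * ‖d‖ ^ 2 := by
      rw [norm_mul, norm_pow, norm_real, Real.norm_of_nonneg hM.le]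
      calc M * ‖ℓ d‖ ^ 4 ≤ M * (‖ℓ‖ * ‖d‖) ^ 4 := by gcongr; exact ℓ.le_opNorm d
        _ = M * ‖ℓ‖ ^ 4 * ‖d‖ ^ 4 := by ring
        _ ≤ M * ‖ℓ‖ ^ 4 * ‖d‖ ^ 2 := by
          gcongr ?_ * ?_
          exact pow_le_pow_of_le_one (norm_nonneg d) hd (by norm_num)
    rw [h2]
    refine (norm_add_le _ _).trans ?_
    linarith
  obtain ⟨r₂, hr₂, hlip⟩ := exists_lip_antilip (v := v) hfc hfd
  set r := min (min r₀ r₁) (min r₂ 1) with hr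
  have hr0 : 0 < r := by rw [hr]; positivity
  have hrr₀ : r ≤ r₀ := (min_le_left _ _).trans (min_le_left _ _)
  have hrr₁ : r ≤ r₁ := (min_le_left _ _).trans (min_le_right _ _)
  have hrr₂ : r ≤ r₂ := (min_le_right _ _).trans (min_le_left _ _)
  have hr1 : r ≤ 1 := (min_le_right _ _).trans (min_le_right _ _)
  set V := ‖v‖ with hV
  have hV0 : 0 ≤ V := norm_nonneg v
  set D := 4 * (1 + V) ^ 4 * (1 + C₁) / r with hD
  have hD0 : 0 < D := by positivity
  set δ := 1 / (4 * D) with hδ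
  have hδ0 : 0 < δ := by positivity
  have hD4 : 4 ≤ D := by
    rw [hD, le_div_iff₀ hr0]
    have h1 : (1 : ℝ) ≤ (1 + V) ^ 4 := one_le_pow₀ (by linarith)
    nlinarith
  have hDV : V * (1 + C₁) < r * D := by
    rw [hD, mul_div_cancel₀ _ hr0.ne']
    have h1 : 1 + V ≤ (1 + V) ^ 4 := le_self_pow₀ (by linarith) (by norm_num)
    have h2 : V < 4 * (1 + V) ^ 4 := by linarith
    gcongr
  have hDC : C₁ * (V ^ 2 + V ^ 4) < D := by
    have h0 : 4 * (1 + V) ^ 4 * (1 + C₁) ≤ D := by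
      rw [hD, le_div_iff₀ hr0]
      exact mul_le_of_le_one_right (by positivity) hr1
    have h1 : V ^ 2 + V ^ 4 ≤ 4 * (1 + V) ^ 4 := by
      have : 0 ≤ 4 + 16 * V + 23 * V ^ 2 + 16 * V ^ 3 + 3 * V ^ 4 := by positivity
      linear_combination this
    have h2 : 0 < 4 * (1 + V) ^ 4 := by positivity
    calc C₁ * (V ^ 2 + V ^ 4) ≤ C₁ * (4 * (1 + V) ^ 4) := by gcongr
      _ < 4 * (1 + V) ^ 4 * (1 + C₁) := by linarith
      _ ≤ D := h0
  clear_value D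
  have hδ1 : δ ≤ 1 := by
    rw [hδ, div_le_one (by positivity)]; linarith
  have hδD : 4 * δ * D = 1 := by rw [hδ]; field_simp
  have hδV : δ * (V * (1 + C₁)) < r / 4 := by
    have := mul_lt_mul_of_pos_left hDV hδ0
    linear_combination this + r / 4 * hδD
  have hδV' : δ * V < r / 4 := by
    have : 0 ≤ δ * (V * C₁) := by positivity
    linarith
  -- the normal form on the line
  have hline : ∀ ζ : ℂ, ζ • v - ℓ (ζ • v) • v = 0 := fun ζ => by
    rw [map_smul, hv, smul_eq_mul, mul_one, sub_self]
  have hlineN : ∀ ζ : ℂ, ‖ζ • v‖ = ‖ζ‖ * V := fun ζ => norm_smul _ _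
  set k : ℂ → ℂ := fun ζ => f₀ (ζ • v) - M * ζ ^ 4 with hk
  have hnum : ∀ d, ‖d‖ < r → p + d ∈ Ω →
      ((-σ (p + d)) / 4 + c / 8 * ‖d - ℓ d • v‖ ^ 2 ≤ (f₀ d).re + M * (ℓ d ^ 4).re) ∧
      (d - ℓ d • v = 0 → (f₀ d).re - M * (ℓ d ^ 4).re ≤ 3 * -σ (p + d)) := by
    intro d hd hmem
    obtain ⟨h1, -, h2, -⟩ := hf₀' d (hd.le.trans hr1)
    have hσd : σ (p + d) < 0 := ((hr₀' (p + d) (by simpa using hd.trans_le hrr₀)).1).1 hmem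
    have hlevi := (hr₀' p (by simpa using hr₀)).2 (d - ℓ d • v)
    rw [abs_of_neg hσd] at h1 h2
    have hℓd := ℓ.le_opNorm d
    have hN := norm_nonneg d
    have hg1 : ‖d - ℓ d • v‖ ≤ ‖d‖ + ‖ℓ d‖ * V := by
      refine (norm_sub_le _ _).trans ?_; rw [norm_smul]
    have hg2 : ‖d‖ ≤ ‖d - ℓ d • v‖ + ‖ℓ d‖ * V := by
      rw [hV, ← norm_smul]; simpa using norm_add_le (d - ℓ d • v) (ℓ d • v)
    have hγ0 := norm_nonneg (d - ℓ d • v)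
    have hZ0 := norm_nonneg (ℓ d)
    have hZG : ‖ℓ d‖ ≤ G * ‖d‖ := hℓd.trans (by
      gcongr; rw [hG]; linarith [mul_nonneg (norm_nonneg ℓ) hV0])
    have hmain := hMr (-σ (p + d)) ‖d‖ ‖d - ℓ d • v‖ (ℓ d).re (ℓ d).im ‖ℓ d‖ (f₀ d).re
      (1 / 4 * (fderiv ℝ (fderiv ℝ σ) p (d - ℓ d • v) (d - ℓ d • v) +
          fderiv ℝ (fderiv ℝ σ) p (I • (d - ℓ d • v)) (I • (d - ℓ d • v))))
      (by linarith) hN (hd.le.trans hrr₁) hγ0 hZ0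
      (by rw [← normSq_eq_norm_sq, normSq_apply]; ring) h2
      ((abs_re_le_norm _).trans hZG) ((abs_im_le_norm _).trans hZG)
      (by
        have h3 : ‖ℓ d‖ * V ≤ ‖ℓ‖ * ‖d‖ * V := by gcongr
        have h4 : 0 ≤ (‖ℓ‖ + V) * ‖d‖ := by positivity
        rw [hG]
        linear_combination hg1 + h3 + h4)
      (by
        have h4 : 0 ≤ ‖ℓ d‖ * (1 + ‖ℓ‖ + ‖ℓ‖ * V) + ‖d - ℓ d • v‖ * (‖ℓ‖ + ‖ℓ‖ * V + V) := by
          positivity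
        rw [hG]
        linear_combination hg2 + h4)
      (by rwa [sub_neg_eq_add])
    rw [re_pow_four]
    constructor
    · have h5 := hmain.1 (by linarith)
      linarith
    · intro h0
      have h5 := hmain.2 (by rw [h0, norm_zero]) (by rw [h0]; simp)
      exact h5
  have hfre : ∀ z ∈ Ω, ‖z - p‖ < r →
      (-σ z) / 4 + c / 8 * ‖z - p - ℓ (z - p) • v‖ ^ 2 ≤ (f z).re := by
    intro z hz hzr
    have := (hnum (z - p) hzr (by simpa using hz)).1
    rw [add_sub_cancel] at this
    simpa only [hf, add_re, re_ofReal_mul] using this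
  have hσneg : ∀ z ∈ Ω, ‖z - p‖ < r → σ z < 0 := fun z hz hzr =>
    ((hr₀' z (hzr.trans_le hrr₀)).1).1 hz
  set C := C₁ + (C₁ * V ^ 2 + M) + 2 * M + (‖ℓ‖ + 1) + 2 * (1 + V) with hC
  refine ⟨{ σ := σ, f := f, k := k, r := r, δ := δ, c := c / 8, C := C, r_pos := hr0,
            δ_pos := hδ0, c_pos := by positivity, C_pos := by positivity, r_le_one := hr1,
            δ_le_one := hδ1, δ_mul_lt := by linarith, ℓ_v := hv, contDiff := hσ,
            mem_iff := fun z hz => (hr₀' z (hz.trans_le hrr₀)).1,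
            levi := fun z hz ξ => le_trans (by gcongr; linarith) ((hr₀' z (hz.trans_le hrr₀)).2 ξ)
            abs_σ_le := ?_, f_diff := hfc.differentiable one_ne_zero, k_diff := ?_, f_p := hfp,
            re_f_pos := ?_, le_re_f := ?_, re_k_le := ?_, f_sub_k := ?_, k_sub := ?_,
            lip := ?_, antilip := ?_, disc := ?_ }⟩
  · intro z hz
    have := (hf₀' (z - p) (hz.le.trans hr1)).2.2.2
    rw [add_sub_cancel] at this
    refine this.trans (mul_le_mul_of_nonneg_right ?_ (norm_nonneg _))
    have : 0 ≤ (C₁ * V ^ 2 + M) + 2 * M + (‖ℓ‖ + 1) + 2 * (1 + V) := by positivity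
    linarith
  · have : Differentiable ℂ (fun ζ : ℂ => f₀ (ζ • v)) :=
      (hf₀.differentiable one_ne_zero).comp (by fun_prop)
    fun_prop
  · intro z hz hzr
    have h1 := hfre z hz hzr
    have h2 := hσneg z hz hzr
    have : 0 ≤ c / 8 * ‖z - p - ℓ (z - p) • v‖ ^ 2 := by positivity
    linarith
  · intro z hz hzr
    have h1 := hfre z hz hzr
    have h2 := hσneg z hz hzr
    linarith
  · intro ζ hζ hmem
    have hn : ‖ζ • v‖ < r := by
      rw [hlineN]
      calc _ ≤ δ * V := by gcongr
        _ < r := by linarith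
    have := (hnum (ζ • v) hn hmem).2 (hline ζ)
    rw [map_smul, hv, smul_eq_mul, mul_one] at this
    simpa only [hk, sub_re, re_ofReal_mul] using this
  · intro ζ hζ
    have : f (p + ζ • v) - k ζ = (2 * M : ℝ) * ζ ^ 4 := by
      simp only [hf, hk, add_sub_cancel_left, map_smul, hv, smul_eq_mul, mul_one]
      push_cast; ring
    rw [this, norm_mul, norm_pow, norm_real, Real.norm_of_nonneg (by positivity)]
    gcongr
    have : 0 ≤ C₁ + (C₁ * V ^ 2 + M) + (‖ℓ‖ + 1) + 2 * (1 + V) := by positivity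
    linarith
  · intro ζ hζ
    have hζV : ‖ζ • v‖ ≤ 1 := by
      rw [hlineN]
      calc _ ≤ δ * V := by gcongr
        _ ≤ 1 := by linarith
    have h1 := (hf₀' (ζ • v) hζV).2.1
    rw [map_smul, hv, smul_eq_mul, mul_one, hlineN] at h1
    have h2 : k ζ - ζ = (f₀ (ζ • v) - ζ) - M * ζ ^ 4 := by simp only [hk]; ring
    have h3 : ‖(M : ℂ) * ζ ^ 4‖ ≤ M * ‖ζ‖ ^ 2 := by
      rw [norm_mul, norm_pow, norm_real, Real.norm_of_nonneg hM.le]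
      gcongr ?_ * ?_
      exact pow_le_pow_of_le_one (norm_nonneg _) (hζ.le.trans hδ1) (by norm_num)
    rw [h2]
    refine (norm_sub_le _ _).trans ?_
    have : 0 ≤ (C₁ + 2 * M + (‖ℓ‖ + 1) + 2 * (1 + V)) * ‖ζ‖ ^ 2 := by positivity
    rw [hC]
    linear_combination h1 + h3 + this
  · intro z z' hz hz'
    refine (hlip z z' (hz.trans_le hrr₂) (hz'.trans_le hrr₂)).1.trans ?_
    refine mul_le_mul_of_nonneg_right ?_ (norm_nonneg _)
    have : 0 ≤ C₁ + (C₁ * V ^ 2 + M) + 2 * M + 2 * (1 + V) := by positivity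
    linarith
  · intro z z' hz hz'
    refine (hlip z z' (hz.trans_le hrr₂) (hz'.trans_le hrr₂)).2.trans ?_
    refine mul_le_mul_of_nonneg_right ?_ (by positivity)
    have : 0 ≤ C₁ + (C₁ * V ^ 2 + M) + 2 * M + (‖ℓ‖ + 1) := by positivity
    linarith
  · intro a ha ζ hζ
    have ha0 : 0 < a := (norm_nonneg _).trans_lt hζ
    have hζ2 : ‖ζ‖ < 2 * a := by
      have h1 : ‖ζ‖ ≤ ‖ζ - a‖ + ‖(a : ℂ)‖ := by simpa using norm_add_le (ζ - a) (a : ℂ)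
      rw [norm_real, Real.norm_of_nonneg ha0.le] at h1
      linarith
    have hx : ‖ζ‖ ^ 2 < 2 * a * ζ.re := by
      have h1 : ‖ζ - a‖ ^ 2 < a ^ 2 := by gcongr
      rw [← normSq_eq_norm_sq, normSq_apply] at h1 ⊢
      simp at h1
      linarith
    have hNr : ‖ζ • v‖ < r / 2 := by
      rw [hlineN]
      calc ‖ζ‖ * V ≤ 2 * δ * V := by gcongr; linarith
        _ < r / 2 := by linarith
    rw [(hr₀' (p + ζ • v) (by rw [add_sub_cancel_left]; linarith)).1]
    by_contra! hS
    obtain ⟨h1, h2, -, -⟩ := hf₀' (ζ • v) (by linarith)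
    rw [hline, hlineN, abs_of_nonneg hS] at h1
    rw [map_smul, hv, smul_eq_mul, mul_one, hlineN] at h2
    simp only [map_zero, smul_zero, add_zero, mul_zero, norm_zero, zero_mul, sub_zero] at h1
    have hZ0 := norm_nonneg ζ
    have hre : ζ.re - C₁ * (‖ζ‖ * V) ^ 2 ≤ (f₀ (ζ • v)).re := by
      have := (abs_le.1 ((abs_re_le_norm _).trans h2)).1
      rw [sub_re] at this
      linarith
    have hS1 : C₁ * (σ (p + ζ • v) * (‖ζ‖ * V)) ≤ σ (p + ζ • v) := by
      have : C₁ * (‖ζ‖ * V) ≤ 1 := by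
        calc C₁ * (‖ζ‖ * V) ≤ C₁ * (2 * δ * V) := by gcongr; linarith
          _ ≤ 1 := by
            have : 0 ≤ δ * V := by positivity
            linarith
      have := mul_le_mul_of_nonneg_left this hS
      linarith
    have hZ4 : ‖ζ‖ ^ 4 ≤ ‖ζ‖ ^ 2 := by
      refine pow_le_pow_of_le_one hZ0 ?_ (by norm_num)
      have : δ * 4 ≤ δ * D := by gcongr
      linarith
    have hZ4' : C₁ * V ^ 4 * ‖ζ‖ ^ 4 ≤ C₁ * V ^ 4 * ‖ζ‖ ^ 2 := by gcongr
    have h3 := (abs_le.1 h1).2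
    have h4 : ζ.re ≤ C₁ * (V ^ 2 + V ^ 4) * ‖ζ‖ ^ 2 := by
      linear_combination hre + h3 + hS1 + hZ4'
    have h5 : C₁ * (V ^ 2 + V ^ 4) * ‖ζ‖ ^ 2 ≤ D * ‖ζ‖ ^ 2 := by gcongr
    have hx0 : 0 < ζ.re := by
      have : 0 < 2 * a * ζ.re := lt_of_le_of_lt (by positivity) hx
      exact pos_of_mul_pos_right this (by positivity)
    have h6 : D * ‖ζ‖ ^ 2 ≤ D * (2 * δ * ζ.re) := by
      gcongr; exact hx.le.trans (by gcongr)
    have h7 : D * (2 * δ * ζ.re) = ζ.re / 2 := by linear_combination ζ.re / 2 * hδD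
    linarith

/-- A local model together with constants for which the comparison functions below are
superharmonic along holomorphic discs. -/
structure ComparisonData {n : ℕ} (Ω : Set (En n)) (p : En n) (ℓ : En n →L[ℂ] ℂ) (v : En n)
    extends LocalModel Ω p ℓ v where
  (δ' C' r₁ r₂ K κ : ℝ)
  δ'_pos : 0 < δ'
  δ'_le : δ' ≤ δ
  C_mul_δ' : 2 * C * δ' ≤ 1
  C'_pos : 0 < C'
  norm_sq_le : ∀ z ∈ Ω, ‖z - p‖ < r → ‖z - p‖ ^ 2 ≤ C' * ‖f z‖
  r₁_pos : 0 < r₁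
  r₁_lt : r₁ < r₂
  r₂_lt : r₂ < r
  κ_pos : 0 < κ
  K_pos : 0 < K
  κ_le : 4 * κ ≤ K * c
  K_ge : 48 ≤ K * δ' ^ 2
  gap : C' / r₁ ^ 2 + K * C * r₁ + κ * r₁ ^ 2 ≤ κ * r₂ ^ 2

theorem LocalModel.nonempty_comparisonData {n : ℕ} {Ω : Set (En n)} {p : En n}
    {ℓ : En n →L[ℂ] ℂ} {v : En n} (D : LocalModel Ω p ℓ v) :
    Nonempty (ComparisonData Ω p ℓ v) := by
  have hC := D.C_pos
  have hc := D.c_pos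
  have hr := D.r_pos
  set C' := 2 * D.C ^ 2 * (1 / D.c + D.C) with hC'
  have hC'0 : 0 < C' := by positivity
  set δ' := min D.δ (1 / (2 * D.C)) with hδ'
  have hδ'0 : 0 < δ' := lt_min D.δ_pos (by positivity)
  set B := 4 / D.c with hB
  have hB0 : 0 < B := by positivity
  set r₂ := D.r / 2 with hr₂
  have hr₂0 : 0 < r₂ := by positivity
  have hr₂1 : r₂ ≤ 1 / 2 := by linarith [D.r_le_one]
  set r₁ := r₂ ^ 2 / (2 * (B * D.C + 1)) with hr₁
  have hr₁0 : 0 < r₁ := by positivity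
  have hr₁e : r₁ * (2 * (B * D.C + 1)) = r₂ ^ 2 := div_mul_cancel₀ _ (by positivity)
  have hBC : 0 < B * D.C := by positivity
  have hr₁₂ : r₁ < r₂ := by
    have h1 : r₂ ^ 2 ≤ r₂ := pow_le_of_le_one hr₂0.le (by linarith) (by norm_num)
    have : 0 < r₁ * (B * D.C) := by positivity
    linarith
  set κ := max (2 * C' / (r₁ ^ 2 * r₂ ^ 2)) (48 / (B * δ' ^ 2)) with hκ
  have hκ0 : 0 < κ := lt_max_of_lt_left (by positivity)
  refine ⟨{ D with
    δ' := δ', C' := C', r₁ := r₁, r₂ := r₂, K := B * κ, κ := κ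
    δ'_pos := hδ'0, δ'_le := min_le_left _ _
    C_mul_δ' := ?_, C'_pos := hC'0, norm_sq_le := ?_, r₁_pos := hr₁0, r₁_lt := hr₁₂
    r₂_lt := by linarith, κ_pos := hκ0, K_pos := by positivity, κ_le := ?_, K_ge := ?_
    gap := ?_ }⟩
  · have : δ' ≤ 1 / (2 * D.C) := min_le_right _ _
    rw [le_div_iff₀ (by positivity)] at this
    linarith
  · intro z hz hzr
    have h1 := D.antilip z p hzr (by simpa using hr)
    have h2 := D.le_re_f z hz hzr
    have h3 := D.lip z p hzr (by simpa using hr)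
    rw [D.f_p, sub_zero] at h1 h3
    have h4 := re_le_norm (D.f z)
    set γ := ‖z - p - ℓ (z - p) • v‖
    set φ := ‖D.f z‖
    have hφ0 : 0 ≤ φ := norm_nonneg _
    have hγ : γ ^ 2 ≤ φ / D.c := by rw [le_div_iff₀ hc]; linarith
    have h5 : φ ≤ D.C := h3.trans (mul_le_of_le_one_right hC.le (hzr.le.trans D.r_le_one))
    calc ‖z - p‖ ^ 2 ≤ (D.C * (γ + φ)) ^ 2 := by gcongr
      _ ≤ 2 * D.C ^ 2 * (γ ^ 2 + φ ^ 2) := by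
        have : 0 ≤ D.C ^ 2 * (γ - φ) ^ 2 := by positivity
        linear_combination this
      _ ≤ 2 * D.C ^ 2 * (φ / D.c + D.C * φ) := by
        gcongr; rw [sq]; gcongr
      _ = C' * φ := by rw [hC']; ring
  · rw [hB]; field_simp; exact le_rfl
  · have : 48 / (B * δ' ^ 2) ≤ κ := le_max_right _ _
    rw [div_le_iff₀ (by positivity)] at this
    linarith
  · have h1 : 2 * C' / (r₁ ^ 2 * r₂ ^ 2) ≤ κ := le_max_left _ _
    have h2 : C' / r₁ ^ 2 ≤ κ * (r₂ ^ 2 / 2) := by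
      rw [div_le_iff₀ (by positivity)] at h1 ⊢
      linarith
    have h3 : r₁ ^ 2 ≤ r₁ := pow_le_of_le_one hr₁0.le (by linarith) (by norm_num)
    have h4 : B * D.C * r₁ + r₁ ^ 2 ≤ r₂ ^ 2 / 2 := by linarith
    have h5 := mul_le_mul_of_nonneg_left h4 hκ0.le
    linarith

namespace ComparisonData

variable {n : ℕ} {Ω : Set (En n)} {p : En n} {ℓ : En n →L[ℂ] ℂ} {v : En n}

/-- The component of `z - p` along the kernel of `ℓ`. -/
def g (_ : ComparisonData Ω p ℓ v) (z : En n) : En n := z - p - ℓ (z - p) • v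

/-- The comparison function near `p`. -/
def Φ (D : ComparisonData Ω p ℓ v) (z : En n) : ℝ :=
  ((D.f z)⁻¹).re + D.c * -‖(D.f z)⁻¹ • D.g z‖ ^ 2 + D.K * -D.σ z + D.κ * ‖z - p‖ ^ 2

/-- The global comparison function, obtained by gluing `Φ` with a constant. -/
def P (D : ComparisonData Ω p ℓ v) (z : En n) : ℝ :=
  if ‖z - p‖ < D.r₁ then D.Φ z
  else if ‖z - p‖ < D.r₂ then min (D.Φ z) (D.κ * D.r₂ ^ 2) else D.κ * D.r₂ ^ 2

/-- The comparison function on the complex line through `p` in the direction `v`. -/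
def Q (D : ComparisonData Ω p ℓ v) (ζ : ℂ) : ℝ := ((D.k ζ)⁻¹).re + D.K * D.σ (p + ζ • v)

theorem laplacianLE_neg_σ (D : ComparisonData Ω p ℓ v) {γ : ℂ → En n} {ζ : ℂ}
    (hγ : ∀ᶠ x in 𝓝 ζ, DifferentiableAt ℂ γ x) (hr : ‖γ ζ - p‖ < D.r) :
    LaplacianLE (fun x => -D.σ (γ x)) ζ (-(D.c * ‖deriv γ ζ‖ ^ 2)) := by
  obtain ⟨C, hC, hT⟩ := exists_taylor_two_bound (D.contDiff.of_le (by norm_num) : ContDiff ℝ 3 D.σ)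
    (γ ζ)
  have h := LaplacianLE.comp (Ψ := fun z => -D.σ z) hγ (-fderiv ℝ D.σ (γ ζ))
    (-fderiv ℝ (fderiv ℝ D.σ) (γ ζ)) (C := C) (r := 1) one_pos (fun d hd => by
      have := (abs_le.1 (hT d hd.le)).1
      simp only [neg_apply]
      linarith)
  refine h.mono ?_
  have := D.levi _ hr (deriv γ ζ)
  simp only [neg_apply]
  linarith

theorem laplacianLE_norm_sq {γ : ℂ → En n} {ζ : ℂ} (hγ : ∀ᶠ x in 𝓝 ζ, DifferentiableAt ℂ γ x) :
    LaplacianLE (fun x => ‖γ x - p‖ ^ 2) ζ (4 * ‖deriv γ ζ‖ ^ 2) := by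
  obtain ⟨B, hB⟩ : ∃ B : En n →L[ℝ] En n →L[ℝ] ℝ, ∀ a b, B a b = inner ℝ a b :=
    ⟨innerSL ℝ, fun _ _ => rfl⟩
  have hBn : ∀ a, B a a = ‖a‖ ^ 2 := fun a => by rw [hB]; exact real_inner_self_eq_norm_sq a
  have h := LaplacianLE.comp (Ψ := fun z => ‖z - p‖ ^ 2) hγ ((2 : ℝ) • B (γ ζ - p))
    ((2 : ℝ) • B) (C := 0) (r := 1) one_pos (fun d hd => by
      have h1 : ‖γ ζ + d - p‖ ^ 2 = ‖γ ζ - p‖ ^ 2 + 2 * B (γ ζ - p) d + ‖d‖ ^ 2 := by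
        rw [add_sub_right_comm, hB]
        exact norm_add_sq_real _ _
      simp only [smul_apply, smul_eq_mul, hBn]
      rw [h1]
      linarith)
  refine h.mono ?_
  simp only [smul_apply, smul_eq_mul, hBn, norm_smul, norm_I, one_mul]
  linarith

theorem f_ne_zero (D : ComparisonData Ω p ℓ v) {z : En n} (hz : z ∈ Ω) (hr : ‖z - p‖ < D.r) :
    D.f z ≠ 0 := fun h => by
  have := D.re_f_pos z hz hr
  rw [h] at this
  exact lt_irrefl _ this

theorem laplacianLE_Φ (D : ComparisonData Ω p ℓ v) {γ : ℂ → En n} {ζ : ℂ}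
    (hγ : ∀ᶠ x in 𝓝 ζ, DifferentiableAt ℂ γ x) (hmem : γ ζ ∈ Ω) (hr : ‖γ ζ - p‖ < D.r) :
    LaplacianLE (fun x => D.Φ (γ x)) ζ 0 := by
  have hne : ∀ᶠ x in 𝓝 ζ, D.f (γ x) ≠ 0 := by
    have : ContinuousAt (fun x => D.f (γ x)) ζ :=
      ContinuousAt.comp (f := γ) D.f_diff.continuous.continuousAt hγ.self_of_nhds.continuousAt
    exact this.eventually_ne (D.f_ne_zero hmem hr)
  have hinv : ∀ᶠ x in 𝓝 ζ, DifferentiableAt ℂ (fun x => (D.f (γ x))⁻¹) x := by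
    filter_upwards [hγ, hne] with x hx hx'
    exact (DifferentiableAt.comp x (D.f_diff (γ x)) hx).inv hx'
  have hg : ∀ᶠ x in 𝓝 ζ, DifferentiableAt ℂ (fun x => (D.f (γ x))⁻¹ • D.g (γ x)) x := by
    filter_upwards [hγ, hinv] with x hx hx'
    refine hx'.smul ?_
    unfold g
    fun_prop
  have h1 := LaplacianLE.re hinv
  have h2 := (LaplacianLE.neg_norm_sq hg).const_mul D.c_pos.le
  have h3 := (D.laplacianLE_neg_σ hγ hr).const_mul D.K_pos.le
  have h4 := (laplacianLE_norm_sq (p := p) hγ).const_mul D.κ_pos.le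
  refine (((h1.add h2).add h3).add h4).mono ?_
  have := mul_le_mul_of_nonneg_right D.κ_le (sq_nonneg ‖deriv γ ζ‖)
  linarith

theorem mul_norm_sq_le_re_inv (D : ComparisonData Ω p ℓ v) {z : En n} (hz : z ∈ Ω)
    (hr : ‖z - p‖ < D.r) : D.c * ‖(D.f z)⁻¹ • D.g z‖ ^ 2 ≤ ((D.f z)⁻¹).re := by
  have h := D.le_re_f z hz hr
  have h0 : 0 < ‖D.f z‖ := norm_pos_iff.2 (D.f_ne_zero hz hr)
  rw [norm_smul, norm_inv, inv_re, normSq_eq_norm_sq, mul_pow, inv_pow, ← div_eq_inv_mul,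
    ← mul_div_assoc]
  gcongr
  exact h

theorem le_Φ (D : ComparisonData Ω p ℓ v) {z : En n} (hz : z ∈ Ω) (hr : ‖z - p‖ < D.r) :
    D.κ * ‖z - p‖ ^ 2 ≤ D.Φ z := by
  have h := D.mul_norm_sq_le_re_inv hz hr
  have h1 := mul_pos D.K_pos (neg_pos.2 ((D.mem_iff z hr).1 hz))
  unfold Φ
  linarith

theorem Φ_le_of_eq (D : ComparisonData Ω p ℓ v) {z : En n} (hz : z ∈ Ω) (hr : ‖z - p‖ = D.r₁) :
    D.Φ z ≤ D.κ * D.r₂ ^ 2 := by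
  have hr' : ‖z - p‖ < D.r := by linarith [D.r₁_lt, D.r₂_lt]
  have h1 := D.norm_sq_le z hz hr'
  have h0 : 0 < ‖D.f z‖ := norm_pos_iff.2 (D.f_ne_zero hz hr')
  have h2 : ((D.f z)⁻¹).re ≤ D.C' / D.r₁ ^ 2 := by
    refine (re_le_norm _).trans ?_
    have := D.r₁_pos
    rw [norm_inv, inv_eq_one_div, div_le_div_iff₀ h0 (by positivity), ← hr]
    linarith
  have h3 : -D.σ z ≤ D.C * D.r₁ := by
    have := D.abs_σ_le z hr'
    rw [hr] at this
    exact (neg_le_abs _).trans this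
  have h4 := mul_le_mul_of_nonneg_left h3 D.K_pos.le
  have h5 : 0 ≤ D.c * ‖(D.f z)⁻¹ • D.g z‖ ^ 2 := mul_nonneg D.c_pos.le (sq_nonneg _)
  have := D.gap
  unfold Φ
  rw [hr]
  linarith

theorem continuousAt_Φ (D : ComparisonData Ω p ℓ v) {z : En n} (hz : z ∈ Ω)
    (hr : ‖z - p‖ < D.r) : ContinuousAt D.Φ z := by
  have hf : ContinuousAt (fun z => (D.f z)⁻¹) z :=
    D.f_diff.continuous.continuousAt.inv₀ (D.f_ne_zero hz hr)
  have hσ : ContinuousAt D.σ z := D.contDiff.continuous.continuousAt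
  have hg : ContinuousAt D.g z := by unfold g; fun_prop
  have hre : ContinuousAt (fun z => ((D.f z)⁻¹).re) z :=
    continuous_re.continuousAt.comp hf
  unfold Φ
  fun_prop

theorem min_le_P (D : ComparisonData Ω p ℓ v) (z : En n) :
    min (D.Φ z) (D.κ * D.r₂ ^ 2) ≤ D.P z := by
  unfold P
  split_ifs
  exacts [min_le_left _ _, le_rfl, min_le_right _ _]

theorem P_nonneg (D : ComparisonData Ω p ℓ v) {z : En n} (hz : z ∈ Ω) : 0 ≤ D.P z := by
  have hm : 0 ≤ D.κ * D.r₂ ^ 2 := mul_nonneg D.κ_pos.le (sq_nonneg _)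
  have hΦ : ‖z - p‖ < D.r → 0 ≤ D.Φ z := fun h =>
    (mul_nonneg D.κ_pos.le (sq_nonneg _)).trans (D.le_Φ hz h)
  unfold P
  split_ifs with h1 h2
  · exact hΦ (by linarith [D.r₁_lt, D.r₂_lt])
  · exact le_min (hΦ (by linarith [D.r₂_lt])) hm
  · exact hm

theorem lowerSemicontinuousAt_P (D : ComparisonData Ω p ℓ v) {z : En n} (hz : z ∈ Ω) :
    LowerSemicontinuousAt D.P z := by
  have hn : Continuous fun z => ‖z - p‖ := by fun_prop
  rcases lt_or_ge ‖z - p‖ D.r₁ with h1 | h1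
  · have he : D.P =ᶠ[𝓝 z] D.Φ := by
      filter_upwards [hn.continuousAt.eventually_lt_const h1] with w hw
      exact if_pos hw
    exact ((D.continuousAt_Φ hz (by linarith [D.r₁_lt, D.r₂_lt])).congr
      he.symm).lowerSemicontinuousAt
  rcases le_or_gt ‖z - p‖ D.r₂ with h2 | h2
  · have hr : ‖z - p‖ < D.r := by linarith [D.r₂_lt]
    have hP : D.P z = min (D.Φ z) (D.κ * D.r₂ ^ 2) := by
      unfold P
      rw [if_neg h1.not_gt]
      split_ifs with h3
      · rfl
      · have h4 : ‖z - p‖ = D.r₂ := le_antisymm h2 (not_lt.1 h3)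
        have := D.le_Φ hz hr
        rw [h4] at this
        exact (min_eq_right this).symm
    intro y hy
    rw [hP] at hy
    have hc : ContinuousAt (fun w => min (D.Φ w) (D.κ * D.r₂ ^ 2)) z :=
      (D.continuousAt_Φ hz hr).min continuousAt_const
    filter_upwards [hc.eventually_const_lt hy] with w hw
    exact hw.trans_le (D.min_le_P w)
  · have he : D.P =ᶠ[𝓝 z] fun _ => D.κ * D.r₂ ^ 2 := by
      filter_upwards [hn.continuousAt.eventually_const_lt h2] with w hw
      unfold P
      rw [if_neg (by linarith [D.r₁_lt]), if_neg hw.not_gt]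
    exact (continuousAt_const.congr he.symm).lowerSemicontinuousAt

theorem laplacianLE_P (D : ComparisonData Ω p ℓ v) {γ : ℂ → En n} {ζ : ℂ}
    (hγ : ∀ᶠ x in 𝓝 ζ, DifferentiableAt ℂ γ x) (hmem : γ ζ ∈ Ω) :
    LaplacianLE (fun x => D.P (γ x)) ζ 0 := by
  have hn : ContinuousAt (fun x => ‖γ x - p‖) ζ :=
    (hγ.self_of_nhds.continuousAt.sub continuousAt_const).norm
  by_cases h : ‖γ ζ - p‖ < D.r₂ ∧ D.P (γ ζ) = D.Φ (γ ζ)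
  · refine (D.laplacianLE_Φ hγ hmem (by linarith [D.r₂_lt])).of_touch ?_ h.2
    filter_upwards [hn.eventually_lt_const h.1] with x hx
    unfold P
    rw [if_pos hx]
    split_ifs
    exacts [le_rfl, min_le_left _ _]
  · have h1 : D.r₁ < ‖γ ζ - p‖ := by
      by_contra! h1
      refine h ⟨h1.trans_lt D.r₁_lt, ?_⟩
      unfold P
      rcases h1.lt_or_eq with h2 | h2
      · rw [if_pos h2]
      · rw [if_neg h2.ge.not_gt, if_pos (h2.trans_lt D.r₁_lt), min_eq_left (D.Φ_le_of_eq hmem h2)]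
    refine (LaplacianLE.const (D.κ * D.r₂ ^ 2) ζ).of_touch ?_ ?_
    · filter_upwards [hn.eventually_const_lt h1] with x hx
      unfold P
      rw [if_neg hx.not_gt]
      split_ifs
      exacts [min_le_right _ _, le_rfl]
    · unfold P at h ⊢
      rw [if_neg h1.not_gt] at h ⊢
      split_ifs with h2
      · rw [if_pos h2] at h
        rcases min_choice (D.Φ (γ ζ)) (D.κ * D.r₂ ^ 2) with h3 | h3
        · exact absurd ⟨h2, h3⟩ h
        · exact h3
      · rfl

theorem lt_r₁_of_lt_P (D : ComparisonData Ω p ℓ v) {z : En n} (h : D.κ * D.r₂ ^ 2 < D.P z) :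
    ‖z - p‖ < D.r₁ ∧ D.P z = D.Φ z := by
  by_cases h1 : ‖z - p‖ < D.r₁
  · exact ⟨h1, if_pos h1⟩
  · unfold P at h
    rw [if_neg h1] at h
    split_ifs at h with h2
    · exact absurd h (min_le_right _ _).not_gt
    · exact absurd h (lt_irrefl _)

end ComparisonData

theorem LittleOh.exists_bound {n : ℕ} {Ω : Set (En n)} {G : En n → En n} {p : En n} {k : ℕ}
    (h : LittleOh Ω G p k) (hp : p ∉ Ω) {ε : ℝ} (hε : 0 < ε) :
    ∃ η > 0, ∀ z ∈ Ω, ‖z - p‖ < η → ‖G z - z‖ ≤ ε * ‖z - p‖ ^ k := by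
  have h1 : ∀ᶠ z in 𝓝[Ω] p, ‖G z - z‖ / ‖z - p‖ ^ k < ε := h.eventually_lt_const hε
  rw [eventually_nhdsWithin_iff, Metric.eventually_nhds_iff] at h1
  obtain ⟨η, hη, h1⟩ := h1
  refine ⟨η, hη, fun z hz hzη => ?_⟩
  have h2 := h1 (by rwa [dist_eq_norm]) hz
  have h3 : 0 < ‖z - p‖ := norm_pos_iff.2 (sub_ne_zero.2 fun h => hp (h ▸ hz))
  rw [div_lt_iff₀ (by positivity)] at h2
  exact h2.le

/-- A minimum principle for strictly superharmonic functions. -/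
theorem nonneg_of_laplacianLE_neg {V : Set ℂ} (hV : IsOpen V) {U : ℂ → ℝ}
    (hU : ∀ ζ ∈ V, LowerSemicontinuousAt U ζ) (hlap : ∀ ζ ∈ V, ∃ l < 0, LaplacianLE U ζ l)
    (hbd : ∀ ε > 0, ∃ S ⊆ V, IsCompact S ∧ ∀ ζ ∈ V, ζ ∉ S → -ε ≤ U ζ) {ζ : ℂ} (hζ : ζ ∈ V) :
    0 ≤ U ζ := by
  by_contra! hneg
  obtain ⟨S, hSV, hS, hSU⟩ := hbd (-U ζ / 2) (by linarith)
  have hζS : ζ ∈ S := by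
    by_contra h
    have := hSU ζ hζ h
    linarith
  obtain ⟨x, hxS, hx⟩ := LowerSemicontinuousOn.exists_isMinOn ⟨ζ, hζS⟩ hS
    (fun y hy => (hU y (hSV hy)).lowerSemicontinuousWithinAt S)
  have hxζ : U x ≤ U ζ := hx hζS
  obtain ⟨l, hl, hl'⟩ := hlap x (hSV hxS)
  have hmin : IsLocalMin U x := by
    filter_upwards [hV.mem_nhds (hSV hxS)] with y hy
    by_cases hyS : y ∈ S
    · exact hx hyS
    · have := hSU y hy hyS
      linarith
  exact (hl'.nonneg_of_isLocalMin hmin).not_gt hl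

namespace ComparisonData

variable {n : ℕ} {Ω : Set (En n)} {p : En n} {ℓ : En n →L[ℂ] ℂ} {v : En n}

theorem p_notMem (D : ComparisonData Ω p ℓ v) : p ∉ Ω := fun h => by
  have h0 : ‖p - p‖ < D.r := by simpa using D.r_pos
  have h1 := (D.mem_iff p h0).1 h
  have h2 := D.abs_σ_le p h0
  rw [sub_self, norm_zero, mul_zero] at h2
  exact h1.ne (abs_eq_zero.1 (le_antisymm h2 (abs_nonneg _)))

theorem v_ne_zero (D : ComparisonData Ω p ℓ v) : v ≠ 0 := fun h => by
  have := D.ℓ_v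
  rw [h, map_zero] at this
  exact zero_ne_one this

theorem norm_line_lt (D : ComparisonData Ω p ℓ v) {ζ : ℂ} (hζ : ‖ζ‖ < D.δ') :
    ‖p + ζ • v - p‖ < D.r := by
  rw [add_sub_cancel_left, norm_smul]
  have : ‖ζ‖ * ‖v‖ ≤ D.δ * ‖v‖ := by gcongr; exact hζ.le.trans D.δ'_le
  linarith [D.δ_mul_lt]

theorem half_norm_le_k (D : ComparisonData Ω p ℓ v) {ζ : ℂ} (hζ : ‖ζ‖ < D.δ') :
    ‖ζ‖ / 2 ≤ ‖D.k ζ‖ := by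
  have h1 := D.k_sub ζ (hζ.trans_le D.δ'_le)
  have h2 : ‖ζ‖ ≤ ‖D.k ζ‖ + ‖D.k ζ - ζ‖ := by simpa using norm_sub_le (D.k ζ) (D.k ζ - ζ)
  have h3 : D.C * ‖ζ‖ ^ 2 ≤ ‖ζ‖ / 2 := by
    have h4 : D.C * ‖ζ‖ ≤ D.C * D.δ' := mul_le_mul_of_nonneg_left hζ.le D.C_pos.le
    have h5 : D.C * ‖ζ‖ ≤ 1 / 2 := by linarith [D.C_mul_δ']
    have := mul_le_mul_of_nonneg_right h5 (norm_nonneg ζ)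
    linarith
  linarith

theorem line_ne_zero (D : ComparisonData Ω p ℓ v) {ζ : ℂ} (h : p + ζ • v ∈ Ω) : ζ ≠ 0 := by
  rintro rfl
  rw [zero_smul, add_zero] at h
  exact D.p_notMem h

theorem Q_le (D : ComparisonData Ω p ℓ v) {ζ : ℂ} (hζ : ‖ζ‖ < D.δ') (h : p + ζ • v ∈ Ω) :
    D.Q ζ ≤ (12 / ‖ζ‖ ^ 2 - D.K) * -D.σ (p + ζ • v) := by
  have hk := D.re_k_le ζ (hζ.trans_le D.δ'_le) h
  have h2 := D.half_norm_le_k hζ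
  have h0 : 0 < ‖ζ‖ := norm_pos_iff.2 (D.line_ne_zero h)
  have hs : 0 < -D.σ (p + ζ • v) := neg_pos.2 ((D.mem_iff _ (D.norm_line_lt hζ)).1 h)
  have h3 : ((D.k ζ)⁻¹).re ≤ 12 / ‖ζ‖ ^ 2 * -D.σ (p + ζ • v) := by
    rw [inv_re, normSq_eq_norm_sq]
    calc (D.k ζ).re / ‖D.k ζ‖ ^ 2 ≤ 3 * -D.σ (p + ζ • v) / ‖D.k ζ‖ ^ 2 := by gcongr
      _ ≤ 3 * -D.σ (p + ζ • v) / (‖ζ‖ / 2) ^ 2 := by gcongr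
      _ = _ := by field_simp; ring
  unfold Q
  linarith

/-- Near `p` the map `G` is so close to the identity that the two comparison functions agree up
to a linear error. -/
theorem exists_close (D : ComparisonData Ω p ℓ v) {G : En n → En n} (hG : MapsTo G Ω Ω)
    (ho : LittleOh Ω G p 3) : ∃ η > 0, η ≤ D.δ' ∧ ∀ ζ : ℂ, ‖ζ‖ < η → p + ζ • v ∈ Ω →
      ‖G (p + ζ • v) - p‖ ≤ (‖v‖ + 1) * ‖ζ‖ ∧ ‖G (p + ζ • v) - p‖ < D.r₁ ∧
      ‖(D.f (G (p + ζ • v)))⁻¹ - (D.k ζ)⁻¹‖ ≤ ‖ζ‖ ∧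
      D.c * ‖(D.f (G (p + ζ • v)))⁻¹ • D.g (G (p + ζ • v))‖ ^ 2 ≤ ‖ζ‖ := by
  have hC := D.C_pos
  have hc := D.c_pos
  have hv : 0 < ‖v‖ := norm_pos_iff.2 D.v_ne_zero
  set e : ℝ := min 1 (1 / (16 * D.C)) with he
  have he0 : 0 < e := lt_min one_pos (by positivity)
  have he1 : e ≤ 1 := min_le_left _ _
  have heC : D.C * e ≤ 1 / 16 := by
    have : e ≤ 1 / (16 * D.C) := min_le_right _ _
    rw [le_div_iff₀ (by positivity)] at this
    linarith
  obtain ⟨η₀, hη₀, hη₀'⟩ := ho.exists_bound D.p_notMem (ε := e / ‖v‖ ^ 3) (by positivity)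
  set T := 1 + ‖ℓ‖ * ‖v‖ with hT
  have hT0 : 0 < T := by positivity
  set A := D.c * (16 * T ^ 2 * e ^ 2) with hA
  have hA0 : 0 < A := by positivity
  have hr₁ := D.r₁_pos
  clear_value e A
  set η := min (min D.δ' (η₀ / ‖v‖)) (min (min 1 (1 / (16 * D.C)))
    (min (1 / A) (D.r₁ / (‖v‖ + 1)))) with hη
  have hη0 : 0 < η := lt_min (lt_min D.δ'_pos (by positivity))
    (lt_min (lt_min one_pos (by positivity)) (lt_min (by positivity) (by positivity)))
  refine ⟨η, hη0, (min_le_left _ _).trans (min_le_left _ _), fun ζ hζ hmem => ?_⟩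
  have hζδ : ‖ζ‖ < D.δ' := hζ.trans_le ((min_le_left _ _).trans (min_le_left _ _))
  have hζ1 : ‖ζ‖ < 1 := hζ.trans_le
    ((min_le_right _ _).trans ((min_le_left _ _).trans (min_le_left _ _)))
  have hζη₀ : ‖ζ‖ * ‖v‖ < η₀ := by
    rw [← lt_div_iff₀ hv]
    exact hζ.trans_le ((min_le_left _ _).trans (min_le_right _ _))
  have hζC : D.C * ‖ζ‖ ≤ 1 / 16 := by
    have : ‖ζ‖ ≤ 1 / (16 * D.C) := hζ.le.trans
      ((min_le_right _ _).trans ((min_le_left _ _).trans (min_le_right _ _)))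
    rw [le_div_iff₀ (by positivity)] at this
    linarith
  have hζA : A * ‖ζ‖ ≤ 1 := by
    have : ‖ζ‖ ≤ 1 / A := hζ.le.trans
      ((min_le_right _ _).trans ((min_le_right _ _).trans (min_le_left _ _)))
    rw [le_div_iff₀ hA0] at this
    linarith
  have hζr : (‖v‖ + 1) * ‖ζ‖ < D.r₁ := by
    rw [mul_comm, ← lt_div_iff₀ (by positivity)]
    exact hζ.trans_le ((min_le_right _ _).trans ((min_le_right _ _).trans (min_le_right _ _)))
  have h0 : 0 < ‖ζ‖ := norm_pos_iff.2 (D.line_ne_zero hmem)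
  have hzp : ‖p + ζ • v - p‖ = ‖ζ‖ * ‖v‖ := by rw [add_sub_cancel_left, norm_smul]
  have hzr := D.norm_line_lt hζδ
  have hGz : ‖G (p + ζ • v) - (p + ζ • v)‖ ≤ e * ‖ζ‖ ^ 3 := by
    refine (hη₀' _ hmem (by rwa [hzp])).trans (le_of_eq ?_)
    rw [hzp]; field_simp
  have hζ3 : ‖ζ‖ ^ 3 ≤ ‖ζ‖ := pow_le_of_le_one h0.le hζ1.le (by norm_num)
  set w := G (p + ζ • v) with hw
  have hwΩ : w ∈ Ω := hG hmem
  have b1 : ‖w - p‖ ≤ (‖v‖ + 1) * ‖ζ‖ := by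
    have h1 : ‖w - p‖ ≤ ‖w - (p + ζ • v)‖ + ‖p + ζ • v - p‖ := by
      exact norm_sub_le_norm_sub_add_norm_sub _ _ _
    have h2 : e * ‖ζ‖ ^ 3 ≤ 1 * ‖ζ‖ := by gcongr
    rw [hzp] at h1
    linarith
  have b2 : ‖w - p‖ < D.r₁ := b1.trans_lt hζr
  have hwr : ‖w - p‖ < D.r := by linarith [D.r₁_lt, D.r₂_lt]
  have hff : ‖D.f w - D.k ζ‖ ≤ 1 / 8 * ‖ζ‖ ^ 3 := by
    have h1 := D.lip w (p + ζ • v) hwr hzr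
    have h2 := D.f_sub_k ζ (hζδ.trans_le D.δ'_le)
    have h3 : ‖D.f w - D.k ζ‖ ≤ ‖D.f w - D.f (p + ζ • v)‖ + ‖D.f (p + ζ • v) - D.k ζ‖ := by
      simpa using norm_add_le (D.f w - D.f (p + ζ • v)) (D.f (p + ζ • v) - D.k ζ)
    have h4 : D.C * ‖w - (p + ζ • v)‖ ≤ D.C * (e * ‖ζ‖ ^ 3) := by gcongr
    have h5 : D.C * e * ‖ζ‖ ^ 3 ≤ 1 / 16 * ‖ζ‖ ^ 3 := by gcongr
    have h6 : D.C * ‖ζ‖ * ‖ζ‖ ^ 3 ≤ 1 / 16 * ‖ζ‖ ^ 3 := by gcongr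
    linarith
  have hk := D.half_norm_le_k hζδ
  have hfw : ‖ζ‖ / 4 ≤ ‖D.f w‖ := by
    have : ‖D.k ζ‖ ≤ ‖D.f w‖ + ‖D.f w - D.k ζ‖ := by
      simpa using norm_sub_le (D.f w) (D.f w - D.k ζ)
    linarith
  have hfw0 : D.f w ≠ 0 := norm_pos_iff.1 (lt_of_lt_of_le (by positivity) hfw)
  have hk0 : D.k ζ ≠ 0 := norm_pos_iff.1 (lt_of_lt_of_le (by positivity) hk)
  refine ⟨b1, b2, ?_, ?_⟩
  · rw [inv_sub_inv hfw0 hk0, norm_div, norm_mul, norm_sub_rev]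
    calc ‖D.f w - D.k ζ‖ / (‖D.f w‖ * ‖D.k ζ‖)
        ≤ (1 / 8 * ‖ζ‖ ^ 3) / (‖ζ‖ / 4 * (‖ζ‖ / 2)) := by gcongr
      _ = ‖ζ‖ := by field_simp; norm_num
  · have hg : ‖D.g w‖ ≤ T * (e * ‖ζ‖ ^ 3) := by
      have h1 : D.g w = (w - (p + ζ • v)) - ℓ (w - (p + ζ • v)) • v := by
        have h2 : ℓ (w - (p + ζ • v)) = ℓ (w - p) - ζ := by
          rw [← sub_sub, map_sub, map_smul, D.ℓ_v, smul_eq_mul, mul_one]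
        rw [h2, sub_smul]
        unfold g
        abel
      rw [h1]
      refine (norm_sub_le _ _).trans ?_
      rw [norm_smul]
      have h3 := ℓ.le_opNorm (w - (p + ζ • v))
      calc _ ≤ ‖w - (p + ζ • v)‖ + ‖ℓ‖ * ‖w - (p + ζ • v)‖ * ‖v‖ := by gcongr
        _ = T * ‖w - (p + ζ • v)‖ := by rw [hT]; ring
        _ ≤ _ := by gcongr
    rw [norm_smul, norm_inv]
    calc D.c * (‖D.f w‖⁻¹ * ‖D.g w‖) ^ 2 ≤ D.c * ((‖ζ‖ / 4)⁻¹ * (T * (e * ‖ζ‖ ^ 3))) ^ 2 := by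
          gcongr
      _ = A * ‖ζ‖ * ‖ζ‖ ^ 3 := by rw [hA]; field_simp; ring
      _ ≤ 1 * ‖ζ‖ := by gcongr
      _ = ‖ζ‖ := one_mul _

theorem continuousAt_Q (D : ComparisonData Ω p ℓ v) {ζ : ℂ} (hζ : ‖ζ‖ < D.δ') (h0 : ζ ≠ 0) :
    ContinuousAt D.Q ζ := by
  have hk0 : D.k ζ ≠ 0 := norm_pos_iff.1 (lt_of_lt_of_le
    (by have := norm_pos_iff.2 h0; positivity) (D.half_norm_le_k hζ))
  have h1 : ContinuousAt (fun ζ => ((D.k ζ)⁻¹).re) ζ :=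
    continuous_re.continuousAt.comp (D.k_diff.continuous.continuousAt.inv₀ hk0)
  have h2 : Continuous (fun ζ : ℂ => D.σ (p + ζ • v)) :=
    D.contDiff.continuous.comp (by fun_prop)
  exact h1.add (continuousAt_const.mul h2.continuousAt)

theorem laplacianLE_neg_Q (D : ComparisonData Ω p ℓ v) {ζ : ℂ} (hζ : ‖ζ‖ < D.δ') (h0 : ζ ≠ 0) :
    LaplacianLE (fun x => -D.Q x) ζ (D.K * -(D.c * ‖v‖ ^ 2)) := by
  have hk0 : D.k ζ ≠ 0 := norm_pos_iff.1 (lt_of_lt_of_le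
    (by have := norm_pos_iff.2 h0; positivity) (D.half_norm_le_k hζ))
  have h1 : ∀ᶠ x in 𝓝 ζ, DifferentiableAt ℂ (fun x => -(D.k x)⁻¹) x := by
    filter_upwards [D.k_diff.continuous.continuousAt.eventually_ne hk0] with x hx
    exact ((D.k_diff x).inv hx).neg
  have hd : deriv (fun x : ℂ => p + x • v) ζ = v := by
    have := ((hasDerivAt_id ζ).smul_const v).const_add p
    simpa using this.deriv
  have h2 := D.laplacianLE_neg_σ (γ := fun x => p + x • v) (ζ := ζ)
    (Eventually.of_forall fun x => by fun_prop) (D.norm_line_lt hζ)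
  rw [hd] at h2
  refine (((LaplacianLE.re h1).add (h2.const_mul D.K_pos.le)).congr ?_).mono (by simp)
  refine Eventually.of_forall fun x => ?_
  simp only [Q, neg_re]
  ring

theorem Q_le_P (D : ComparisonData Ω p ℓ v) (hΩ : IsOpen Ω) {G : En n → En n}
    (hGd : DifferentiableOn ℂ G Ω) (hG : MapsTo G Ω Ω) (ho : LittleOh Ω G p 3) {ζ : ℂ}
    (hζ : ‖ζ‖ < D.δ') (hmem : p + ζ • v ∈ Ω) : D.Q ζ ≤ D.P (G (p + ζ • v)) := by
  set V : Set ℂ := {ζ | ‖ζ‖ < D.δ' ∧ p + ζ • v ∈ Ω} with hV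
  have hline : Continuous fun ζ : ℂ => p + ζ • v := by fun_prop
  have hVo : IsOpen V :=
    (isOpen_lt continuous_norm continuous_const).inter (hΩ.preimage hline)
  have hγ : ∀ ζ ∈ V, ∀ᶠ x in 𝓝 ζ, DifferentiableAt ℂ (fun x : ℂ => G (p + x • v)) x := by
    intro ζ hζ
    filter_upwards [hVo.mem_nhds hζ] with x hx
    exact DifferentiableAt.comp (f := fun x : ℂ => p + x • v) x
      (hGd.differentiableAt (hΩ.mem_nhds hx.2)) (by fun_prop)
  have hmain := nonneg_of_laplacianLE_neg hVo (U := fun ζ => D.P (G (p + ζ • v)) + -D.Q ζ)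
    ?_ ?_ ?_ (show ζ ∈ V from ⟨hζ, hmem⟩)
  · linarith
  · intro ζ hζ
    refine LowerSemicontinuousAt.add ?_
      (D.continuousAt_Q hζ.1 (D.line_ne_zero hζ.2)).neg.lowerSemicontinuousAt
    intro y hy
    exact (hγ ζ hζ).self_of_nhds.continuousAt.eventually
      (D.lowerSemicontinuousAt_P (hG hζ.2) y hy)
  · intro ζ hζ
    refine ⟨_, ?_, (D.laplacianLE_P (hγ ζ hζ) (hG hζ.2)).add
      (D.laplacianLE_neg_Q hζ.1 (D.line_ne_zero hζ.2))⟩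
    have := mul_pos D.K_pos (mul_pos D.c_pos (pow_pos (norm_pos_iff.2 D.v_ne_zero) 2))
    linarith
  · intro ε hε
    obtain ⟨η, hη, hηδ, hclose⟩ := D.exists_close hG ho
    have hδ' := D.δ'_pos
    set η' := min η (ε / 2) with hη'
    have hη'0 : 0 < η' := lt_min hη (by positivity)
    set τ := ε * η' ^ 2 / 12 with hτ
    have hτ0 : 0 < τ := by positivity
    have hσc : Continuous fun ζ : ℂ => D.σ (p + ζ • v) := D.contDiff.continuous.comp hline
    refine ⟨{ζ | ‖ζ‖ ≤ D.δ' / 2 ∧ D.σ (p + ζ • v) ≤ -τ}, ?_, ?_, ?_⟩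
    · rintro x ⟨hx1, hx2⟩
      have hx : ‖x‖ < D.δ' := by linarith
      exact ⟨hx, (D.mem_iff _ (D.norm_line_lt hx)).2 (by linarith)⟩
    · refine (isCompact_closedBall (0 : ℂ) (D.δ' / 2)).of_isClosed_subset
        ((isClosed_le continuous_norm continuous_const).inter
          (isClosed_le hσc continuous_const)) ?_
      rintro x ⟨hx1, -⟩
      simpa using hx1
    · rintro x ⟨hx, hxΩ⟩ hxS
      have hPn := D.P_nonneg (hG hxΩ)
      have hx0 : 0 < ‖x‖ := norm_pos_iff.2 (D.line_ne_zero hxΩ)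
      have hs : 0 < -D.σ (p + x • v) := neg_pos.2 ((D.mem_iff _ (D.norm_line_lt hx)).1 hxΩ)
      rcases lt_or_ge ‖x‖ η' with h1 | h1
      · obtain ⟨-, b2, b3, b4⟩ := hclose x (h1.trans_le (min_le_left _ _)) hxΩ
        have hP : D.P (G (p + x • v)) = D.Φ (G (p + x • v)) := if_pos b2
        have hr : ‖G (p + x • v) - p‖ < D.r := by linarith [D.r₁_lt, D.r₂_lt]
        have hs' := mul_pos D.K_pos (neg_pos.2 ((D.mem_iff _ hr).1 (hG hxΩ)))
        have h2 := (abs_le.1 ((abs_re_le_norm _).trans b3)).1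
        rw [sub_re] at h2
        have h3 : ‖x‖ ≤ ε / 2 := h1.le.trans (min_le_right _ _)
        have h4 := mul_pos D.K_pos hs
        have h5 := mul_nonneg D.κ_pos.le (sq_nonneg ‖G (p + x • v) - p‖)
        rw [hP]
        unfold Φ Q
        linarith
      · have hQ := D.Q_le hx hxΩ
        have : D.Q x ≤ ε := by
          refine hQ.trans ?_
          rcases le_or_gt ‖x‖ (D.δ' / 2) with h2 | h2
          · have h3 : -D.σ (p + x • v) < τ := by
              by_contra! h3
              exact hxS ⟨h2, by linarith⟩
            have h4 : 12 / ‖x‖ ^ 2 * -D.σ (p + x • v) ≤ 12 / η' ^ 2 * τ := by gcongr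
            have h5 : 12 / η' ^ 2 * τ = ε := by rw [hτ]; field_simp
            have h6 := mul_pos D.K_pos hs
            linarith
          · have h3 : 12 / ‖x‖ ^ 2 ≤ D.K := by
              rw [div_le_iff₀ (by positivity)]
              have h4 : (D.δ' / 2) ^ 2 ≤ ‖x‖ ^ 2 := by gcongr
              have h5 := mul_le_mul_of_nonneg_left h4 D.K_pos.le
              linarith [D.K_ge]
            have := mul_nonneg (sub_nonneg.2 h3) hs.le
            linarith
        linarith

end ComparisonData

/-- A Hopf type lower bound for a strictly superharmonic function on a disc. -/
theorem hopf_bound {a β C₀ : ℝ} (ha : 0 < a) (hβ : 0 < β) {u : ℂ → ℝ}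
    (hu : ∀ ζ : ℂ, ‖ζ - a‖ < a → LowerSemicontinuousAt u ζ)
    (hlap : ∀ ζ : ℂ, ‖ζ - a‖ < a → ∃ l < 0, LaplacianLE u ζ l)
    (hu0 : ∀ ζ : ℂ, ‖ζ - a‖ < a → 0 ≤ u ζ) (hβu : ∀ ζ : ℂ, ‖ζ - a‖ ≤ a / 5 → β ≤ u ζ)
    (hend : ∀ᶠ t : ℝ in 𝓝[>] 0, u t ≤ C₀ * t) : β ≤ 18 * C₀ * a := by
  set V : Set ℂ := {ζ | a / 6 < ‖ζ - a‖ ∧ ‖ζ - a‖ < a} with hV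
  have hnc : Continuous fun ζ : ℂ => ‖ζ - a‖ := by fun_prop
  have hVo : IsOpen V := (isOpen_lt continuous_const hnc).inter (isOpen_lt hnc continuous_const)
  have hne : ∀ ζ ∈ V, ζ - a ≠ 0 := fun ζ hζ => norm_pos_iff.1 (lt_trans (by positivity) hζ.1)
  have hd : ∀ ζ ∈ V, ∀ᶠ x in 𝓝 ζ, DifferentiableAt ℂ (fun x : ℂ => (a : ℂ) / (x - a)) x := by
    intro ζ hζ
    filter_upwards [hVo.mem_nhds hζ] with x hx
    exact (differentiableAt_const _).div (by fun_prop) (hne x hx)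
  have hnorm : ∀ ζ : ℂ, ‖(a : ℂ) / (ζ - a)‖ = a / ‖ζ - a‖ := fun ζ => by
    rw [norm_div, norm_real, Real.norm_of_nonneg ha.le]
  have key : ∀ ζ ∈ V, 0 ≤ u ζ + (β / 35 * -‖(a : ℂ) / (ζ - a)‖ ^ 2 + β / 35) := by
    intro ζ hζ
    refine nonneg_of_laplacianLE_neg hVo
      (U := fun ζ => u ζ + (β / 35 * -‖(a : ℂ) / (ζ - a)‖ ^ 2 + β / 35)) ?_ ?_ ?_ hζ
    · intro x hx
      refine (hu x hx.2).add (ContinuousAt.lowerSemicontinuousAt ?_)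
      have := (hd x hx).self_of_nhds.continuousAt
      fun_prop
    · intro x hx
      obtain ⟨l, hl, hl'⟩ := hlap x hx.2
      refine ⟨_, ?_, hl'.add (((LaplacianLE.neg_norm_sq (hd x hx)).const_mul
        (c := β / 35) (by positivity)).add (LaplacianLE.const (β / 35) x))⟩
      linarith
    · intro ε hε
      set R := a / √(1 + 35 * ε / β) with hR
      have hR1 : 1 < √(1 + 35 * ε / β) := by
        rw [Real.lt_sqrt zero_le_one]
        have : 0 < 35 * ε / β := by positivity
        linarith
      have hRa : R < a := div_lt_self ha hR1
      refine ⟨{ζ | a / 5 ≤ ‖ζ - a‖ ∧ ‖ζ - a‖ ≤ R}, ?_, ?_, ?_⟩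
      · rintro x ⟨h1, h2⟩
        exact ⟨by linarith, by linarith⟩
      · refine (isCompact_closedBall (a : ℂ) R).of_isClosed_subset
          ((isClosed_le continuous_const hnc).inter (isClosed_le hnc continuous_const)) ?_
        rintro x ⟨-, h2⟩
        rwa [mem_closedBall, dist_eq_norm]
      · intro x hx hxS
        rw [hnorm]
        have h0 : 0 < ‖x - a‖ := lt_trans (by positivity) hx.1
        rcases lt_or_ge ‖x - a‖ (a / 5) with h1 | h1
        · have h2 := hβu x h1.le
          have h3 : (a / ‖x - a‖) ^ 2 ≤ 6 ^ 2 := by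
            gcongr
            rw [div_le_iff₀ h0]
            linarith [hx.1]
          have h4 := mul_le_mul_of_nonneg_left h3 (by positivity : 0 ≤ β / 35)
          linarith
        · have h2 : R < ‖x - a‖ := by
            by_contra! h2
            exact hxS ⟨h1, h2⟩
          have h3 : (a / ‖x - a‖) ^ 2 ≤ 1 + 35 * ε / β := by
            rw [← Real.sq_sqrt (by positivity : 0 ≤ 1 + 35 * ε / β)]
            gcongr
            rw [div_le_iff₀ h0, mul_comm, ← div_le_iff₀ (by positivity)]
            exact h2.le
          have h4 := mul_le_mul_of_nonneg_left h3 (by positivity : 0 ≤ β / 35)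
          have h5 : β / 35 * (1 + 35 * ε / β) = β / 35 + ε := by field_simp
          have h6 := hu0 x hx.2
          linarith
  obtain ⟨t, hut, ht0, hta⟩ := (hend.and (Ioo_mem_nhdsGT (half_pos ha))).exists
  have htn : ‖(t : ℂ) - a‖ = a - t := by
    rw [← ofReal_sub, norm_real, Real.norm_eq_abs, abs_sub_comm, abs_of_pos (by linarith)]
  have h1 := key t ⟨by rw [htn]; linarith, by rw [htn]; linarith⟩
  rw [hnorm, htn] at h1
  have h2 : 1 + 2 * t / a ≤ (a / (a - t)) ^ 2 := by
    have h3 : 0 < a - t := by linarith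
    rw [div_pow, le_div_iff₀ (by positivity)]
    have h4 : a ^ 2 - (1 + 2 * t / a) * (a - t) ^ 2 = t ^ 2 * (3 * a - 2 * t) / a := by
      field_simp; ring
    have h5 : 0 ≤ t ^ 2 * (3 * a - 2 * t) / a :=
      div_nonneg (mul_nonneg (sq_nonneg _) (by linarith)) ha.le
    linarith
  have h3 := mul_le_mul_of_nonneg_left h2 (by positivity : 0 ≤ β / 35)
  have h4 : β / 35 * (2 * t / a) ≤ C₀ * t := by linarith
  have h5 : β / 35 * (2 * t / a) = (2 * β / (35 * a)) * t := by field_simp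
  rw [h5] at h4
  have h6 := le_of_mul_le_mul_right h4 ht0
  rw [div_le_iff₀ (by positivity)] at h6
  linarith

/-- Oscillation of a holomorphic function whose real part is close to a nonnegative strictly
superharmonic function vanishing linearly at a boundary point of a disc. -/
theorem oscillation_bound {a e C₀ : ℝ} (ha : 0 < a) (he : 0 < e) (hC₀ : 0 ≤ C₀) {u : ℂ → ℝ}
    {h : ℂ → ℂ} (hh : DifferentiableOn ℂ h (ball (a : ℂ) a))
    (hu : ∀ ζ : ℂ, ‖ζ - a‖ < a → LowerSemicontinuousAt u ζ)
    (hlap : ∀ ζ : ℂ, ‖ζ - a‖ < a → ∃ l < 0, LaplacianLE u ζ l)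
    (hu0 : ∀ ζ : ℂ, ‖ζ - a‖ < a → 0 ≤ u ζ)
    (huh : ∀ ζ : ℂ, ‖ζ - a‖ < a → (h ζ).re ≤ u ζ ∧ u ζ ≤ (h ζ).re + e)
    (hend : ∀ᶠ t : ℝ in 𝓝[>] 0, u t ≤ C₀ * t) {ζ : ℂ} (hζ : ‖ζ - a‖ ≤ 3 / 4 * a) :
    ‖h ζ - h a‖ ≤ 24 * e + 216 * C₀ * a := by
  set M := (h a).re + 2 * e with hM
  have hare : -e ≤ (h a).re := by
    have h1 : ‖(a : ℂ) - a‖ < a := by simpa using ha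
    linarith [hu0 a h1, (huh a h1).2]
  have hM0 : 0 < M := by linarith
  have hbc : ∀ x : ℂ, ‖x - a‖ < a → ‖h x - h a‖ ≤ 2 * M * ‖x - a‖ / (a - ‖x - a‖) := by
    intro x hx
    have := borelCaratheodory_zero (f := fun w => h a - h (w + a)) (z := x - a) hM0
      (R := a) ?_ ?_ ha ?_ ?_
    · simpa [norm_sub_rev] using this
    · refine (differentiableOn_const _).sub (hh.comp (by fun_prop) ?_)
      intro w hw
      simpa [dist_eq_norm] using hw
    · intro w hw
      have hw' : ‖w + a - a‖ < a := by simpa using hw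
      have := hu0 _ hw'
      have := (huh _ hw').2
      simp only [mem_ofPred_eq, sub_re]
      linarith
    · simpa using hx
    · simp
  have hMle : M ≤ 4 * e + 36 * C₀ * a := by
    by_contra! hcon
    have hpos : 0 ≤ C₀ * a := by positivity
    have hβ : 0 < M / 2 - 2 * e := by linarith
    have := hopf_bound ha hβ hu hlap hu0 (fun x hx => ?_) hend
    · linarith
    · have hx' : ‖x - a‖ < a := by linarith
      have h1 : ‖h x - h a‖ ≤ M / 2 := (hbc x hx').trans (by
        rw [div_le_iff₀ (by linarith)]
        have := mul_le_mul_of_nonneg_left hx hM0.le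
        linarith)
      have h2 := (abs_le.1 ((abs_re_le_norm _).trans h1)).1
      rw [sub_re] at h2
      linarith [(huh x hx').1]
  have hζa : ‖ζ - a‖ < a := by linarith
  refine (hbc ζ hζa).trans ?_
  rw [div_le_iff₀ (by linarith)]
  have h1 := mul_le_mul_of_nonneg_left hζ hM0.le
  have h2 : a - 3 / 4 * a ≤ a - ‖ζ - a‖ := by linarith
  have h3 := mul_le_mul_of_nonneg_left h2 (by positivity : 0 ≤ 24 * e + 216 * C₀ * a)
  have h4 := mul_le_mul_of_nonneg_right hMle ha.le
  linarith

/-- A holomorphic self-map of `Ω` tangent to the identity to third order at `p`. -/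
structure IsTangentSelfMap {n : ℕ} (Ω : Set (En n)) (p : En n) (G : En n → En n) : Prop where
  differentiableOn : DifferentiableOn ℂ G Ω
  mapsTo : MapsTo G Ω Ω
  littleOh : LittleOh Ω G p 3

namespace ComparisonData

variable {n : ℕ} {Ω : Set (En n)} {p : En n} {ℓ : En n →L[ℂ] ℂ} {v : En n}

/-- The holomorphic function measuring the displacement of `G` along the disc. -/
def h (D : ComparisonData Ω p ℓ v) (G : En n → En n) (ζ : ℂ) : ℂ :=
  (D.f (G (p + ζ • v)))⁻¹ - (D.k ζ)⁻¹

theorem abs_σ_le_C (D : ComparisonData Ω p ℓ v) {z : En n} (hr : ‖z - p‖ < D.r) :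
    |D.σ z| ≤ D.C :=
  (D.abs_σ_le z hr).trans (mul_le_of_le_one_right D.C_pos.le (hr.le.trans D.r_le_one))

theorem le_Q (D : ComparisonData Ω p ℓ v) {a : ℝ} {ζ : ℂ} (hζ : ‖ζ‖ < D.δ')
    (hζa : ‖ζ - a‖ < a) : 1 / (2 * a) - 2 * D.C - D.K * D.C ≤ D.Q ζ := by
  have ha : 0 < a := (norm_nonneg _).trans_lt hζa
  have hsq : ‖ζ‖ ^ 2 < 2 * a * ζ.re := by
    have h1 : ‖ζ - a‖ ^ 2 < a ^ 2 := by gcongr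
    rw [← normSq_eq_norm_sq, normSq_apply] at h1 ⊢
    simp only [sub_re, sub_im, ofReal_re, ofReal_im] at h1
    linarith
  have h0 : 0 < ‖ζ‖ := by
    rw [norm_pos_iff]
    rintro rfl
    simp at hsq
  have hk := D.half_norm_le_k hζ
  have hk0 : D.k ζ ≠ 0 := norm_pos_iff.1 (lt_of_lt_of_le (by positivity) hk)
  have h1 : 1 / (2 * a) ≤ (ζ⁻¹).re := by
    rw [inv_re, normSq_eq_norm_sq, div_le_div_iff₀ (by positivity) (by positivity)]
    linarith
  have h2 : ‖(D.k ζ)⁻¹ - ζ⁻¹‖ ≤ 2 * D.C := by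
    rw [inv_sub_inv hk0 (norm_pos_iff.1 h0), norm_div, norm_mul, norm_sub_rev]
    have := D.C_pos
    calc ‖D.k ζ - ζ‖ / (‖D.k ζ‖ * ‖ζ‖) ≤ (D.C * ‖ζ‖ ^ 2) / (‖ζ‖ / 2 * ‖ζ‖) := by
          gcongr
          exact D.k_sub ζ (hζ.trans_le D.δ'_le)
      _ = 2 * D.C := by field_simp
  have h3 := (abs_le.1 ((abs_re_le_norm _).trans h2)).1
  rw [sub_re] at h3
  have h4 := mul_le_mul_of_nonneg_left (abs_le.1 (D.abs_σ_le_C (D.norm_line_lt hζ))).1 D.K_pos.le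
  unfold Q
  linarith

/-- On small discs, every tangent self-map is localised near `p`. -/
theorem exists_localization (D : ComparisonData Ω p ℓ v) (hΩ : IsOpen Ω) :
    ∃ a₀ > (0 : ℝ), a₀ ≤ 1 ∧ ∀ G, IsTangentSelfMap Ω p G → ∀ a ≤ a₀, ∀ ζ : ℂ, ‖ζ - a‖ < a →
      ‖ζ‖ < D.δ' ∧ p + ζ • v ∈ Ω ∧ ‖G (p + ζ • v) - p‖ < D.r₁ ∧
      ‖D.f (G (p + ζ • v))‖ ≤ 8 * a ∧ D.Q ζ ≤ D.Φ (G (p + ζ • v)) := by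
  have hC := D.C_pos
  have hK := D.K_pos
  have hκ := D.κ_pos
  have hδ' := D.δ'_pos
  set M := 2 * D.C + D.K * D.C + D.κ + 1 with hM
  have hM0 : 0 < M := by positivity
  have hKC : 0 < D.K * D.C := by positivity
  refine ⟨min (min 1 (D.δ' / 4)) (1 / (8 * M)), lt_min (lt_min one_pos (by positivity))
    (by positivity), (min_le_left _ _).trans (min_le_left _ _), fun G hG a ha ζ hζa => ?_⟩
  have ha0 : 0 < a := (norm_nonneg _).trans_lt hζa
  have haδ : a ≤ D.δ' / 4 := ha.trans ((min_le_left _ _).trans (min_le_right _ _))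
  have haM : M ≤ 1 / (8 * a) := by
    have : a ≤ 1 / (8 * M) := ha.trans (min_le_right _ _)
    rw [le_div_iff₀ (by positivity)] at this ⊢
    linarith
  have hζ2 : ‖ζ‖ < 2 * a := by
    have : ‖ζ‖ ≤ ‖ζ - a‖ + ‖(a : ℂ)‖ := by simpa using norm_add_le (ζ - a) a
    rw [norm_real, Real.norm_of_nonneg ha0.le] at this
    linarith
  have hζδ : ‖ζ‖ < D.δ' := by linarith
  have hmem : p + ζ • v ∈ Ω := D.disc a (by linarith [D.δ'_le]) ζ hζa
  have hQP := D.Q_le_P hΩ hG.differentiableOn hG.mapsTo hG.littleOh hζδ hmem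
  have hQ := D.le_Q hζδ hζa
  have e1 : 1 / (2 * a) = 4 * (1 / (8 * a)) := by field_simp; norm_num
  rw [e1] at hQ
  have hr₂ : D.κ * D.r₂ ^ 2 ≤ D.κ := by
    have h2 : D.r₂ ≤ 1 := by linarith [D.r₂_lt, D.r_le_one]
    have h3 : 0 ≤ D.r₂ := by linarith [D.r₁_lt, D.r₁_pos]
    exact mul_le_of_le_one_right hκ.le (pow_le_one₀ h3 h2)
  obtain ⟨h1, h2⟩ := D.lt_r₁_of_lt_P (z := G (p + ζ • v)) (by linarith)
  rw [h2] at hQP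
  have hwr : ‖G (p + ζ • v) - p‖ < D.r := by linarith [D.r₁_lt, D.r₂_lt]
  refine ⟨hζδ, hmem, h1, ?_, hQP⟩
  set w := G (p + ζ • v) with hw
  have hf0 : 0 < ‖D.f w‖ := norm_pos_iff.2 (D.f_ne_zero (hG.mapsTo hmem) hwr)
  have h3 := mul_le_mul_of_nonneg_left (abs_le.1 (D.abs_σ_le_C hwr)).1 hK.le
  have h4 : D.κ * ‖w - p‖ ^ 2 ≤ D.κ :=
    mul_le_of_le_one_right hκ.le (pow_le_one₀ (norm_nonneg _) (hwr.le.trans D.r_le_one))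
  have h5 : 0 ≤ D.c * ‖(D.f w)⁻¹ • D.g w‖ ^ 2 := mul_nonneg D.c_pos.le (sq_nonneg _)
  have h6 := re_le_norm (D.f w)⁻¹
  have h7 : 1 / (8 * a) ≤ 1 / ‖D.f w‖ := by
    rw [norm_inv, inv_eq_one_div ‖D.f w‖] at h6
    unfold Φ at hQP
    linarith
  exact (one_div_le_one_div (by positivity) hf0).1 h7

/-- The superharmonic majorant of `Re h`. -/
def u (D : ComparisonData Ω p ℓ v) (G : En n → En n) (ζ : ℂ) : ℝ :=
  (D.h G ζ).re + (D.K * -D.σ (G (p + ζ • v)) + D.κ * ‖G (p + ζ • v) - p‖ ^ 2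
    + D.K * -D.σ (p + ζ • v))

theorem u_eq (D : ComparisonData Ω p ℓ v) (G : En n → En n) (ζ : ℂ) :
    D.u G ζ = D.Φ (G (p + ζ • v)) - D.Q ζ +
      D.c * ‖(D.f (G (p + ζ • v)))⁻¹ • D.g (G (p + ζ • v))‖ ^ 2 := by
  unfold u h Φ Q
  rw [sub_re]
  ring

theorem eventually_differentiableAt_h (D : ComparisonData Ω p ℓ v) {G : En n → En n} {ζ : ℂ}
    (hγ : ∀ᶠ x in 𝓝 ζ, DifferentiableAt ℂ (fun x : ℂ => G (p + x • v)) x)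
    (hf : D.f (G (p + ζ • v)) ≠ 0) (hk : D.k ζ ≠ 0) :
    ∀ᶠ x in 𝓝 ζ, DifferentiableAt ℂ (D.h G) x := by
  have hc : ContinuousAt (fun x : ℂ => D.f (G (p + x • v))) ζ :=
    ContinuousAt.comp (f := fun x : ℂ => G (p + x • v)) D.f_diff.continuous.continuousAt
      hγ.self_of_nhds.continuousAt
  filter_upwards [hγ, hc.eventually_ne hf,
    D.k_diff.continuous.continuousAt.eventually_ne hk] with x hx hfx hkx
  exact ((DifferentiableAt.comp (f := fun x : ℂ => G (p + x • v)) x (D.f_diff _) hx).inv hfx).sub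
    ((D.k_diff x).inv hkx)

theorem laplacianLE_u (D : ComparisonData Ω p ℓ v) {G : En n → En n} {ζ : ℂ}
    (hγ : ∀ᶠ x in 𝓝 ζ, DifferentiableAt ℂ (fun x : ℂ => G (p + x • v)) x)
    (hh : ∀ᶠ x in 𝓝 ζ, DifferentiableAt ℂ (D.h G) x) (hζ : ‖ζ‖ < D.δ')
    (hr : ‖G (p + ζ • v) - p‖ < D.r) :
    LaplacianLE (D.u G) ζ (D.K * -(D.c * ‖v‖ ^ 2)) := by
  have hd : deriv (fun x : ℂ => p + x • v) ζ = v := by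
    have := ((hasDerivAt_id ζ).smul_const v).const_add p
    simpa using this.deriv
  have h2 := D.laplacianLE_neg_σ (γ := fun x => p + x • v) (ζ := ζ)
    (Eventually.of_forall fun x => by fun_prop) (D.norm_line_lt hζ)
  rw [hd] at h2
  have h3 := (D.laplacianLE_neg_σ hγ hr).const_mul D.K_pos.le
  have h4 := (laplacianLE_norm_sq (p := p) hγ).const_mul D.κ_pos.le
  refine ((LaplacianLE.re hh).add ((h3.add h4).add (h2.const_mul D.K_pos.le))).mono ?_
  have := mul_le_mul_of_nonneg_right D.κ_le
    (sq_nonneg ‖deriv (fun x : ℂ => G (p + x • v)) ζ‖)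
  linarith

theorem eventually_u_le (D : ComparisonData Ω p ℓ v) {G : En n → En n}
    (hG : IsTangentSelfMap Ω p G) (hmem : ∀ᶠ t : ℝ in 𝓝[>] 0, p + (t : ℂ) • v ∈ Ω) :
    ∀ᶠ t : ℝ in 𝓝[>] 0, D.u G t ≤
      (1 + D.K * D.C * (‖v‖ + 1) + D.κ * (‖v‖ + 1) + D.K * D.C * ‖v‖) * t := by
  obtain ⟨η, hη, hηδ, hclose⟩ := D.exists_close hG.mapsTo hG.littleOh
  filter_upwards [hmem, Ioo_mem_nhdsGT hη] with t ht ht'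
  have htn : ‖(t : ℂ)‖ = t := by rw [norm_real, Real.norm_of_nonneg ht'.1.le]
  obtain ⟨b1, b2, b3, -⟩ := hclose t (by rw [htn]; exact ht'.2) ht
  have hz : ‖p + (t : ℂ) • v - p‖ = t * ‖v‖ := by rw [add_sub_cancel_left, norm_smul, htn]
  have hzr := D.norm_line_lt (ζ := t) (by rw [htn]; exact ht'.2.trans_le hηδ)
  have hwr : ‖G (p + (t : ℂ) • v) - p‖ < D.r := by linarith [D.r₁_lt, D.r₂_lt]
  have s1 := D.abs_σ_le _ hzr
  have s2 := D.abs_σ_le _ hwr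
  rw [hz] at s1
  rw [htn] at b1 b3
  set w := G (p + (t : ℂ) • v) with hw
  have hC := D.C_pos
  have hK := D.K_pos
  have hκ := D.κ_pos
  have t1 : D.K * -D.σ w ≤ D.K * (D.C * ((‖v‖ + 1) * t)) := by
    have := neg_le_abs (D.σ w)
    gcongr
    exact this.trans (s2.trans (by gcongr))
  have t2 : D.K * -D.σ (p + (t : ℂ) • v) ≤ D.K * (D.C * (t * ‖v‖)) := by
    gcongr
    exact (neg_le_abs _).trans s1
  have t3 : D.κ * ‖w - p‖ ^ 2 ≤ D.κ * ((‖v‖ + 1) * t) := by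
    gcongr
    exact (pow_le_of_le_one (norm_nonneg _) (hwr.le.trans D.r_le_one) two_ne_zero).trans b1
  have t4 : (D.h G t).re ≤ t := (re_le_norm _).trans b3
  have e : D.u G t = (D.h G t).re + (D.K * -D.σ w + D.κ * ‖w - p‖ ^ 2 +
    D.K * -D.σ (p + (t : ℂ) • v)) := rfl
  rw [e]
  linarith

/-- Uniform control of the oscillation of `h` on small discs. -/
theorem exists_oscillation (D : ComparisonData Ω p ℓ v) (hΩ : IsOpen Ω) :
    ∃ a₀ > (0 : ℝ), ∃ A > (0 : ℝ), a₀ ≤ 1 ∧ ∀ G, IsTangentSelfMap Ω p G → ∀ a ≤ a₀, ∀ ζ : ℂ, 0 < a →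
      ‖ζ - a‖ ≤ 3 / 4 * a → ‖ζ‖ < D.δ' ∧ p + ζ • v ∈ Ω ∧ ‖G (p + ζ • v) - p‖ < D.r₁ ∧
      ‖D.f (G (p + ζ • v))‖ ≤ 8 * a ∧ ‖D.h G ζ - D.h G a‖ ≤ A * √a ∧
      D.c * ‖(D.f (G (p + ζ • v)))⁻¹ • D.g (G (p + ζ • v))‖ ^ 2 ≤ ‖D.h G ζ‖ + A * √a := by
  obtain ⟨a₀, ha₀, ha₀1, hloc⟩ := D.exists_localization hΩ
  have hC := D.C_pos
  have hK := D.K_pos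
  have hκ := D.κ_pos
  have hC' := D.C'_pos
  have hv : 0 < ‖v‖ := norm_pos_iff.2 D.v_ne_zero
  set E := (D.K * D.C + D.κ) * √(8 * D.C') + 2 * D.K * D.C * ‖v‖ with hE
  have hE0 : 0 < E := by positivity
  set C₀ := 1 + D.K * D.C * (‖v‖ + 1) + D.κ * (‖v‖ + 1) + D.K * D.C * ‖v‖ with hC₀
  have hC₀0 : 0 < C₀ := by positivity
  refine ⟨a₀, ha₀, 24 * E + 216 * C₀, by positivity, ha₀1, fun G hG a ha ζ ha0 hζ => ?_⟩
  have hsa : a ≤ √a := Real.le_sqrt_of_sq_le (by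
    rw [sq]; exact mul_le_of_le_one_left ha0.le (ha.trans ha₀1))
  have hsa0 : 0 < √a := Real.sqrt_pos.2 ha0
  have herr : ∀ x : ℂ, ‖x - a‖ < a → (D.h G x).re ≤ D.u G x ∧
      D.u G x ≤ (D.h G x).re + E * √a := by
    intro x hx
    obtain ⟨hxδ, hmem, hr₁, hf8, -⟩ := hloc G hG a ha x hx
    have hwr : ‖G (p + x • v) - p‖ < D.r := by linarith [D.r₁_lt, D.r₂_lt]
    have hzr := D.norm_line_lt hxδ
    set w := G (p + x • v) with hw
    have hwΩ : w ∈ Ω := hG.mapsTo hmem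
    have p1 := mul_pos hK (neg_pos.2 ((D.mem_iff _ hwr).1 hwΩ))
    have p2 := mul_pos hK (neg_pos.2 ((D.mem_iff _ hzr).1 hmem))
    have p3 := mul_nonneg hκ.le (sq_nonneg ‖w - p‖)
    have hx2 : ‖x‖ ≤ 2 * a := by
      have : ‖x‖ ≤ ‖x - a‖ + ‖(a : ℂ)‖ := by simpa using norm_add_le (x - a) a
      rw [norm_real, Real.norm_of_nonneg ha0.le] at this
      linarith
    have hw1 : ‖w - p‖ ≤ √(8 * D.C') * √a := by
      rw [← Real.sqrt_mul (by positivity)]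
      refine Real.le_sqrt_of_sq_le ((D.norm_sq_le w hwΩ hwr).trans ?_)
      have := mul_le_mul_of_nonneg_left hf8 hC'.le
      linarith
    have s1 : -D.σ w ≤ D.C * (√(8 * D.C') * √a) :=
      (neg_le_abs _).trans ((D.abs_σ_le _ hwr).trans (by gcongr))
    have s2 : -D.σ (p + x • v) ≤ D.C * (2 * √a * ‖v‖) := by
      refine (neg_le_abs _).trans ((D.abs_σ_le _ hzr).trans ?_)
      rw [add_sub_cancel_left, norm_smul]
      have : ‖x‖ ≤ 2 * √a := by linarith
      gcongr
    have s3 : ‖w - p‖ ^ 2 ≤ √(8 * D.C') * √a :=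
      (pow_le_of_le_one (norm_nonneg _) (hwr.le.trans D.r_le_one) two_ne_zero).trans hw1
    have t1 := mul_le_mul_of_nonneg_left s1 hK.le
    have t2 := mul_le_mul_of_nonneg_left s2 hK.le
    have t3 := mul_le_mul_of_nonneg_left s3 hκ.le
    have e : D.u G x = (D.h G x).re + (D.K * -D.σ w + D.κ * ‖w - p‖ ^ 2 +
      D.K * -D.σ (p + x • v)) := rfl
    rw [e]
    constructor <;> linarith
  have hu0 : ∀ x : ℂ, ‖x - a‖ < a →
      D.c * ‖(D.f (G (p + x • v)))⁻¹ • D.g (G (p + x • v))‖ ^ 2 ≤ D.u G x := by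
    intro x hx
    rw [D.u_eq]
    linarith [(hloc G hG a ha x hx).2.2.2.2]
  have hγ : ∀ x : ℂ, ‖x - a‖ < a →
      ∀ᶠ y in 𝓝 x, DifferentiableAt ℂ (fun y : ℂ => G (p + y • v)) y := by
    intro x hx
    have ho : IsOpen {y : ℂ | p + y • v ∈ Ω} := hΩ.preimage (by fun_prop)
    filter_upwards [ho.mem_nhds (hloc G hG a ha x hx).2.1] with y hy
    exact DifferentiableAt.comp (f := fun y : ℂ => p + y • v) y
      (hG.differentiableOn.differentiableAt (hΩ.mem_nhds hy)) (by fun_prop)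
  have hh : ∀ x : ℂ, ‖x - a‖ < a → ∀ᶠ y in 𝓝 x, DifferentiableAt ℂ (D.h G) y := by
    intro x hx
    obtain ⟨hxδ, hmem, hr₁, -, -⟩ := hloc G hG a ha x hx
    refine D.eventually_differentiableAt_h (hγ x hx)
      (D.f_ne_zero (hG.mapsTo hmem) (by linarith [D.r₁_lt, D.r₂_lt])) (norm_pos_iff.1 ?_)
    have := norm_pos_iff.2 (D.line_ne_zero hmem)
    exact lt_of_lt_of_le (by positivity) (D.half_norm_le_k hxδ)
  have hζa : ‖ζ - a‖ < a := by linarith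
  obtain ⟨hζδ, hmem, hr₁, hf8, -⟩ := hloc G hG a ha ζ hζa
  have hkey := oscillation_bound (u := D.u G) (h := D.h G) ha0 (mul_pos hE0 hsa0) hC₀0.le
    (fun x hx => (hh x (by rwa [mem_ball, dist_eq_norm] at hx)).self_of_nhds.differentiableWithinAt)
    (fun x hx => ?_) (fun x hx => ?_) (fun x hx => ?_) herr (D.eventually_u_le hG ?_) hζ
  · refine ⟨hζδ, hmem, hr₁, hf8, hkey.trans ?_, ?_⟩
    · have := mul_le_mul_of_nonneg_left hsa hC₀0.le
      linarith
    · have h1 := re_le_norm (D.h G ζ)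
      have h2 := mul_pos hE0 hsa0
      have h3 := mul_pos hC₀0 hsa0
      linarith [hu0 ζ hζa, (herr ζ hζa).2]
  · have c1 := (hh x hx).self_of_nhds.continuousAt
    have c2 := (hγ x hx).self_of_nhds.continuousAt
    have c3 : ContinuousAt (fun x : ℂ => D.σ (G (p + x • v))) x :=
      ContinuousAt.comp (f := fun x : ℂ => G (p + x • v)) D.contDiff.continuous.continuousAt c2
    have c4 : Continuous fun x : ℂ => D.σ (p + x • v) := D.contDiff.continuous.comp (by fun_prop)
    have c5 : ContinuousAt (fun x => (D.h G x).re) x := continuous_re.continuousAt.comp c1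
    have c6 := c4.continuousAt (x := x)
    refine ContinuousAt.lowerSemicontinuousAt ?_
    exact c5.add (((continuousAt_const.mul c3.neg).add
      (continuousAt_const.mul ((c2.sub continuousAt_const).norm.pow 2))).add
      (continuousAt_const.mul c6.neg))
  · obtain ⟨hxδ, -, hr, -⟩ := hloc G hG a ha x hx
    refine ⟨_, ?_, D.laplacianLE_u (hγ x hx) (hh x hx) hxδ (by linarith [D.r₁_lt, D.r₂_lt])⟩
    have := mul_pos D.K_pos (mul_pos D.c_pos (pow_pos hv 2))
    linarith
  · exact (mul_nonneg D.c_pos.le (sq_nonneg _)).trans (hu0 x hx)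
  · filter_upwards [Ioo_mem_nhdsGT ha0] with t ht
    refine (hloc G hG a ha t ?_).2.1
    rw [← ofReal_sub, norm_real, Real.norm_eq_abs, abs_sub_comm, abs_of_pos (by linarith [ht.2])]
    linarith [ht.1]

end ComparisonData

namespace ComparisonData

variable {n : ℕ} {Ω : Set (En n)} {p : En n} {ℓ : En n →L[ℂ] ℂ} {v : En n}

/-- Uniform smallness of `h`. -/
theorem exists_norm_h_le (D : ComparisonData Ω p ℓ v) (hΩ : IsOpen Ω) :
    ∃ a₀ > (0 : ℝ), ∃ B > (0 : ℝ), a₀ ≤ 1 ∧ ∀ G, IsTangentSelfMap Ω p G → ∀ a ≤ a₀, ∀ ζ : ℂ,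
      0 < a → ‖ζ - a‖ ≤ 3 / 4 * a → ‖ζ‖ < D.δ' ∧ p + ζ • v ∈ Ω ∧ ‖G (p + ζ • v) - p‖ < D.r₁ ∧
      ‖D.f (G (p + ζ • v))‖ ≤ 8 * a ∧ ‖D.h G ζ‖ ≤ B * √a ∧
      D.c * ‖(D.f (G (p + ζ • v)))⁻¹ • D.g (G (p + ζ • v))‖ ^ 2 ≤ B * √a := by
  obtain ⟨a₀, ha₀, A, hA, ha₀1, hosc⟩ := D.exists_oscillation hΩ
  refine ⟨a₀, ha₀, 6 * A + 1, by positivity, ha₀1, fun G hG => ?_⟩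
  obtain ⟨η, hη, -, hclose⟩ := D.exists_close hG.mapsTo hG.littleOh
  have hcenter : ∀ m : ℕ, ∀ a : ℝ, 0 < a → a ≤ a₀ → a / 2 ^ m < η →
      ‖D.h G a‖ ≤ (4 * A + 1) * √a := by
    intro m
    induction m with
    | zero =>
      intro a ha0 ha haη
      rw [pow_zero, div_one] at haη
      have han : ‖(a : ℂ)‖ = a := by rw [norm_real, Real.norm_of_nonneg ha0.le]
      have hsa : a ≤ √a := Real.le_sqrt_of_sq_le (by
        rw [sq]; exact mul_le_of_le_one_left ha0.le (ha.trans ha₀1))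
      have h1 := (hclose a (by rwa [han])
        (hosc G hG a ha a ha0 (by simpa using ha0.le)).2.1).2.2.1
      rw [han] at h1
      have h2 : 0 ≤ A * √a := by positivity
      change ‖D.h G a‖ ≤ a at h1
      linarith
    | succ m ih =>
      intro a ha0 ha haη
      have h1 := ih (a / 2) (by positivity) (by linarith) (by
        rwa [div_div, ← pow_succ'])
      have h2 : ‖((a / 2 : ℝ) : ℂ) - a‖ ≤ 3 / 4 * a := by
        rw [← ofReal_sub, norm_real, Real.norm_eq_abs, abs_sub_comm, abs_of_pos (by linarith)]
        linarith
      have h3 := (hosc G hG a ha _ ha0 h2).2.2.2.2.1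
      have h4 : √(a / 2) ≤ 3 / 4 * √a := by
        rw [Real.sqrt_le_left (by positivity), mul_pow, Real.sq_sqrt ha0.le]
        linarith
      have h5 := mul_le_mul_of_nonneg_left h4 (by positivity : 0 ≤ 4 * A + 1)
      have h6 : ‖D.h G a‖ ≤ ‖D.h G ((a / 2 : ℝ) : ℂ)‖ + ‖D.h G ((a / 2 : ℝ) : ℂ) - D.h G a‖ := by
        simpa using norm_sub_le (D.h G ((a / 2 : ℝ) : ℂ)) (D.h G ((a / 2 : ℝ) : ℂ) - D.h G a)
      have h7 : 0 ≤ √a := by positivity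
      linarith
  intro a ha ζ ha0 hζ
  obtain ⟨m, hm⟩ := exists_pow_lt_of_lt_one (div_pos hη ha0) (by norm_num : (1 / 2 : ℝ) < 1)
  have h1 := hcenter m a ha0 ha (by
    rw [lt_div_iff₀ ha0] at hm
    rw [div_eq_inv_mul, ← inv_pow, inv_eq_one_div]
    exact hm)
  obtain ⟨b1, b2, b3, b4, b5, b6⟩ := hosc G hG a ha ζ ha0 hζ
  have h2 : ‖D.h G ζ‖ ≤ ‖D.h G a‖ + ‖D.h G ζ - D.h G a‖ := by
    simpa using norm_add_le (D.h G a) (D.h G ζ - D.h G a)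
  have h3 : 0 ≤ A * √a := by positivity
  exact ⟨b1, b2, b3, b4, by linarith, by linarith⟩

/-- The displacement of a tangent self-map is small along a sector, uniformly in the map. -/
theorem exists_displacement (D : ComparisonData Ω p ℓ v) (hΩ : IsOpen Ω) :
    ∃ a₀ > (0 : ℝ), ∃ B > (0 : ℝ), ∀ a ≤ a₀, ∀ ζ : ℂ, 0 < a → ‖ζ - a‖ ≤ 3 / 4 * a →
      p + ζ • v ∈ Ω ∧ ∀ G, IsTangentSelfMap Ω p G →
        ‖G (p + ζ • v) - (p + ζ • v)‖ ≤ B * (a * √(√a)) := by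
  obtain ⟨a₀, ha₀, B, hB, ha₀1, hmain⟩ := D.exists_norm_h_le hΩ
  have hC := D.C_pos
  have hc := D.c_pos
  have hδ := D.δ_pos
  refine ⟨min a₀ (D.δ / 2), lt_min ha₀ (by positivity),
    D.C * (8 * √(B / D.c) + (24 * B + 16 * D.C)), by positivity, fun a ha' ζ ha0 hζ => ?_⟩
  have ha : a ≤ a₀ := ha'.trans (min_le_left _ _)
  have ha1 : a ≤ 1 := ha.trans ha₀1
  refine ⟨D.disc a (by linarith [ha'.trans (min_le_right _ _)]) ζ (by linarith), fun G hG => ?_⟩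
  obtain ⟨hζδ, hmem, hr₁, hf8, hh, hg⟩ := hmain G hG a ha ζ ha0 hζ
  set w := G (p + ζ • v) with hw
  have hwr : ‖w - p‖ < D.r := by linarith [D.r₁_lt, D.r₂_lt]
  have hzr := D.norm_line_lt hζδ
  have hf0 : D.f w ≠ 0 := D.f_ne_zero (hG.mapsTo hmem) hwr
  have hk0 : D.k ζ ≠ 0 := norm_pos_iff.1 (lt_of_lt_of_le
    (by have := norm_pos_iff.2 (D.line_ne_zero hmem); positivity) (D.half_norm_le_k hζδ))
  have hζ2 : ‖ζ‖ ≤ 2 * a := by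
    have : ‖ζ‖ ≤ ‖ζ - a‖ + ‖(a : ℂ)‖ := by simpa using norm_add_le (ζ - a) a
    rw [norm_real, Real.norm_of_nonneg ha0.le] at this
    linarith
  have hk3 : ‖D.k ζ‖ ≤ 3 * a := by
    have h1 := D.k_sub ζ (hζδ.trans_le D.δ'_le)
    have h2 : ‖D.k ζ‖ ≤ ‖ζ‖ + ‖D.k ζ - ζ‖ := by simpa using norm_add_le ζ (D.k ζ - ζ)
    have h3 : D.C * ‖ζ‖ ≤ D.C * D.δ' := by gcongr
    have h4 : D.C * ‖ζ‖ * ‖ζ‖ ≤ 1 / 2 * (2 * a) := by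
      gcongr
      linarith [D.C_mul_δ']
    linarith
  have hs1 : √a ≤ 1 := Real.sqrt_le_one.2 ha1
  have hss : √a ≤ √(√a) := Real.le_sqrt_of_sq_le (by
    rw [sq]; exact mul_le_of_le_one_left (Real.sqrt_nonneg _) hs1)
  have has : a ≤ √(√a) := (Real.le_sqrt_of_sq_le (by
    rw [sq]; exact mul_le_of_le_one_left ha0.le ha1)).trans hss
  have hfk : ‖D.f w - D.k ζ‖ ≤ 24 * B * (a * √(√a)) := by
    have h1 : D.f w - D.k ζ = -(D.f w * D.k ζ * D.h G ζ) := by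
      unfold h
      rw [← hw]
      field_simp
      ring
    rw [h1, norm_neg, norm_mul, norm_mul]
    calc _ ≤ 8 * a * (3 * a) * (B * √a) := by gcongr
      _ ≤ 8 * 1 * (3 * a) * (B * √(√a)) := by gcongr
      _ = _ := by ring
  have hfk' : ‖D.f (p + ζ • v) - D.k ζ‖ ≤ 16 * D.C * (a * √(√a)) := by
    refine (D.f_sub_k ζ (hζδ.trans_le D.δ'_le)).trans ?_
    calc D.C * ‖ζ‖ ^ 4 ≤ D.C * (2 * a) ^ 4 := by gcongr
      _ = 16 * D.C * (a * a * (a * a)) := by ring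
      _ ≤ 16 * D.C * (a * √(√a) * (1 * 1)) := by gcongr
      _ = _ := by ring
  have hff : ‖D.f w - D.f (p + ζ • v)‖ ≤ (24 * B + 16 * D.C) * (a * √(√a)) := by
    have : ‖D.f w - D.f (p + ζ • v)‖ ≤ ‖D.f w - D.k ζ‖ + ‖D.f (p + ζ • v) - D.k ζ‖ := by
      simpa using norm_sub_le (D.f w - D.k ζ) (D.f (p + ζ • v) - D.k ζ)
    linarith
  have hgw : ‖D.g w‖ ≤ 8 * √(B / D.c) * (a * √(√a)) := by
    have hfn : 0 < ‖D.f w‖ := norm_pos_iff.2 hf0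
    have h1 : ‖(D.f w)⁻¹ • D.g w‖ ≤ √(B / D.c) * √(√a) := by
      rw [← Real.sqrt_mul (by positivity)]
      refine Real.le_sqrt_of_sq_le ?_
      rw [div_mul_eq_mul_div, le_div_iff₀ hc]
      linarith
    rw [norm_smul, norm_inv, inv_mul_le_iff₀ hfn] at h1
    refine h1.trans ?_
    calc _ ≤ 8 * a * (√(B / D.c) * √(√a)) := by gcongr
      _ = _ := by ring
  have hgz : w - (p + ζ • v) - ℓ (w - (p + ζ • v)) • v = D.g w := by
    have h2 : ℓ (w - (p + ζ • v)) = ℓ (w - p) - ζ := by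
      rw [← sub_sub, map_sub, map_smul, D.ℓ_v, smul_eq_mul, mul_one]
    rw [h2, sub_smul]
    unfold g
    abel
  have := D.antilip w (p + ζ • v) hwr hzr
  rw [hgz] at this
  refine this.trans ?_
  rw [mul_assoc]
  gcongr
  linarith

end ComparisonData

section Conclusion

variable {n : ℕ} {Ω : Set (En n)} {p : En n}

theorem IsTangentSelfMap.comp {F G : En n → En n} (hF : IsTangentSelfMap Ω p F)
    (hG : IsTangentSelfMap Ω p G) (hp : p ∉ Ω) : IsTangentSelfMap Ω p (F ∘ G) := by
  refine ⟨hF.differentiableOn.comp hG.differentiableOn hG.mapsTo, hF.mapsTo.comp hG.mapsTo, ?_⟩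
  refine Metric.tendsto_nhds.2 fun ε hε => ?_
  obtain ⟨η, hη, h1⟩ := hF.littleOh.exists_bound hp (ε := ε / 16) (by positivity)
  obtain ⟨η', hη', h2⟩ := hG.littleOh.exists_bound hp (ε := min 1 (ε / 4)) (by positivity)
  have hball : ball p (min (min 1 η') (η / 2)) ∈ 𝓝 p :=
    ball_mem_nhds _ (lt_min (lt_min one_pos hη') (by positivity))
  filter_upwards [mem_nhdsWithin_of_mem_nhds hball, self_mem_nhdsWithin] with z hz hzΩ
  rw [mem_ball, dist_eq_norm] at hz
  have hz1 : ‖z - p‖ < 1 := hz.trans_le ((min_le_left _ _).trans (min_le_left _ _))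
  have hz2 : ‖z - p‖ < η' := hz.trans_le ((min_le_left _ _).trans (min_le_right _ _))
  have hz3 : ‖z - p‖ < η / 2 := hz.trans_le (min_le_right _ _)
  have h0 : 0 < ‖z - p‖ := norm_pos_iff.2 (sub_ne_zero.2 fun h => hp (h ▸ hzΩ))
  have b := h2 z hzΩ hz2
  have b1 : ‖G z - z‖ ≤ ε / 4 * ‖z - p‖ ^ 3 := b.trans (by gcongr; exact min_le_right _ _)
  have b2 : ‖G z - p‖ ≤ 2 * ‖z - p‖ := by
    have h3 : ‖G z - z‖ ≤ 1 * ‖z - p‖ := b.trans (by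
      gcongr
      · exact min_le_left _ _
      · exact pow_le_of_le_one h0.le hz1.le (by norm_num))
    have := norm_sub_le_norm_sub_add_norm_sub (G z) z p
    linarith
  have b3 : ‖F (G z) - G z‖ ≤ ε / 16 * (2 * ‖z - p‖) ^ 3 :=
    (h1 _ (hG.mapsTo hzΩ) (by linarith)).trans (by gcongr)
  have b4 := norm_sub_le_norm_sub_add_norm_sub (F (G z)) (G z) z
  rw [dist_zero_right, norm_div, norm_pow, norm_norm, norm_norm, div_lt_iff₀ (by positivity)]
  have : 0 < ε * ‖z - p‖ ^ 3 := by positivity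
  simp only [comp_apply]
  linarith

theorem IsTangentSelfMap.id : IsTangentSelfMap Ω p id := by
  refine ⟨differentiableOn_id, mapsTo_id _, ?_⟩
  simp only [LittleOh, id_eq, sub_self, norm_zero, zero_div]
  exact tendsto_const_nhds

theorem IsTangentSelfMap.iterate {F : En n → En n} (hF : IsTangentSelfMap Ω p F) (hp : p ∉ Ω)
    (k : ℕ) : IsTangentSelfMap Ω p F^[k] := by
  induction k with
  | zero => exact .id
  | succ k ih => exact ih.comp hF hp

/-- A set with a `C¹` defining function is regular open. -/
theorem IsDefiningFunction.interior_closure_subset {ρ : En n → ℝ}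
    (hρ : IsDefiningFunction Ω ⊤ ρ) : interior (closure Ω) ⊆ Ω := by
  obtain ⟨hc, hΩ, hfr, hd⟩ := hρ
  have hle : closure Ω ⊆ {z | ρ z ≤ 0} :=
    closure_minimal (fun z hz => by rw [hΩ] at hz; exact (show ρ z < 0 from hz).le)
      (isClosed_le hc.continuous continuous_const)
  intro z hz
  by_contra hzΩ
  have hΩo : IsOpen Ω := by rw [hΩ]; exact isOpen_lt hc.continuous continuous_const
  have hzf : z ∈ frontier Ω := ⟨interior_subset hz, by rwa [hΩo.interior_eq]⟩
  have h0 : ρ z = 0 := by rw [hfr] at hzf; exact hzf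
  have hmax : IsLocalMax ρ z := by
    filter_upwards [mem_interior_iff_mem_nhds.1 hz] with x hx
    rw [h0]
    exact hle hx
  exact hd z hzf hmax.fderiv_eq_zero

/-- If all iterates of a holomorphic map stay uniformly close to the identity on a ball, then the
map is the identity on a smaller ball. -/
theorem eq_self_of_iterate_close {F : En n → En n}
    (hF : DifferentiableOn ℂ F Ω) (hm : MapsTo F Ω Ω) {z₀ : En n} {s : ℝ}
    (hs : ball z₀ s ⊆ Ω) (hk : ∀ k, ∀ z ∈ ball z₀ s, ‖F^[k] z - z‖ ≤ s / 8) {x : En n}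
    (hx : x ∈ ball z₀ (s / 2)) : F x = x := by
  have hs0 : 0 < s := by
    have : 0 < s / 2 := nonempty_ball.1 ⟨x, hx⟩
    linarith
  have hit : ∀ k, DifferentiableOn ℂ F^[k] Ω := fun k => by
    induction k with
    | zero => exact differentiableOn_id
    | succ k ih => exact ih.comp hF hm
  have hsub : ball x (s / 2) ⊆ ball z₀ s := ball_subset_ball' (by
    rw [mem_ball] at hx; linarith)
  have hxs : x ∈ ball z₀ s := hsub (mem_ball_self (by positivity))
  have hFx : F x ∈ ball x (s / 2) := by
    rw [mem_ball, dist_eq_norm]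
    have := hk 1 x hxs
    rw [iterate_one] at this
    linarith
  have key : ∀ N : ℕ, (N + 1 : ℝ) * ‖F x - x‖ ≤ s / 4 := by
    intro N
    set S : En n → En n := fun z => ∑ k ∈ Finset.range (N + 1), (F^[k] z - z) with hS
    have hSd : DifferentiableOn ℂ S (ball x (s / 2)) :=
      DifferentiableOn.fun_sum fun k _ =>
        ((hit k).mono (hsub.trans hs)).sub differentiableOn_id
    have hSb : ∀ z ∈ ball z₀ s, ‖S z‖ ≤ (N + 1) * (s / 8) := by
      intro z hz
      refine (norm_sum_le_of_le _ fun k _ => hk k z hz).trans (le_of_eq ?_)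
      simp
    have hSm : MapsTo S (ball x (s / 2)) (closedBall (S x) ((N + 1) * (s / 4))) := by
      intro z hz
      rw [mem_closedBall, dist_eq_norm]
      linarith [norm_sub_le (S z) (S x), hSb z (hsub hz), hSb x hxs]
    have h1 := Complex.dist_le_div_mul_dist_of_mapsTo_ball hSd hSm hFx
    rw [dist_eq_norm, dist_eq_norm] at h1
    have h2 : (N + 1) * (s / 4) / (s / 2) = ((N : ℝ) + 1) / 2 := by field_simp; norm_num
    rw [h2] at h1
    have h3 : S (F x) - S x = (F^[N + 1] x - x) - ((N + 1 : ℕ) : ℂ) • (F x - x) := by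
      simp only [hS]
      rw [← Finset.sum_sub_distrib]
      have : ∀ k, F^[k] (F x) - F x - (F^[k] x - x) = (F^[k + 1] x - F^[k] x) - (F x - x) := by
        intro k
        rw [iterate_succ_apply]
        abel
      simp only [this]
      rw [Finset.sum_sub_distrib, Finset.sum_range_sub (fun k => F^[k] x), Finset.sum_const,
        Finset.card_range, iterate_zero_apply, Nat.cast_smul_eq_nsmul]
    have h4 : ‖((N + 1 : ℕ) : ℂ) • (F x - x)‖ = (N + 1 : ℝ) * ‖F x - x‖ := by
      rw [norm_smul, norm_natCast]
      push_cast
      rfl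
    have h5 : ‖((N + 1 : ℕ) : ℂ) • (F x - x)‖ ≤ ‖F^[N + 1] x - x‖ + ‖S (F x) - S x‖ := by
      rw [h3]
      simpa using norm_sub_le (F^[N + 1] x - x)
        (F^[N + 1] x - x - ((N + 1 : ℕ) : ℂ) • (F x - x))
    rw [h4] at h5
    linarith [hk (N + 1) x hxs]
  by_contra hne
  have hpos : 0 < ‖F x - x‖ := norm_pos_iff.2 (sub_ne_zero.2 hne)
  obtain ⟨N, hN⟩ := exists_nat_gt (s / 4 / ‖F x - x‖)
  rw [div_lt_iff₀ hpos] at hN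
  linarith [key N]

/-- The identity theorem for bounded holomorphic maps on a domain of `ℂⁿ`. -/
theorem eqOn_zero_of_isPreconnected (hΩ : IsOpen Ω) (hc : IsPreconnected Ω) {φ : En n → En n}
    (hφ : DifferentiableOn ℂ φ Ω) {M : ℝ} (hM : ∀ z ∈ Ω, ‖φ z‖ ≤ M) {x : En n} (hx : x ∈ Ω)
    (h0 : ∀ᶠ z in 𝓝 x, φ z = 0) {z : En n} (hz : z ∈ Ω) : φ z = 0 := by
  have hball : ∀ y : En n, (∀ᶠ z in 𝓝 y, φ z = 0) → ∀ R, ball y R ⊆ Ω → ∀ w ∈ ball y R,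
      φ w = 0 := by
    intro y hy R hR w hw
    have hR0 : 0 < R := nonempty_ball.1 ⟨w, hw⟩
    have hy0 : φ y = 0 := hy.self_of_nhds
    have hb : ∀ m : ℕ, dist (φ w) (φ y) ≤ M * (dist w y / R) ^ (m + 1) := by
      intro m
      refine Complex.dist_le_mul_div_pow_of_mapsTo_ball_of_isLittleO (hφ.mono hR) ?_ ?_ hw
      · intro u hu
        rw [mem_closedBall, hy0, dist_zero_right]
        exact hM u (hR hu)
      · refine (Asymptotics.isLittleO_zero (fun w => ‖w - y‖ ^ m) (𝓝 y)).congr' ?_ .rfl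
        filter_upwards [hy] with u hu
        rw [hu, hy0, sub_zero]
    have hlt : dist w y / R < 1 := (div_lt_one hR0).2 hw
    have ht : Tendsto (fun m : ℕ => M * (dist w y / R) ^ (m + 1)) atTop (𝓝 (M * 0)) :=
      ((tendsto_add_atTop_iff_nat 1).2
        (tendsto_pow_atTop_nhds_zero_of_lt_one (by positivity) hlt)).const_mul M
    rw [mul_zero] at ht
    have := ge_of_tendsto' ht hb
    rw [hy0, dist_zero_right] at this
    exact norm_le_zero_iff.1 this
  have hsub : Ω ⊆ {y | ∀ᶠ z in 𝓝 y, φ z = 0} := by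
    refine hc.subset_of_closure_inter_subset ?_ ⟨x, hx, h0⟩ ?_
    · exact isOpen_setOfPred_eventually_nhds
    · rintro y ⟨hy, hyΩ⟩
      obtain ⟨R, hR, hRΩ⟩ := Metric.isOpen_iff.1 hΩ y hyΩ
      obtain ⟨y', hy', hd⟩ := Metric.mem_closure_iff.1 hy (R / 2) (by positivity)
      have hs : ball y' (R / 2) ⊆ Ω :=
        (ball_subset_ball' (by rw [dist_comm]; linarith)).trans hRΩ
      filter_upwards [isOpen_ball.mem_nhds (mem_ball.2 hd)] with w hw
      exact hball y' hy' (R / 2) hs w hw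
  exact (hsub hz).self_of_nhds

/-- Displacement bounds in all directions of a nonempty open set of directions, uniformly in the
map. -/
theorem exists_directional_displacement {ρ : En n → ℝ} (hρ : IsDefiningFunction Ω ⊤ ρ)
    (hp : p ∈ frontier Ω) (hspc : StronglyPcxAt ρ p) (hΩ : IsOpen Ω) :
    ∃ S : Set (En n), IsOpen S ∧ S.Nonempty ∧ ∀ w ∈ S, ∃ a₀ > (0 : ℝ), ∃ B > (0 : ℝ),
      ∀ t : ℝ, 0 < t → t ≤ a₀ → p + t • w ∈ Ω ∧ ∀ G, IsTangentSelfMap Ω p G →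
        ‖G (p + t • w) - (p + t • w)‖ ≤ B * (t * √(√t)) := by
  obtain ⟨ℓ, ⟨v₀, hv₀⟩, hℓ⟩ := exists_localModel hρ hp hspc
  refine ⟨{w | ‖ℓ w - 1‖ < 3 / 4}, isOpen_lt (by fun_prop) continuous_const,
    ⟨v₀, by simp [hv₀]⟩, fun w hw => ?_⟩
  have hw' : ‖ℓ w - 1‖ < 3 / 4 := hw
  have hℓ0 : ℓ w ≠ 0 := by
    intro h
    rw [h] at hw'
    norm_num at hw'
  obtain ⟨D₀⟩ := hℓ ((ℓ w)⁻¹ • w) (by rw [map_smul, smul_eq_mul, inv_mul_cancel₀ hℓ0])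
  obtain ⟨D⟩ := D₀.nonempty_comparisonData
  obtain ⟨a₀, ha₀, B, hB, hmain⟩ := D.exists_displacement hΩ
  refine ⟨a₀, ha₀, B, hB, fun t ht hta => ?_⟩
  have h1 : ‖(t : ℂ) * ℓ w - t‖ ≤ 3 / 4 * t := by
    rw [← mul_sub_one, norm_mul, norm_real, Real.norm_of_nonneg ht.le]
    linarith [mul_le_mul_of_nonneg_left hw'.le ht.le]
  have h2 := hmain t hta _ ht h1
  have h3 : ((t : ℂ) * ℓ w) • (ℓ w)⁻¹ • w = t • w := by
    rw [smul_smul, mul_assoc, mul_inv_cancel₀ hℓ0, mul_one, coe_smul]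
  rwa [h3] at h2

/-- A Baire category argument makes the displacement bounds uniform on small balls close to `p`. -/
theorem exists_ball_iterate_close {ρ : En n → ℝ} (hρ : IsDefiningFunction Ω ⊤ ρ)
    (hp : p ∈ frontier Ω) (hspc : StronglyPcxAt ρ p) (hΩ : IsOpen Ω) {F : En n → En n}
    (hF : IsTangentSelfMap Ω p F) (hpΩ : p ∉ Ω) : ∃ z₀ : En n, ∃ s > (0 : ℝ), ball z₀ s ⊆ Ω ∧
      ∀ k, ∀ z ∈ ball z₀ s, ‖F^[k] z - z‖ ≤ s / 8 := by
  obtain ⟨S, hSo, hSne, hS⟩ := exists_directional_displacement hρ hp hspc hΩ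
  set E : ℕ → Set (En n) := fun N => {w | ∀ t : ℝ, 0 < t → t ≤ 1 / (N + 1) →
    p + t • w ∈ closure Ω ∧
      (p + t • w ∈ Ω → ∀ k, ‖F^[k] (p + t • w) - (p + t • w)‖ ≤ N * (t * √(√t)))} with hE
  have hEc : ∀ N, IsClosed (E N) := by
    intro N
    refine isClosed_of_closure_subset fun w hw t ht htN => ?_
    have hc : Continuous fun w : En n => p + t • w := by fun_prop
    obtain ⟨x, hx, hxw⟩ := mem_closure_iff_seq_limit.1 hw
    have hxt : Tendsto (fun j => p + t • x j) atTop (𝓝 (p + t • w)) :=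
      (hc.tendsto w).comp hxw
    refine ⟨isClosed_closure.mem_of_tendsto hxt
      (Eventually.of_forall fun j => (hx j t ht htN).1), fun hmem k => ?_⟩
    have hFc : ContinuousAt F^[k] (p + t • w) :=
      ((hF.iterate hpΩ k).differentiableOn.differentiableAt (hΩ.mem_nhds hmem)).continuousAt
    refine le_of_tendsto ((hFc.tendsto.comp hxt).sub hxt).norm ?_
    filter_upwards [hxt.eventually (hΩ.mem_nhds hmem)] with j hj
    exact (hx j t ht htN).2 hj k
  have hcover : ⋃ N, (E N ∪ Sᶜ) = univ := by
    refine eq_univ_of_forall fun w => mem_iUnion.2 ?_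
    by_cases hw : w ∈ S
    · obtain ⟨a₀, ha₀, B, hB, h⟩ := hS w hw
      obtain ⟨N, hN⟩ := exists_nat_gt (max B (1 / a₀))
      have hN1 : B < N := (le_max_left _ _).trans_lt hN
      have hN2 : 1 / a₀ < N := (le_max_right _ _).trans_lt hN
      have hN0 : (0 : ℝ) < N := hB.trans hN1
      refine ⟨N, Or.inl fun t ht htN => ?_⟩
      have hta : t ≤ a₀ := by
        refine htN.trans ?_
        rw [div_lt_iff₀ ha₀] at hN2
        rw [div_le_iff₀ (by positivity)]
        linarith
      obtain ⟨h1, h2⟩ := h t ht hta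
      refine ⟨subset_closure h1, fun _ k => (h2 _ (hF.iterate hpΩ k)).trans ?_⟩
      gcongr
    · exact ⟨0, Or.inr hw⟩
  have hd := dense_iUnion_interior_of_closed
    (fun N => (hEc N).union hSo.isClosed_compl) hcover
  obtain ⟨w₀, hw₀S, hw₀⟩ := hd.inter_open_nonempty S hSo hSne
  obtain ⟨N, hN⟩ := mem_iUnion.1 hw₀
  obtain ⟨r, hr, hrE⟩ := Metric.isOpen_iff.1 (isOpen_interior.inter hSo) w₀ ⟨hN, hw₀S⟩
  have hball : ∀ w ∈ ball w₀ r, w ∈ E N := fun w hw =>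
    (interior_subset (hrE hw).1).resolve_right fun h => h (hrE hw).2
  have hlim : Tendsto (fun t : ℝ => (N : ℝ) * √(√t)) (𝓝[>] 0) (𝓝 0) := by
    have hc : Continuous fun t : ℝ => (N : ℝ) * √(√t) := by fun_prop
    have := hc.tendsto 0
    simp only [Real.sqrt_zero, mul_zero] at this
    exact this.mono_left nhdsWithin_le_nhds
  obtain ⟨t, ht1, ht0, ht2⟩ := ((hlim.eventually_lt_const (by positivity : 0 < r / 8)).and
    (Ioo_mem_nhdsGT (by positivity : (0 : ℝ) < 1 / (N + 1)))).exists
  have hpar : ∀ z ∈ ball (p + t • w₀) (t * r), ∃ w ∈ ball w₀ r, z = p + t • w := by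
    intro z hz
    have hzt : z = p + t • (t⁻¹ • (z - p)) := by
      rw [smul_smul, mul_inv_cancel₀ ht0.ne', one_smul, add_sub_cancel]
    refine ⟨t⁻¹ • (z - p), ?_, hzt⟩
    rw [hzt, mem_ball, dist_add_left, dist_smul₀, Real.norm_of_nonneg ht0.le] at hz
    exact lt_of_mul_lt_mul_left hz ht0.le
  have hcl : ball (p + t • w₀) (t * r) ⊆ Ω := by
    refine (interior_maximal ?_ isOpen_ball).trans hρ.interior_closure_subset
    intro z hz
    obtain ⟨w, hw, rfl⟩ := hpar z hz
    exact (hball w hw t ht0 ht2.le).1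
  refine ⟨p + t • w₀, t * r, by positivity, hcl, fun k z hz => ?_⟩
  have hzΩ := hcl hz
  obtain ⟨w, hw, rfl⟩ := hpar z hz
  refine ((hball w hw t ht0 ht2.le).2 hzΩ k).trans ?_
  have := mul_le_mul_of_nonneg_left ht1.le ht0.le
  linarith

end Conclusion

theorem burns_krantz_rigidity
    {n : ℕ} (hn : 1 ≤ n) (Ω : Set (En n)) (ρ : En n → ℝ)
    (hΩ : IsDomain' Ω) (hbd : Bornology.IsBounded Ω)
    (hρ : IsDefiningFunction Ω ⊤ ρ)
    (hspc : ∀ q ∈ frontier Ω, StronglyPcxAt ρ q)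
    (p : En n) (hp : p ∈ frontier Ω)
    (F : En n → En n) (hF : DifferentiableOn ℂ F Ω) (hFself : MapsTo F Ω Ω)
    (ho : LittleOh Ω F p 3) :
    ∀ z ∈ Ω, F z = z := by
  have hpΩ : p ∉ Ω := by
    rw [hΩ.1.frontier_eq] at hp
    exact hp.2
  obtain ⟨z₀, s, hs, hsΩ, hclose⟩ :=
    exists_ball_iterate_close hρ hp (hspc p hp) hΩ.1 ⟨hF, hFself, ho⟩ hpΩ
  obtain ⟨M, hM⟩ := hbd.exists_norm_le
  intro z hz
  refine sub_eq_zero.1 (eqOn_zero_of_isPreconnected (φ := fun z => F z - z) (M := M + M) hΩ.1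
    hΩ.2.isPreconnected (hF.sub differentiableOn_id) (fun z hz => ?_)
    (hsΩ (mem_ball_self hs)) ?_ hz)
  · exact (norm_sub_le _ _).trans (add_le_add (hM _ (hFself hz)) (hM _ hz))
  · filter_upwards [ball_mem_nhds z₀ (half_pos hs)] with x hx
    exact sub_eq_zero.2 (eq_self_of_iterate_close hF hFself hsΩ hclose hx)
end
end

section
/- Let 𝔻 be the open unit disk in ℂ and let F : 𝔻 → 𝔻 be a holomorphic map with F(z) = z + o(|z−1|³) as z → 1 within 𝔻. Then F(z) = z for all z ∈ 𝔻. -/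
open Complex Topology Filter Metric Set Function

noncomputable section

/-- A holomorphic function on the right half-plane that is bounded along the positive real axis
and whose real part is at least `-z.re` has nonnegative real part. -/
theorem re_nonneg_of_neg_re_le_re {G : ℂ → ℂ} (hG : DifferentiableOn ℂ G {w | 0 < w.re})
    (hre : ∀ w : ℂ, 0 < w.re → -w.re ≤ (G w).re)
    (hbdd : IsBoundedUnder (· ≤ ·) atTop fun x : ℝ => ‖G x‖) {w : ℂ} (hw : 0 < w.re) :
    0 ≤ (G w).re := by
  have key : ∀ ε : ℝ, 0 < ε → ε < w.re → -ε ≤ (G w).re := by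
    intro ε hε hεw
    have hnorm : ∀ z : ℂ, 0 ≤ z.re → ‖cexp (-G (z + ε))‖ ≤ Real.exp (z.re + ε) := by
      intro z hz
      rw [norm_exp, Real.exp_le_exp, neg_re]
      have := hre (z + ε) (by simp; linarith)
      simp at this
      linarith
    have hdiff : DifferentiableOn ℂ (fun z : ℂ => cexp (-G (z + ε))) {z | 0 ≤ z.re} := by
      refine (DifferentiableOn.comp hG (by fun_prop) ?_).neg.cexp
      intro z hz
      simp only [mem_ofPred_eq, add_re, ofReal_re] at hz ⊢
      linarith
    have hbound : ‖cexp (-G (w - ε + ε))‖ ≤ Real.exp ε := by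
      refine PhragmenLindelof.right_half_plane_of_bounded_on_real
        (f := fun z => cexp (-G (z + ε))) ?_ ⟨1, by norm_num, 1, ?_⟩ ?_ ?_ ?_
      · exact DifferentiableOn.diffContOnCl (by simpa [closure_setOfPred_lt_re] using hdiff)
      · refine Asymptotics.IsBigO.of_bound (Real.exp ε) ?_
        refine Filter.eventually_inf_principal.2 (Eventually.of_forall fun z hz => ?_)
        refine (hnorm z (le_of_lt hz)).trans ?_
        rw [Real.norm_of_nonneg (Real.exp_pos _).le, ← Real.exp_add, Real.exp_le_exp,
          Real.rpow_one, one_mul]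
        linarith [re_le_norm z]
      · obtain ⟨B, hB⟩ := hbdd
        refine ⟨Real.exp B, ?_⟩
        have hshift : Tendsto (fun x : ℝ => x + ε) atTop atTop :=
          tendsto_atTop_add_const_right _ _ tendsto_id
        have hB' := hshift.eventually (eventually_map.1 hB)
        refine eventually_map.2 (hB'.mono fun x hx => ?_)
        beta_reduce at hx ⊢
        push_cast at hx
        rw [norm_exp, Real.exp_le_exp, neg_re]
        linarith [neg_abs_le (G (x + ε)).re, abs_re_le_norm (G (x + ε))]
      · intro x
        simpa using hnorm (x * I) (by simp)
      · simp
        linarith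
    rw [sub_add_cancel, norm_exp, Real.exp_le_exp, neg_re] at hbound
    linarith
  by_contra! hneg
  have hmin : 0 < min (w.re / 2) (-(G w).re / 2) := lt_min (by linarith) (by linarith)
  have := key _ hmin ((min_le_left _ _).trans_lt (by linarith))
  linarith [min_le_right (w.re / 2) (-(G w).re / 2)]

/-- A Harnack-type lower bound for holomorphic functions with nonnegative real part. -/
theorem one_sub_norm_mul_le_of_re_nonneg {g : ℂ → ℂ} (hg : DifferentiableOn ℂ g (ball 0 1))
    (hre : ∀ z ∈ ball (0 : ℂ) 1, 0 ≤ (g z).re) (h0 : 0 < (g 0).re) {z : ℂ}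
    (hz : z ∈ ball (0 : ℂ) 1) : (1 - ‖z‖) * ‖g 0‖ ≤ (1 + ‖z‖) * ‖g z‖ := by
  have hne : ∀ ζ ∈ ball (0 : ℂ) 1, (starRingEnd ℂ) (g 0) + g ζ ≠ 0 := by
    intro ζ hζ h
    have := congrArg re h
    simp at this
    linarith [hre ζ hζ]
  have hschwarz : ‖(g 0 - g z) / ((starRingEnd ℂ) (g 0) + g z)‖ ≤ ‖z‖ := by
    refine norm_le_norm_of_mapsTo_ball
      (f := fun ζ => (g 0 - g ζ) / ((starRingEnd ℂ) (g 0) + g ζ)) (R := 1)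
      ((hg.const_sub _).div (hg.const_add _) hne) (fun ζ hζ => ?_) (by simp)
      (mem_ball_zero_iff.1 hz)
    rw [mem_closedBall_zero_iff, norm_div, div_le_one (norm_pos_iff.2 (hne ζ hζ)),
      ← sq_le_sq₀ (norm_nonneg _) (norm_nonneg _), ← normSq_eq_norm_sq, ← normSq_eq_norm_sq,
      normSq_apply, normSq_apply]
    simp
    nlinarith [hre ζ hζ]
  rw [norm_div, div_le_iff₀ (norm_pos_iff.2 (hne z hz))] at hschwarz
  have hupper := norm_add_le ((starRingEnd ℂ) (g 0)) (g z)
  rw [norm_conj] at hupper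
  nlinarith [norm_sub_norm_le (g 0) (g z), mul_le_mul_of_nonneg_left hupper (norm_nonneg z)]

/-- A Hopf-type boundary uniqueness lemma: a holomorphic function on the unit disk with
nonnegative real part that is `o(1 - r)` along the radius ending at `1` vanishes identically. -/
theorem eqOn_zero_of_re_nonneg_of_isLittleO {g : ℂ → ℂ} (hg : DifferentiableOn ℂ g (ball 0 1))
    (hre : ∀ z ∈ ball (0 : ℂ) 1, 0 ≤ (g z).re)
    (ho : (fun r : ℝ => g r) =o[𝓝[<] 1] fun r : ℝ => 1 - r) : EqOn g 0 (ball 0 1) := by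
  have hex : ∀ δ : ℝ, 0 < δ → ∃ r : ℝ, 0 < r ∧ r < 1 ∧ ‖g r‖ ≤ δ * (1 - r) := by
    intro δ hδ
    obtain ⟨r, hr, hr'⟩ := ((ho.bound hδ).and (Ioo_mem_nhdsLT (zero_lt_one' ℝ))).exists
    rw [Real.norm_of_nonneg (sub_nonneg.2 hr'.2.le)] at hr
    exact ⟨r, hr'.1, hr'.2, hr⟩
  have h00 : (0 : ℂ) ∈ ball (0 : ℂ) 1 := by simp
  have hmem : ∀ r : ℝ, 0 < r → r < 1 → (r : ℂ) ∈ ball (0 : ℂ) 1 := fun r h h' => by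
    simpa [abs_of_pos h] using h'
  have hre0 : (g 0).re = 0 := by
    by_contra hne
    have hpos : 0 < (g 0).re := lt_of_le_of_ne (hre 0 h00) (Ne.symm hne)
    have hnorm : 0 < ‖g 0‖ := hpos.trans_le (re_le_norm _)
    obtain ⟨r, hr0, hr1, hr⟩ := hex (‖g 0‖ / 4) (by positivity)
    have := one_sub_norm_mul_le_of_re_nonneg hg hre hpos (hmem r hr0 hr1)
    rw [norm_real, Real.norm_of_nonneg hr0.le] at this
    nlinarith [mul_pos (sub_pos.2 hr1) hnorm, norm_nonneg (g r)]
  have hconn : IsPreconnected (ball (0 : ℂ) 1) := (convex_ball _ _).isPreconnected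
  rcases (hg.analyticOnNhd isOpen_ball).is_constant_or_isOpen hconn with ⟨c, hc⟩ | hopen
  · intro z hz
    rw [hc z hz, Pi.zero_apply, ← norm_le_zero_iff]
    refine le_of_forall_pos_le_add fun δ hδ => ?_
    obtain ⟨r, hr0, hr1, hr⟩ := hex δ hδ
    rw [hc r (hmem r hr0 hr1)] at hr
    nlinarith
  · obtain ⟨δ, hδ, hsub⟩ := Metric.isOpen_iff.1 (hopen _ Subset.rfl isOpen_ball) (g 0)
      (mem_image_of_mem g h00)
    obtain ⟨z, hz, hgz⟩ := hsub (show g 0 - (δ / 2 : ℝ) ∈ ball (g 0) δ by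
      rw [mem_ball, dist_eq_norm, sub_sub_cancel_left, norm_neg, norm_real,
        Real.norm_of_nonneg (by positivity)]
      linarith)
    have := hre z hz
    rw [hgz, sub_re, ofReal_re, hre0] at this
    linarith

/-- The Cayley transform maps the unit disk to the right half-plane. -/
theorem re_one_add_div_one_sub_pos {z : ℂ} (hz : ‖z‖ < 1) : 0 < ((1 + z) / (1 - z)).re := by
  have hne : 1 - z ≠ 0 := fun h => by simp [← sub_eq_zero.1 h] at hz
  have hsq : z.re * z.re + z.im * z.im < 1 := by
    rw [← normSq_apply, normSq_eq_norm_sq]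
    nlinarith [norm_nonneg z]
  rw [div_re, ← add_div]
  refine div_pos ?_ (normSq_pos.2 hne)
  simp
  nlinarith

/-- The inverse Cayley transform maps the right half-plane to the unit disk. -/
theorem norm_sub_one_div_add_one_lt {w : ℂ} (hw : 0 < w.re) : ‖(w - 1) / (w + 1)‖ < 1 := by
  have hne : w + 1 ≠ 0 := fun h => by
    have := congrArg re h
    simp at this
    linarith
  rw [norm_div, div_lt_one (norm_pos_iff.2 hne), ← sq_lt_sq₀ (norm_nonneg _) (norm_nonneg _),
    ← normSq_eq_norm_sq, ← normSq_eq_norm_sq, normSq_apply, normSq_apply]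
  simp
  nlinarith

/-- A holomorphic function on the unit disk whose real part is bounded below by minus the real
part of the Cayley transform and which is `o(1 - r)` along the radius ending at `1` vanishes. -/
theorem eqOn_zero_of_neg_re_cayley_le_re {g : ℂ → ℂ} (hg : DifferentiableOn ℂ g (ball 0 1))
    (hre : ∀ z ∈ ball (0 : ℂ) 1, -((1 + z) / (1 - z)).re ≤ (g z).re)
    (ho : (fun r : ℝ => g r) =o[𝓝[<] 1] fun r : ℝ => 1 - r) : EqOn g 0 (ball 0 1) := by
  refine eqOn_zero_of_re_nonneg_of_isLittleO hg (fun z hz => ?_) ho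
  have hadd : ∀ w : ℂ, 0 < w.re → w + 1 ≠ 0 := fun w hw h => by
    have := congrArg re h
    simp at this
    linarith
  have hmaps : MapsTo (fun w : ℂ => (w - 1) / (w + 1)) {w | 0 < w.re} (ball 0 1) :=
    fun w hw => by simpa using norm_sub_one_div_add_one_lt hw
  have hz1 : 1 - z ≠ 0 := fun h => by simp [← sub_eq_zero.1 h] at hz
  have hinv : ((1 + z) / (1 - z) - 1) / ((1 + z) / (1 - z) + 1) = z := by
    have := hadd _ (re_one_add_div_one_sub_pos (mem_ball_zero_iff.1 hz))
    field_simp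
    ring
  have hnonneg : 0 ≤ (g (((1 + z) / (1 - z) - 1) / ((1 + z) / (1 - z) + 1))).re := by
    refine re_nonneg_of_neg_re_le_re (G := fun w => g ((w - 1) / (w + 1))) ?_ ?_ ?_
      (re_one_add_div_one_sub_pos (mem_ball_zero_iff.1 hz))
    · refine hg.comp ?_ hmaps
      exact DifferentiableOn.div (by fun_prop) (by fun_prop) hadd
    · intro w hw
      have h := hre _ (hmaps hw)
      have hw1 := hadd w hw
      have hinv' : (1 + (w - 1) / (w + 1)) / (1 - (w - 1) / (w + 1)) = w := by
        have h1 : 1 + (w - 1) / (w + 1) = 2 * w / (w + 1) := by field_simp; ring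
        have h2 : 1 - (w - 1) / (w + 1) = 2 / (w + 1) := by field_simp; ring
        rw [h1, h2]
        field_simp
      rwa [hinv'] at h
    · have hlim : Tendsto (fun x : ℝ => (x - 1) / (x + 1)) atTop (𝓝[<] 1) := by
        refine tendsto_nhdsWithin_iff.2 ⟨?_, ?_⟩
        · have h : Tendsto (fun x : ℝ => 1 - 2 / (x + 1)) atTop (𝓝 (1 - 0)) :=
            tendsto_const_nhds.sub
              (Tendsto.const_div_atTop (tendsto_atTop_add_const_right _ _ tendsto_id) _)
          rw [sub_zero] at h
          refine h.congr' ?_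
          filter_upwards [eventually_gt_atTop 0] with x hx
          field_simp
          ring
        · filter_upwards [eventually_gt_atTop 0] with x hx
          rw [mem_Iio, div_lt_one (by linarith)]
          linarith
      refine ⟨2, eventually_map.2 ?_⟩
      filter_upwards [hlim.eventually (ho.bound one_pos), eventually_gt_atTop 0] with x hx hx0
      push_cast at hx
      refine hx.trans ?_
      have : 1 - (x - 1) / (x + 1) = 2 / (x + 1) := by field_simp; ring
      rw [one_mul, this, Real.norm_of_nonneg (by positivity), div_le_iff₀ (by linarith)]
      linarith
  rwa [hinv] at hnonneg

theorem burns_krantz_disk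
    (F : ℂ → ℂ) (hF : DifferentiableOn ℂ F (Metric.ball (0 : ℂ) 1))
    (hFself : MapsTo F (Metric.ball (0 : ℂ) 1) (Metric.ball (0 : ℂ) 1))
    (ho : Tendsto (fun z => ‖F z - z‖ / ‖z - 1‖ ^ 3)
      (𝓝[Metric.ball (0 : ℂ) 1] 1) (𝓝 0)) :
    ∀ z ∈ Metric.ball (0 : ℂ) 1, F z = z := by
  have hne : ∀ z ∈ ball (0 : ℂ) 1, 1 - z ≠ 0 := fun z hz h => by
    simp [← sub_eq_zero.1 h] at hz
  have hzero : EqOn (fun z => (1 + F z) / (1 - F z) - (1 + z) / (1 - z)) 0 (ball 0 1) := by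
    refine eqOn_zero_of_neg_re_cayley_le_re ?_ ?_ ?_
    · refine DifferentiableOn.sub ?_ ?_
      · exact (hF.const_add _).div (hF.const_sub _) fun z hz => hne _ (hFself hz)
      · exact DifferentiableOn.div (by fun_prop) (by fun_prop) hne
    · intro z hz
      have := re_one_add_div_one_sub_pos (mem_ball_zero_iff.1 (hFself hz))
      rw [sub_re]
      linarith
    · have hradial : Tendsto (fun r : ℝ => (r : ℂ)) (𝓝[<] 1) (𝓝[ball (0 : ℂ) 1] 1) := by
        refine tendsto_nhdsWithin_iff.2 ⟨?_, ?_⟩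
        · exact (continuous_ofReal.tendsto' 1 1 ofReal_one).mono_left nhdsWithin_le_nhds
        · filter_upwards [Ioo_mem_nhdsLT (zero_lt_one' ℝ)] with r hr
          simpa [abs_of_pos hr.1] using hr.2
      refine Asymptotics.IsLittleO.of_bound fun δ hδ => ?_
      have hη : 0 < min (δ / 4) (1 / 2) := by positivity
      filter_upwards [hradial.eventually (ho.eventually_lt_const hη),
        hradial.eventually self_mem_nhdsWithin, Ioo_mem_nhdsLT (zero_lt_one' ℝ)] with r hr hrb hr01
      obtain ⟨hr0, hr1⟩ := hr01
      have hs : 0 < 1 - r := sub_pos.2 hr1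
      have hnorm : ‖(1 : ℂ) - r‖ = 1 - r := by
        rw [← ofReal_one, ← ofReal_sub, norm_real, Real.norm_of_nonneg hs.le]
      rw [norm_sub_rev (r : ℂ) 1, hnorm, div_lt_iff₀ (by positivity)] at hr
      have hr4 : ‖F r - r‖ ≤ δ / 4 * (1 - r) ^ 3 :=
        hr.le.trans (by gcongr; exact min_le_left _ _)
      have hr2 : ‖F r - r‖ ≤ (1 - r) / 2 := by
        refine hr.le.trans ((mul_le_mul_of_nonneg_right (min_le_right _ _) (by positivity)).trans ?_)
        have : (1 - r) ^ 3 ≤ (1 - r) ^ 1 := pow_le_pow_of_le_one hs.le (by linarith) (by norm_num)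
        linarith
      have hden : (1 - r) / 2 ≤ ‖1 - F r‖ := by
        have h := norm_sub_norm_le (1 - (r : ℂ)) (F r - r)
        rw [hnorm, sub_sub_sub_cancel_right] at h
        linarith
      have h1 := hne _ hrb
      have h2 := hne _ (hFself hrb)
      have hform : (1 + F r) / (1 - F r) - (1 + r) / (1 - r)
          = 2 * (F r - r) / ((1 - F r) * (1 - r)) := by
        field_simp
        ring
      rw [hform, norm_div, norm_mul, norm_mul, hnorm, Real.norm_of_nonneg hs.le, norm_ofNat,
        div_le_iff₀ (by positivity)]
      calc 2 * ‖F r - r‖ ≤ 2 * (δ / 4 * (1 - r) ^ 3) := by gcongr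
        _ = δ * (1 - r) * ((1 - r) / 2 * (1 - r)) := by ring
        _ ≤ δ * (1 - r) * (‖1 - F r‖ * (1 - r)) := by gcongr
  intro z hz
  have h1 := hne _ hz
  have h2 := hne _ (hFself hz)
  have h := sub_eq_zero.1 (hzero hz)
  rw [div_eq_div_iff h2 h1] at h
  linear_combination h / 2
end
end
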